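/- There exists a constant c > 0 such that, for n ranging over even natural numbers and Δ drawn from U(n), the probability that |χ(Δ)| ≤ c·n·2^{n/2} tends to 1 as n → ∞. -/

import Mathlib

open scoped Classical

noncomputable section

/-- `Δ` is a simplicial complex on vertex set `Fin n`: all faces are nonempty
and it is downward closed. -/
def IsComplex {n : ℕ} (Δ : Finset (Finset (Fin n))) : Prop :=
  (∀ x ∈ Δ, x.Nonempty) ∧
    ∀ x ∈ Δ, ∀ y : Finset (Fin n), y.Nonempty → y ⊆ x → y ∈ Δ

/-- The finite set of all simplicial complexes on `n` vertices. -/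
def allComplexes (n : ℕ) : Finset (Finset (Finset (Fin n))) :=
  Finset.univ.filter IsComplex

/-- The probability, under the uniform measure `U(n)` on all simplicial
complexes on `n` vertices, of the event `P`. -/
def uniformProb (n : ℕ) (P : Finset (Finset (Fin n)) → Prop) : ℝ :=
  (((allComplexes n).filter P).card : ℝ) / ((allComplexes n).card : ℝ)

/-- The Euler characteristic `χ(Δ) = Σ_{i ≥ 1} (-1)^{i-1} f_i(Δ)`, computed as a
sum over the faces of `Δ`. -/
def eulerChar {n : ℕ} (Δ : Finset (Finset (Fin n))) : ℤ :=
  ∑ x ∈ Δ, (-1 : ℤ) ^ (x.card - 1)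

/-!
Write `n = 2 * k` and count down-sets, which are complexes up to the empty set. A typical down-set
contains almost all sets of size less than `k` and almost none of size greater than `k`.

A Peierls argument bounds the expected number of non-faces of size less than `k`. Group the
non-faces of size at most `j` into 2-linked clusters. Filling in a cluster leaves every set of the
upper shadow of its top layer free to be a face or not, so a cluster has probability at most
`2 ^ (-s)` with `s` the size of that shadow. The sum of these weights over the clusters through a
given set is bounded by counting linked sets when the shadow is much larger than the top layer, and
by Sapozhenko's graph containers otherwise; the number of ways to complete a top layer to a cluster
is controlled by the same bound one level lower. Hence the expected number of non-faces of size
less than `k` is `O(2 ^ k / √k)`, and by Alexander duality so is that of faces of size greater than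
`k`.

Each such defect obstructs at most `k + 1` sets of size `k`. On the other sets of size `k`,
membership can be toggled freely, so that their `±1` indicators are pairwise orthogonal and their
sum has second moment at most `(2 * k).choose k`. Since the alternating sums of the levels below
and above `k` cancel half of the middle binomial coefficient, the theorem follows from the
inequalities of Markov and Chebyshev.
-/

section Linked

open Finset

variable {V W : Type*}

/-- `T` is connected in the graph of the relation `R`: every proper nonempty part of `T` is joined
by `R` to the rest. This cut form of connectivity is what both the enumeration of connected sets
and the transfer of connectivity to nearby sets consume. -/
def Linked (R : V → V → Prop) (T : Finset V) : Prop :=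
  ∀ S ⊆ T, S.Nonempty → S ≠ T → ∃ u ∈ S, ∃ v ∈ T, v ∉ S ∧ R u v

lemma Linked.singleton (R : V → V → Prop) (v : V) : Linked R {v} :=
  fun _ hS hne hproper => absurd (hne.subset_singleton_iff.1 hS) hproper

lemma Linked.insert_of_rel [DecidableEq V] {R : V → V → Prop} (hsymm : ∀ u v, R u v → R v u)
    {C : Finset V} (hC : Linked R C) {u v : V} (hu : u ∈ C) (huv : R u v) :
    Linked R (insert v C) := by
  intro S hS hne hproper
  by_cases huS : u ∈ S
  · by_cases hvS : v ∈ S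
    · obtain ⟨a, ha, b, hb, hbS, hab⟩ := hC (S ∩ C) inter_subset_right
        ⟨u, mem_inter.2 ⟨huS, hu⟩⟩ fun h =>
          hproper (hS.antisymm (insert_subset hvS (inter_eq_right.1 h)))
      exact ⟨a, (mem_inter.1 ha).1, b, mem_insert_of_mem hb,
        fun h => hbS (mem_inter.2 ⟨h, hb⟩), hab⟩
    · exact ⟨u, huS, v, mem_insert_self _ _, hvS, huv⟩
  · by_cases hvS : v ∈ S
    · exact ⟨v, hvS, u, mem_insert_of_mem hu, huS, hsymm _ _ huv⟩
    · obtain ⟨a, ha, b, hb, hbS, hab⟩ := hC S ((subset_insert_iff_of_notMem hvS).1 hS) hne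
        fun h => huS (h ▸ hu)
      exact ⟨a, ha, b, mem_insert_of_mem hb, hbS, hab⟩

lemma exists_linked_component {R : V → V → Prop} (hsymm : ∀ u v, R u v → R v u)
    (M : Finset V) {x : V} (hx : x ∈ M) :
    ∃ C ⊆ M, x ∈ C ∧ Linked R C ∧ ∀ u ∈ C, ∀ v ∈ M, R u v → v ∈ C := by
  let candidates := M.powerset.filter fun C => x ∈ C ∧ Linked R C
  have hne : candidates.Nonempty :=
    ⟨{x}, by simp [candidates, hx, Linked.singleton]⟩
  obtain ⟨C, hC, hmax⟩ := candidates.exists_max_image card hne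
  simp only [candidates, mem_filter, mem_powerset] at hC hmax
  obtain ⟨hCM, hxC, hlinked⟩ := hC
  refine ⟨C, hCM, hxC, hlinked, fun u hu v hv huv => ?_⟩
  by_contra hvC
  have := hmax (insert v C) ⟨insert_subset hv hCM, mem_insert_of_mem hxC,
    hlinked.insert_of_rel hsymm hu huv⟩
  rw [card_insert_of_notMem hvC] at this
  omega

lemma Linked.of_close {R : V → V → Prop} {Q : W → V → Prop} {R' : W → W → Prop}
    {C : Finset V} {T : Finset W} (hC : Linked R C)
    (hcover : ∀ c ∈ C, ∃ τ ∈ T, Q τ c) (hnear : ∀ τ ∈ T, ∃ c ∈ C, Q τ c)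
    (hsame : ∀ τ τ' c, Q τ c → Q τ' c → R' τ τ')
    (hstep : ∀ τ τ' c c', Q τ c → Q τ' c' → R c c' → R' τ τ') : Linked R' T := by
  intro S hST ⟨τ₀, hτ₀⟩ hproper
  obtain ⟨τ₁, hτ₁, hτ₁S⟩ : ∃ τ₁ ∈ T, τ₁ ∉ S := by
    by_contra! h
    exact hproper (hST.antisymm h)
  by_cases hshared : ∃ c, ∃ τ ∈ S, ∃ τ' ∈ T, τ' ∉ S ∧ Q τ c ∧ Q τ' c
  · obtain ⟨c, τ, hτ, τ', hτ', hτ'S, hc, hc'⟩ := hshared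
    exact ⟨τ, hτ, τ', hτ', hτ'S, hsame _ _ _ hc hc'⟩
  · obtain ⟨c₀, hc₀, hQ₀⟩ := hnear τ₀ (hST hτ₀)
    obtain ⟨c₁, hc₁, hQ₁⟩ := hnear τ₁ hτ₁
    let S' := C.filter fun c => ∃ τ ∈ S, Q τ c
    have hc₁S' : c₁ ∉ S' := fun h => by
      obtain ⟨τ, hτ, hQ⟩ := (mem_filter.1 h).2
      exact hshared ⟨c₁, τ, hτ, τ₁, hτ₁, hτ₁S, hQ, hQ₁⟩
    obtain ⟨c, hc, c', hc', hc'S', hcc'⟩ := hC S' (filter_subset _ _)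
      ⟨c₀, mem_filter.2 ⟨hc₀, τ₀, hτ₀, hQ₀⟩⟩ fun h => hc₁S' (h ▸ hc₁)
    obtain ⟨τ, hτ, hQ⟩ := (mem_filter.1 hc).2
    obtain ⟨τ', hτ', hQ'⟩ := hcover c' hc'
    exact ⟨τ, hτ, τ', hτ', fun h => hc'S' (mem_filter.2 ⟨hc', τ', h, hQ'⟩),
      hstep _ _ _ _ hQ hQ' hcc'⟩

variable [Fintype V] {R : V → V → Prop} [DecidableRel R] {l l' : ℕ} {u v w : V} {S T : Finset V}

/-- The vertex sets of the walks of length `l` from `v` in the graph of `R`. A connected set of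
size `s` is traced by a walk of length `2 * (s - 1)`, so these enumerate connected sets. -/
def walkSets (R : V → V → Prop) [DecidableRel R] : ℕ → V → Finset (Finset V)
  | 0, v => {{v}}
  | l + 1, v => (univ.filter (R v)).biUnion fun w => (walkSets R l w).image (insert v)

lemma mem_walkSets_zero : S ∈ walkSets R 0 v ↔ S = {v} := by simp [walkSets]

lemma mem_walkSets_succ :
    S ∈ walkSets R (l + 1) v ↔ ∃ w, R v w ∧ ∃ S' ∈ walkSets R l w, insert v S' = S := by
  simp [walkSets]

lemma card_walkSets_le {K : ℕ} (hK : ∀ v, (univ.filter (R v)).card ≤ K) (l : ℕ) (v : V) :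
    (walkSets R l v).card ≤ K ^ l := by
  induction l generalizing v with
  | zero => simp [walkSets]
  | succ l ih =>
    calc (walkSets R (l + 1) v).card ≤ (univ.filter (R v)).card * K ^ l :=
          card_biUnion_le_card_mul _ _ _ fun w _ => card_image_le.trans (ih w)
      _ ≤ K * K ^ l := Nat.mul_le_mul_right _ (hK v)
      _ = K ^ (l + 1) := by ring

lemma start_mem_of_mem_walkSets (h : S ∈ walkSets R l v) : v ∈ S := by
  cases l with
  | zero => simp [mem_walkSets_zero.1 h]
  | succ l =>
    obtain ⟨w, -, S', -, rfl⟩ := mem_walkSets_succ.1 h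
    exact mem_insert_self _ _

-- The detour `u → w → u` is spliced into the walk at a visit to `u`.
lemma insert_mem_walkSets (h : S ∈ walkSets R l v) (hu : u ∈ S) (huw : R u w) (hwu : R w u) :
    insert w S ∈ walkSets R (l + 2) v := by
  have detour_at_start : ∀ {l S}, S ∈ walkSets R l u → insert w S ∈ walkSets R (l + 2) u :=
    fun h => mem_walkSets_succ.2 ⟨w, huw, _, mem_walkSets_succ.2 ⟨u, hwu, _, h, rfl⟩,
      insert_eq_of_mem (mem_insert_of_mem (start_mem_of_mem_walkSets h))⟩
  induction l generalizing v S with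
  | zero =>
    obtain rfl : u = v := by simpa [mem_walkSets_zero.1 h] using hu
    exact detour_at_start h
  | succ l ih =>
    by_cases huv : u = v
    · subst huv
      exact detour_at_start h
    · obtain ⟨w', hw', S', hS', rfl⟩ := mem_walkSets_succ.1 h
      have hu' : u ∈ S' := by simpa [huv] using hu
      exact mem_walkSets_succ.2 ⟨w', hw', _, ih hS' hu', insert_comm _ _ _⟩

lemma walkSets_mono (hrefl : ∀ v, R v v) (h : l ≤ l') : walkSets R l v ⊆ walkSets R l' v := by
  induction l', h using Nat.le_induction with
  | base => rfl
  | succ m _ ih =>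
    exact fun S hS => mem_walkSets_succ.2 ⟨v, hrefl v, S, ih hS,
      insert_eq_of_mem (start_mem_of_mem_walkSets (ih hS))⟩

lemma Linked.mem_walkSets (hsymm : ∀ u v, R u v → R v u) (hT : Linked R T) (hv : v ∈ T) :
    T ∈ walkSets R (2 * (T.card - 1)) v := by
  have grow : ∀ i, i + 1 ≤ T.card → ∃ S ⊆ T, S.card = i + 1 ∧ S ∈ walkSets R (2 * i) v := by
    intro i hi
    induction i with
    | zero => exact ⟨{v}, by simpa using hv, by simp, mem_walkSets_zero.2 rfl⟩
    | succ i ih =>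
      obtain ⟨S, hST, hcard, hS⟩ := ih (by omega)
      obtain ⟨u, hu, w, hw, hwS, huw⟩ := hT S hST ⟨v, start_mem_of_mem_walkSets hS⟩
        (by rintro rfl; omega)
      exact ⟨insert w S, insert_subset hw hST, by rw [card_insert_of_notMem hwS, hcard],
        insert_mem_walkSets hS hu huw (hsymm _ _ huw)⟩
  have hpos : 0 < T.card := card_pos.2 ⟨v, hv⟩
  obtain ⟨S, hST, hcard, hS⟩ := grow (T.card - 1) (by omega)
  rwa [eq_of_subset_of_card_le hST (by omega)] at hS

lemma card_linked_le (hrefl : ∀ v, R v v) (hsymm : ∀ u v, R u v → R v u) {K : ℕ}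
    (hK : ∀ v, (univ.filter (R v)).card ≤ K) (s : ℕ) (v : V) (F : Finset (Finset V))
    (hF : ∀ T ∈ F, Linked R T ∧ v ∈ T ∧ T.card ≤ s) : F.card ≤ K ^ (2 * (s - 1)) := by
  refine (card_le_card fun T hT => ?_).trans (card_walkSets_le hK (2 * (s - 1)) v)
  obtain ⟨hlinked, hv, hcard⟩ := hF T hT
  exact walkSets_mono hrefl (by omega) (hlinked.mem_walkSets hsymm hv)

end Linked

section Hamming

open Finset

variable {n : ℕ}

/-- The Hamming distance of two subsets of `Fin n`. -/
def hamming (x y : Finset (Fin n)) : ℕ := (symmDiff x y).card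

lemma hamming_self (x : Finset (Fin n)) : hamming x x = 0 := by simp [hamming]

lemma hamming_comm (x y : Finset (Fin n)) : hamming x y = hamming y x := by
  rw [hamming, symmDiff_comm, hamming]

lemma hamming_triangle (x y z : Finset (Fin n)) : hamming x z ≤ hamming x y + hamming y z :=
  (card_le_card (symmDiff_triangle x y z)).trans (card_union_le _ _)

lemma card_filter_card_le (n r : ℕ) :
    (univ.filter fun s : Finset (Fin n) => s.card ≤ r).card ≤ (n + 1) ^ r := by
  induction r with
  | zero => simp [filter_eq']
  | succ r ih =>
    let extend : Finset (Fin n) × Option (Fin n) → Finset (Fin n) :=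
      fun q => q.2.elim q.1 fun a => insert a q.1
    have hsub : (univ.filter fun s : Finset (Fin n) => s.card ≤ r + 1) ⊆
        ((univ.filter fun s : Finset (Fin n) => s.card ≤ r) ×ˢ univ).image extend := by
      intro s hs
      rw [mem_image]
      by_cases h : s.card ≤ r
      · exact ⟨(s, none), by simp [h], rfl⟩
      · obtain ⟨a, ha⟩ : s.Nonempty := card_pos.1 (by omega)
        refine ⟨(s.erase a, some a), ?_, insert_erase ha⟩
        simpa [card_erase_of_mem ha] using hs
    calc _ ≤ _ := (card_le_card hsub).trans card_image_le
      _ ≤ (n + 1) ^ r * (n + 1) := by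
        rw [card_product]
        exact Nat.mul_le_mul ih (by simp)
      _ = (n + 1) ^ (r + 1) := by ring

lemma card_hamming_ball_le (x : Finset (Fin n)) (r : ℕ) :
    (univ.filter fun y => hamming x y ≤ r).card ≤ (n + 1) ^ r := by
  refine (card_le_card_of_injOn (symmDiff x) (fun y hy => ?_)
    (symmDiff_right_injective x).injOn).trans (card_filter_card_le n r)
  exact mem_coe.2 (mem_filter.2 ⟨mem_univ _, (mem_filter.1 (mem_coe.1 hy)).2⟩)

/-- Subsets at Hamming distance at most two; on one level of the cube, this is the relation of
having a common upper neighbour. -/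
abbrev HammingTwo (u v : Finset (Fin n)) : Prop := hamming u v ≤ 2

lemma HammingTwo.symm {u v : Finset (Fin n)} (h : HammingTwo u v) : HammingTwo v u := by
  rwa [HammingTwo, hamming_comm]

lemma card_linked_hammingTwo_le (s : ℕ) (x : Finset (Fin n)) (F : Finset (Finset (Finset (Fin n))))
    (hF : ∀ T ∈ F, Linked HammingTwo T ∧ x ∈ T ∧ T.card ≤ s) :
    F.card ≤ ((n + 1) ^ 2) ^ (2 * (s - 1)) :=
  card_linked_le (fun v => by simp [HammingTwo, hamming_self]) (fun _ _ => HammingTwo.symm)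
    (fun v => card_hamming_ball_le v 2) s x F hF

lemma card_linked_labelled_le {ι : Type*} [Fintype ι] (r s : ℕ) (x : (_ : ι) × Finset (Fin n))
    (F : Finset (Finset ((_ : ι) × Finset (Fin n))))
    (hF : ∀ T ∈ F, Linked (fun u v => hamming u.2 v.2 ≤ r) T ∧ x ∈ T ∧ T.card ≤ s) :
    F.card ≤ (Fintype.card ι * (n + 1) ^ r) ^ (2 * (s - 1)) := by
  refine card_linked_le (fun v => by simp [hamming_self]) (fun u v h => by rwa [hamming_comm])
    (fun v => ?_) s x F hF
  calc _ ≤ (univ.sigma fun _ : ι => univ.filter fun y => hamming v.2 y ≤ r).card :=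
        card_le_card fun y hy => mem_sigma.2 ⟨mem_univ _, by simpa using hy⟩
    _ ≤ Fintype.card ι * (n + 1) ^ r := by
      rw [card_sigma, sum_const, card_univ, smul_eq_mul]
      exact Nat.mul_le_mul_left _ (card_hamming_ball_le v.2 r)

end Hamming

section RandomSubset

open Finset

variable {V : Type*}

/-- The probability that a random subset of `G`, containing each element independently with
probability `p`, equals `T ⊆ G`. -/
def bernoulliWeight (G : Finset V) (p : ℝ) (T : Finset V) : ℝ :=
  p ^ T.card * (1 - p) ^ (G.card - T.card)

lemma bernoulliWeight_pos {G T : Finset V} {p : ℝ} (hp : 0 < p) (hp1 : p < 1) :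
    0 < bernoulliWeight G p T := by
  have : 0 < 1 - p := by linarith
  unfold bernoulliWeight
  positivity

lemma sum_bernoulliWeight (G : Finset V) (p : ℝ) :
    ∑ T ∈ G.powerset, bernoulliWeight G p T = 1 := by
  simp [bernoulliWeight, sum_pow_mul_eq_add_pow]

variable [DecidableEq V]

lemma sum_bernoulliWeight_disjoint {G C : Finset V} (hC : C ⊆ G) (p : ℝ) :
    ∑ T ∈ G.powerset with Disjoint C T, bernoulliWeight G p T = (1 - p) ^ C.card := by
  have hfilter : {T ∈ G.powerset | Disjoint C T} = (G \ C).powerset := by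
    ext T
    simp [subset_sdiff, disjoint_comm]
  have hfactor : ∀ T ∈ (G \ C).powerset,
      bernoulliWeight G p T = bernoulliWeight (G \ C) p T * (1 - p) ^ C.card := by
    intro T hT
    have hTcard := card_le_card (mem_powerset.1 hT)
    have hGcard := card_sdiff_add_card_eq_card hC
    rw [bernoulliWeight, bernoulliWeight, mul_assoc, ← pow_add]
    congr 2
    omega
  rw [hfilter, sum_congr rfl hfactor, ← sum_mul, sum_bernoulliWeight, one_mul]

lemma sum_bernoulliWeight_mem {G : Finset V} {y : V} (hy : y ∈ G) (p : ℝ) :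
    ∑ T ∈ G.powerset with y ∈ T, bernoulliWeight G p T = p := by
  have hnot := sum_bernoulliWeight_disjoint (singleton_subset_iff.2 hy) p
  simp only [disjoint_singleton_left, card_singleton, pow_one] at hnot
  have hsplit := sum_filter_add_sum_filter_not G.powerset (y ∈ ·) (bernoulliWeight G p)
  rw [sum_bernoulliWeight, hnot] at hsplit
  linarith

omit [DecidableEq V] in
lemma sum_bernoulliWeight_mul_sum (G : Finset V) (p : ℝ) (w : V → ℝ) :
    ∑ T ∈ G.powerset, bernoulliWeight G p T * ∑ y ∈ T, w y = p * ∑ y ∈ G, w y := by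
  have hexpand : ∀ T ∈ G.powerset, bernoulliWeight G p T * ∑ y ∈ T, w y =
      ∑ y ∈ G, if y ∈ T then bernoulliWeight G p T * w y else 0 := by
    intro T hT
    rw [mul_sum, ← sum_filter, filter_mem_eq_inter, inter_eq_right.2 (mem_powerset.1 hT)]
  rw [sum_congr rfl hexpand, sum_comm, mul_sum]
  refine sum_congr rfl fun y hy => ?_
  rw [← sum_filter, ← sum_mul, sum_bernoulliWeight_mem hy]

lemma sum_bernoulliWeight_mul_card_disjoint_le {G G' : Finset V} {N : V → Finset V} {β : ℕ}
    (hN : ∀ y ∈ G', N y ⊆ G) (hβ : ∀ y ∈ G', β ≤ (N y).card) {p : ℝ} (hp : 0 ≤ p)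
    (hp1 : p ≤ 1) :
    ∑ T ∈ G.powerset, bernoulliWeight G p T * {y ∈ G' | Disjoint (N y) T}.card ≤
      G'.card * (1 - p) ^ β := by
  have hexpand : ∀ T ∈ G.powerset, bernoulliWeight G p T * {y ∈ G' | Disjoint (N y) T}.card =
      ∑ y ∈ G', if Disjoint (N y) T then bernoulliWeight G p T else 0 := by
    intro T _
    rw [← sum_filter, sum_const, nsmul_eq_mul, mul_comm]
  rw [sum_congr rfl hexpand, sum_comm, ← nsmul_eq_mul]
  refine sum_le_card_nsmul _ _ _ fun y hy => ?_
  rw [← sum_filter, sum_bernoulliWeight_disjoint (hN y hy)]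
  exact pow_le_pow_of_le_one (by linarith) (by linarith) (hβ y hy)

lemma exists_subset_sum_add_card_disjoint_le {G G' : Finset V} {N : V → Finset V} {β : ℕ}
    (w : V → ℝ) (hN : ∀ y ∈ G', N y ⊆ G) (hβ : ∀ y ∈ G', β ≤ (N y).card) {p : ℝ}
    (hp : 0 < p) (hp1 : p < 1) :
    ∃ T ⊆ G, ∑ y ∈ T, w y + {y ∈ G' | Disjoint (N y) T}.card ≤
      p * ∑ y ∈ G, w y + G'.card * (1 - p) ^ β := by
  have haverage : ∑ T ∈ G.powerset, bernoulliWeight G p T *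
        (∑ y ∈ T, w y + {y ∈ G' | Disjoint (N y) T}.card) ≤
      ∑ T ∈ G.powerset, bernoulliWeight G p T *
        (p * ∑ y ∈ G, w y + G'.card * (1 - p) ^ β) := by
    simp only [mul_add _ (∑ y ∈ _, w y), sum_add_distrib]
    rw [sum_bernoulliWeight_mul_sum, ← sum_mul, sum_bernoulliWeight, one_mul]
    gcongr
    exact sum_bernoulliWeight_mul_card_disjoint_le hN hβ hp.le hp1.le
  obtain ⟨T, hT, hle⟩ := exists_le_of_sum_le (powerset_nonempty G) haverage
  exact ⟨T, mem_powerset.1 hT, le_of_mul_le_mul_left hle (bernoulliWeight_pos hp hp1)⟩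

end RandomSubset

section GreedyCover

open Finset

lemma exists_greedy_cover {V W : Type*} [DecidableEq W] (S : Finset V)
    (N : V → Finset W) (E : Finset W) {ψ : ℕ} (hψ : 1 ≤ ψ) :
    ∃ T ⊆ S, ψ * T.card ≤ E.card ∧ ∀ x ∈ S, ((N x ∩ E) \ T.biUnion N).card < ψ := by
  obtain ⟨T, hT, hmax⟩ := exists_max_image
    {T ∈ S.powerset | ψ * T.card ≤ (E ∩ T.biUnion N).card} card ⟨∅, by simp⟩
  simp only [mem_filter, mem_powerset] at hT hmax
  refine ⟨T, hT.1, hT.2.trans (card_le_card inter_subset_left), fun x hx => ?_⟩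
  by_contra! hmany
  have hxT : x ∉ T := fun hxT => by
    rw [sdiff_eq_empty_iff_subset.2 (inter_subset_left.trans (subset_biUnion_of_mem N hxT)),
      card_empty] at hmany
    omega
  have hgain : ψ * (insert x T).card ≤ (E ∩ (insert x T).biUnion N).card := by
    have hdisj : Disjoint (E ∩ T.biUnion N) ((N x ∩ E) \ T.biUnion N) :=
      disjoint_sdiff.mono_left inter_subset_right
    have hunion : (E ∩ T.biUnion N) ∪ ((N x ∩ E) \ T.biUnion N) ⊆
        E ∩ (insert x T).biUnion N := by
      rw [biUnion_insert]
      grind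
    have := card_le_card hunion
    rw [card_union_of_disjoint hdisj] at this
    rw [card_insert_of_notMem hxT, mul_add, mul_one]
    omega
  have := hmax (insert x T) ⟨insert_subset hx hT.1, hgain⟩
  rw [card_insert_of_notMem hxT] at this
  omega

end GreedyCover

section Containers

open Finset

/-- A bipartite graph between the vertex sets `left` and `right` which is regular on each side,
with the larger degree on the left. Only the values of `up` on `left` and of `down` on `right`
matter. -/
structure BiregularGraph (V : Type*) where
  left : Finset V
  right : Finset V
  up : V → Finset V
  down : V → Finset V
  upDegree : ℕ
  downDegree : ℕ
  up_subset : ∀ x ∈ left, up x ⊆ right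
  down_subset : ∀ y ∈ right, down y ⊆ left
  mem_up_iff_mem_down : ∀ x ∈ left, ∀ y ∈ right, y ∈ up x ↔ x ∈ down y
  card_up : ∀ x ∈ left, (up x).card = upDegree
  card_down : ∀ y ∈ right, (down y).card = downDegree
  downDegree_le_upDegree : downDegree ≤ upDegree

/-- The components of a fingerprint, in the order in which they are chosen: a random `seed` in the
neighbourhood, the neighbours of the seed that are `excluded` from the set, the heavy vertices left
`uncovered` by the seed, a greedy `patch` of the approximation from inside, a greedy `prune` of the
container from outside, the `remainder` of the neighbourhood, and a `root` anchoring the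
enumeration. -/
inductive FingerprintLabel
  | seed | excluded | uncovered | patch | prune | remainder | root
  deriving DecidableEq

instance : Fintype FingerprintLabel where
  elems := {.seed, .excluded, .uncovered, .patch, .prune, .remainder, .root}
  complete i := by cases i <;> decide

/-- A short certificate from which a container of a large set of left vertices can be
reconstructed. -/
abbrev Fingerprint (V : Type*) := FingerprintLabel → Finset V

namespace BiregularGraph

variable {V : Type*} [DecidableEq V] (B : BiregularGraph V) {H G : Finset V}

/-- `H` is a set of left vertices whose neighbourhood lies in the set `G` of right vertices. -/
structure MapsInto (H G : Finset V) : Prop where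
  subset_left : H ⊆ B.left
  subset_right : G ⊆ B.right
  up_subset : ∀ x ∈ H, B.up x ⊆ G

lemma sum_card_up_inter {A C : Finset V} (hA : A ⊆ B.left) (hC : C ⊆ B.right) :
    ∑ x ∈ A, (B.up x ∩ C).card = ∑ y ∈ C, (B.down y ∩ A).card := by
  have hdouble := sum_card_bipartiteAbove_eq_sum_card_bipartiteBelow (s := A) (t := C)
    (fun x y => y ∈ B.up x)
  simp only [bipartiteAbove, bipartiteBelow, filter_mem_eq_inter] at hdouble
  simp only [inter_comm (B.up _)]
  rw [hdouble]
  refine sum_congr rfl fun y hy => ?_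
  rw [filter_congr fun x hx => B.mem_up_iff_mem_down x (hA hx) y (hC hy), filter_mem_eq_inter,
    inter_comm]

variable {B}

namespace MapsInto

lemma sum_card_down_sdiff_add (h : B.MapsInto H G) :
    ∑ y ∈ G, (B.down y \ H).card + B.upDegree * H.card = B.downDegree * G.card := by
  have hinter : ∑ y ∈ G, (B.down y ∩ H).card = B.upDegree * H.card := by
    rw [← B.sum_card_up_inter h.subset_left h.subset_right, mul_comm]
    refine sum_const_nat fun x hx => ?_
    rw [inter_eq_left.2 (h.up_subset x hx), B.card_up x (h.subset_left hx)]
  rw [← hinter, ← sum_add_distrib, mul_comm]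
  refine sum_const_nat fun y hy => ?_
  rw [card_sdiff_add_card_inter, B.card_down y (h.subset_right hy)]

omit [DecidableEq V] in
lemma upDegree_mul_card_le (h : B.MapsInto H G) :
    B.upDegree * H.card ≤ B.downDegree * G.card :=
  h.sum_card_down_sdiff_add ▸ Nat.le_add_left _ _

lemma sum_card_down_sdiff_le (h : B.MapsInto H G) {t : ℕ} (ht : G.card ≤ H.card + t) :
    ∑ y ∈ G, (B.down y \ H).card ≤ B.downDegree * t := by
  have hsum := h.sum_card_down_sdiff_add
  have hmul := Nat.mul_le_mul_left B.downDegree ht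
  have hdeg := Nat.mul_le_mul_right H.card B.downDegree_le_upDegree
  rw [mul_add] at hmul
  omega

lemma disjoint_down (h : B.MapsInto H G) {v : V} (hv : v ∈ B.right \ G) :
    Disjoint (B.down v) H := by
  obtain ⟨hvright, hvG⟩ := mem_sdiff.1 hv
  refine disjoint_left.2 fun x hx hxH => hvG (h.up_subset x hxH ?_)
  exact (B.mem_up_iff_mem_down x (h.subset_left hxH) v hvright).2 hx

end MapsInto

variable (B)

/-- The vertices of `G` at least half of whose neighbours lie in `H`. -/
def heavy (H G : Finset V) : Finset V :=
  {y ∈ G | B.downDegree ≤ 2 * (B.down y ∩ H).card}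

/-- The first approximation from below to the neighbourhood encoded by a fingerprint. -/
def approx (Φ : Fingerprint V) : Finset V :=
  ((Φ .seed).biUnion B.down \ Φ .excluded).biUnion B.up ∪ Φ .uncovered ∪ (Φ .patch).biUnion B.up

/-- The left vertices with fewer than `ψ` neighbours outside `F`. -/
def almostCovered (ψ : ℕ) (F : Finset V) : Finset V :=
  {x ∈ B.left | (B.up x \ F).card < ψ}

/-- The left vertices with all neighbours in `F`. -/
def coveredBy (F : Finset V) : Finset V :=
  {x ∈ B.left | B.up x ⊆ F}

/-- The container of the encoded set, of size controlled by that of `rightContainer`. -/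
def leftContainer (ψ : ℕ) (Φ : Fingerprint V) : Finset V :=
  B.almostCovered ψ (B.approx Φ) \ (Φ .prune).biUnion B.down

/-- The second approximation from below to the neighbourhood of the encoded set. -/
def rightContainer (ψ : ℕ) (Φ : Fingerprint V) : Finset V :=
  B.approx Φ ∪ {y ∈ B.right | ψ ≤ (B.down y ∩ B.leftContainer ψ Φ).card}

/-- The left vertices with all neighbours in the neighbourhood that the fingerprint encodes
exactly. -/
def exactContainer (ψ : ℕ) (Φ : Fingerprint V) : Finset V :=
  B.coveredBy (B.rightContainer ψ Φ ∪ Φ .remainder)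

/-- The fingerprint `Φ` is built from `H` and its neighbourhood `G`, and `H` can be located
from it. -/
structure Encodes (ψ : ℕ) (H G : Finset V) (Φ : Fingerprint V) : Prop where
  seed_subset : Φ .seed ⊆ G
  excluded_subset : Φ .excluded ⊆ (Φ .seed).biUnion B.down
  uncovered_subset : Φ .uncovered ⊆ G
  patch_subset : Φ .patch ⊆ H
  down_prune_inter_nonempty :
    ∀ v ∈ Φ .prune, (B.down v ∩ B.almostCovered ψ (B.approx Φ)).Nonempty
  remainder_subset : Φ .remainder ⊆ G
  approx_subset : B.approx Φ ⊆ G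
  subset_leftContainer : H ⊆ B.leftContainer ψ Φ
  rightContainer_subset : B.rightContainer ψ Φ ⊆ G

variable {B} {ψ t : ℕ}

lemma almostCovered_subset_left {F : Finset V} : B.almostCovered ψ F ⊆ B.left :=
  filter_subset _ _

lemma leftContainer_subset_left {Φ : Fingerprint V} : B.leftContainer ψ Φ ⊆ B.left :=
  sdiff_subset.trans almostCovered_subset_left

lemma exists_mem_up_of_mem_almostCovered (hψ : ψ ≤ B.upDegree) {F : Finset V} {x : V}
    (hx : x ∈ B.almostCovered ψ F) : ∃ y ∈ B.up x, y ∈ F := by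
  obtain ⟨hxleft, hxF⟩ := mem_filter.1 hx
  by_contra! hdisj
  rw [sdiff_eq_self_of_disjoint (disjoint_left.2 hdisj), B.card_up x hxleft] at hxF
  omega

lemma card_biUnion_down_sdiff_le (T : Finset V) :
    (T.biUnion B.down \ H).card ≤ ∑ y ∈ T, (B.down y \ H).card := by
  have hsub : T.biUnion B.down \ H ⊆ T.biUnion fun y => B.down y \ H := by
    intro z hz
    simp only [mem_sdiff, mem_biUnion] at hz ⊢
    obtain ⟨⟨y, hy, hzy⟩, hzH⟩ := hz
    exact ⟨y, hy, hzy, hzH⟩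
  exact (card_le_card hsub).trans card_biUnion_le

namespace MapsInto

lemma mem_biUnion_up_of_not_disjoint (h : B.MapsInto H G) {T : Finset V} (hT : T ⊆ G) {y : V}
    (hy : y ∈ G) (hyT : ¬ Disjoint ((B.down y ∩ H).biUnion B.up) T) :
    y ∈ (T.biUnion B.down ∩ H).biUnion B.up := by
  obtain ⟨z, hz, hzT⟩ := not_disjoint_iff.1 hyT
  obtain ⟨x, hx, hzx⟩ := mem_biUnion.1 hz
  obtain ⟨hxy, hxH⟩ := mem_inter.1 hx
  have hadj := B.mem_up_iff_mem_down x (h.subset_left hxH)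
  have hxz : x ∈ B.down z := (hadj z (h.subset_right (hT hzT))).1 hzx
  exact mem_biUnion.2 ⟨x, mem_inter.2 ⟨mem_biUnion.2 ⟨z, hzT, hxz⟩, hxH⟩,
    (hadj y (h.subset_right hy)).2 hxy⟩

lemma exists_seed (h : B.MapsInto H G) (ht : G.card ≤ H.card + t) {p : ℝ} (hp : 0 < p)
    (hp1 : p < 1) {β : ℕ} (hβ : ∀ y ∈ B.heavy H G, β ≤ ((B.down y ∩ H).biUnion B.up).card) :
    ∃ T ⊆ G, ∃ T' ⊆ G, B.heavy H G ⊆ (T.biUnion B.down ∩ H).biUnion B.up ∪ T' ∧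
      (T.card + (T.biUnion B.down \ H).card + T'.card : ℝ) ≤
        p * G.card + p * (B.downDegree * t) + G.card * (1 - p) ^ β := by
  have hheavy : B.heavy H G ⊆ G := filter_subset _ _
  obtain ⟨T, hT, hsize⟩ := exists_subset_sum_add_card_disjoint_le
    (fun y => 1 + ((B.down y \ H).card : ℝ))
    (fun y _ => biUnion_subset.2 fun x hx => h.up_subset x (mem_inter.1 hx).2) hβ hp hp1
  refine ⟨T, hT, {y ∈ B.heavy H G | Disjoint ((B.down y ∩ H).biUnion B.up) T},
    (filter_subset _ _).trans hheavy, fun y hy => ?_, ?_⟩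
  · by_cases hyT : Disjoint ((B.down y ∩ H).biUnion B.up) T
    · exact mem_union_right _ (mem_filter.2 ⟨hy, hyT⟩)
    · exact mem_union_left _ (h.mem_biUnion_up_of_not_disjoint hT (hheavy hy) hyT)
  · have hexcluded : ((T.biUnion B.down \ H).card : ℝ) ≤ ∑ y ∈ T, ((B.down y \ H).card : ℝ) :=
      mod_cast card_biUnion_down_sdiff_le T
    have hedges : p * ∑ y ∈ G, ((B.down y \ H).card : ℝ) ≤ p * (B.downDegree * t) :=
      mul_le_mul_of_nonneg_left (mod_cast h.sum_card_down_sdiff_le ht) hp.le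
    have hmissed : ((B.heavy H G).card : ℝ) * (1 - p) ^ β ≤ G.card * (1 - p) ^ β :=
      mul_le_mul_of_nonneg_right (mod_cast card_le_card hheavy) (pow_nonneg (by linarith) _)
    simp only [sum_add_distrib, sum_const, nsmul_eq_mul, mul_one, mul_add] at hsize
    linarith

lemma card_sdiff_le_of_heavy_subset (h : B.MapsInto H G) (ht : G.card ≤ H.card + t)
    (hdown : 1 ≤ B.downDegree) {F : Finset V} (hF : B.heavy H G ⊆ F) :
    (G \ F).card ≤ 2 * t := by
  refine Nat.le_of_mul_le_mul_left ?_ hdown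
  calc B.downDegree * (G \ F).card = (G \ F).card • B.downDegree := by
        rw [smul_eq_mul, mul_comm]
    _ ≤ ∑ y ∈ G \ F, 2 * (B.down y \ H).card := by
        refine card_nsmul_le_sum _ _ _ fun y hy => ?_
        obtain ⟨hyG, hyF⟩ := mem_sdiff.1 hy
        have hlight : ¬ B.downDegree ≤ 2 * (B.down y ∩ H).card := fun hle =>
          hyF (hF (mem_filter.2 ⟨hyG, hle⟩))
        have hsplit := card_sdiff_add_card_inter (B.down y) H
        rw [B.card_down y (h.subset_right hyG)] at hsplit
        omega
    _ ≤ 2 * ∑ y ∈ G, (B.down y \ H).card := by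
        rw [← mul_sum]
        gcongr
        exact sdiff_subset
    _ ≤ 2 * (B.downDegree * t) := Nat.mul_le_mul_left _ (h.sum_card_down_sdiff_le ht)
    _ = B.downDegree * (2 * t) := by ring

lemma card_almostCovered_sdiff_le (h : B.MapsInto H G) (ht : G.card ≤ H.card + t)
    (hψ : 1 ≤ ψ) (hψup : 2 * ψ ≤ B.upDegree) {F : Finset V} (hF : F ⊆ G) :
    (B.almostCovered ψ F \ H).card ≤ 2 * t := by
  refine Nat.le_of_mul_le_mul_left ?_ (by omega : 0 < B.upDegree)
  calc B.upDegree * (B.almostCovered ψ F \ H).card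
      = (B.almostCovered ψ F \ H).card • B.upDegree := by rw [smul_eq_mul, mul_comm]
    _ ≤ ∑ x ∈ B.almostCovered ψ F \ H, 2 * (B.up x ∩ G).card := by
        refine card_nsmul_le_sum _ _ _ fun x hx => ?_
        obtain ⟨hxleft, hxF⟩ := mem_filter.1 (mem_sdiff.1 hx).1
        have hsplit := card_sdiff_add_card_inter (B.up x) F
        rw [B.card_up x hxleft] at hsplit
        have hmono : (B.up x ∩ F).card ≤ (B.up x ∩ G).card :=
          card_le_card (inter_subset_inter_left hF)
        omega
    _ = 2 * ∑ y ∈ G, (B.down y ∩ (B.almostCovered ψ F \ H)).card := by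
        rw [← mul_sum,
          B.sum_card_up_inter (sdiff_subset.trans almostCovered_subset_left) h.subset_right]
    _ ≤ 2 * ∑ y ∈ G, (B.down y \ H).card := by
        gcongr with y
        exact fun z hz => by grind
    _ ≤ 2 * (B.downDegree * t) := Nat.mul_le_mul_left _ (h.sum_card_down_sdiff_le ht)
    _ ≤ 2 * (B.upDegree * t) := by
        gcongr
        exact B.downDegree_le_upDegree
    _ = B.upDegree * (2 * t) := by ring

lemma exists_prune (h : B.MapsInto H G) (hψ : 1 ≤ ψ) (S : Finset V) :
    ∃ T : Finset V, ψ * T.card ≤ (S \ H).card ∧ (∀ v ∈ T, (B.down v ∩ S).Nonempty) ∧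
      Disjoint (T.biUnion B.down) H ∧
      ∀ y ∈ B.right \ G, (B.down y ∩ (S \ T.biUnion B.down)).card < ψ := by
  obtain ⟨T, hT, hTcard, hTcover⟩ := exists_greedy_cover
    {v ∈ B.right \ G | (B.down v ∩ S).Nonempty} B.down (S \ H) hψ
  refine ⟨T, hTcard, fun v hv => (mem_filter.1 (hT hv)).2,
    (disjoint_biUnion_left _ _ _).2 fun v hv => h.disjoint_down (mem_filter.1 (hT hv)).1,
    fun y hy => ?_⟩
  by_cases hne : (B.down y ∩ S).Nonempty
  · refine (card_le_card fun z hz => ?_).trans_lt (hTcover y (mem_filter.2 ⟨hy, hne⟩))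
    have := disjoint_left.1 (h.disjoint_down hy) (mem_inter.1 hz).1
    grind
  · have hempty : B.down y ∩ (S \ T.biUnion B.down) = ∅ :=
      subset_empty.1 ((inter_subset_inter_left sdiff_subset).trans
        (not_nonempty_iff_eq_empty.1 hne).subset)
    rw [hempty, card_empty]
    omega

lemma sum_card_up_sdiff_le (h : B.MapsInto H G) {S F : Finset V}
    (hS : S ⊆ B.almostCovered ψ F) (hF : F ⊆ G) :
    ∑ x ∈ S, (B.up x \ G).card ≤ ψ * (B.almostCovered ψ F \ H).card := by
  have hH : ∑ x ∈ S ∩ H, (B.up x \ G).card = 0 :=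
    sum_eq_zero fun x hx => by
      rw [sdiff_eq_empty_iff_subset.2 (h.up_subset x (mem_inter.1 hx).2), card_empty]
  rw [← sum_inter_add_sum_sdiff S H, hH, zero_add]
  calc ∑ x ∈ S \ H, (B.up x \ G).card ≤ (S \ H).card • ψ := by
        refine sum_le_card_nsmul _ _ _ fun x hx => ?_
        exact (card_le_card (sdiff_subset_sdiff subset_rfl hF)).trans
          (mem_filter.1 (hS (mem_sdiff.1 hx).1)).2.le
    _ ≤ ψ * (B.almostCovered ψ F \ H).card := by
        rw [smul_eq_mul, mul_comm]
        gcongr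

end MapsInto

lemma sum_card_up_inter_sdiff_rightContainer_le (hG : G ⊆ B.right) (Φ : Fingerprint V) :
    ∑ x ∈ B.leftContainer ψ Φ, (B.up x ∩ (G \ B.rightContainer ψ Φ)).card ≤
      ψ * (G \ B.approx Φ).card := by
  rw [B.sum_card_up_inter leftContainer_subset_left (sdiff_subset.trans hG)]
  calc ∑ y ∈ G \ B.rightContainer ψ Φ, (B.down y ∩ B.leftContainer ψ Φ).card
      ≤ (G \ B.rightContainer ψ Φ).card • ψ := by
        refine sum_le_card_nsmul _ _ _ fun y hy => ?_
        obtain ⟨hyG, hyF⟩ := mem_sdiff.1 hy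
        by_contra! hmany
        exact hyF (mem_union_right _ (mem_filter.2 ⟨hG hyG, hmany.le⟩))
    _ ≤ ψ * (G \ B.approx Φ).card := by
        rw [smul_eq_mul, mul_comm]
        gcongr
        exact subset_union_left

lemma sum_card_up_inter_le {S F : Finset V} (hS : S ⊆ B.left) (hF : F ⊆ B.right) :
    ∑ x ∈ S, (B.up x ∩ F).card ≤ B.downDegree * F.card := by
  rw [B.sum_card_up_inter hS hF, mul_comm, ← smul_eq_mul]
  refine sum_le_card_nsmul _ _ _ fun y hy => ?_
  rw [← B.card_down y (hF hy)]
  exact card_le_card inter_subset_left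

namespace Encodes

variable {Φ : Fingerprint V}

lemma upDegree_mul_card_leftContainer_le (hΦ : B.Encodes ψ H G Φ) (h : B.MapsInto H G) :
    B.upDegree * (B.leftContainer ψ Φ).card ≤ B.downDegree * (B.rightContainer ψ Φ).card +
      ψ * (G \ B.approx Φ).card + ψ * (B.almostCovered ψ (B.approx Φ) \ H).card := by
  have hsplit : B.upDegree * (B.leftContainer ψ Φ).card =
      ∑ x ∈ B.leftContainer ψ Φ, ((B.up x ∩ B.rightContainer ψ Φ).card +
        (B.up x ∩ (G \ B.rightContainer ψ Φ)).card + (B.up x \ G).card) := by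
    rw [mul_comm]
    refine (sum_const_nat fun x hx => ?_).symm
    rw [← B.card_up x (leftContainer_subset_left hx), ← card_sdiff_add_card_inter (B.up x) G,
      ← card_sdiff_add_card_inter (B.up x ∩ G) (B.rightContainer ψ Φ), inter_sdiff_assoc,
      inter_assoc, inter_eq_right.2 hΦ.rightContainer_subset]
    ring
  rw [hsplit, sum_add_distrib, sum_add_distrib]
  exact Nat.add_le_add (Nat.add_le_add
    (sum_card_up_inter_le leftContainer_subset_left
      (hΦ.rightContainer_subset.trans h.subset_right))
    (sum_card_up_inter_sdiff_rightContainer_le h.subset_right Φ))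
    (h.sum_card_up_sdiff_le sdiff_subset hΦ.approx_subset)

lemma update_remainder (hΦ : B.Encodes ψ H G Φ) {T : Finset V} (hT : T ⊆ G) :
    B.Encodes ψ H G (Function.update Φ .remainder T) where
  seed_subset := hΦ.seed_subset
  excluded_subset := hΦ.excluded_subset
  uncovered_subset := hΦ.uncovered_subset
  patch_subset := hΦ.patch_subset
  down_prune_inter_nonempty := hΦ.down_prune_inter_nonempty
  remainder_subset := hT
  approx_subset := hΦ.approx_subset
  subset_leftContainer := hΦ.subset_leftContainer
  rightContainer_subset := hΦ.rightContainer_subset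

lemma exactContainer_update_remainder (hΦ : B.Encodes ψ H G Φ) :
    B.exactContainer ψ (Function.update Φ .remainder (G \ B.rightContainer ψ Φ)) =
      B.coveredBy G :=
  congrArg B.coveredBy (union_sdiff_of_subset hΦ.rightContainer_subset)

end Encodes

/-- The sizes of the parts of a fingerprint of a set `H` with neighbourhood `G`, where
`|G| ≤ |H| + t`. -/
structure IsEconomical (B : BiregularGraph V) (ψ t : ℕ) (p : ℝ) (β : ℕ) (G : Finset V)
    (Φ : Fingerprint V) : Prop where
  card_seed_le : ((Φ .seed).card + (Φ .excluded).card + (Φ .uncovered).card : ℝ) ≤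
    p * G.card + p * (B.downDegree * t) + G.card * (1 - p) ^ β
  card_patch_le : ψ * (Φ .patch).card ≤ 2 * t
  card_prune_le : ψ * (Φ .prune).card ≤ 2 * t
  card_leftContainer_le : B.upDegree * (B.leftContainer ψ Φ).card ≤
    B.downDegree * (B.rightContainer ψ Φ).card + 4 * ψ * t

lemma MapsInto.exists_approximation (h : B.MapsInto H G) (ht : G.card ≤ H.card + t)
    (hψ : 1 ≤ ψ) (hdown : 1 ≤ B.downDegree) {p : ℝ} (hp : 0 < p) (hp1 : p < 1) {β : ℕ}
    (hβ : ∀ y ∈ B.heavy H G, β ≤ ((B.down y ∩ H).biUnion B.up).card) :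
    ∃ T ⊆ G, ∃ T' ⊆ G, ∃ Q ⊆ H, ∃ F ⊆ G,
      F = (T.biUnion B.down ∩ H).biUnion B.up ∪ T' ∪ Q.biUnion B.up ∧
      H ⊆ B.almostCovered ψ F ∧ (G \ F).card ≤ 2 * t ∧ ψ * Q.card ≤ 2 * t ∧
      (T.card + (T.biUnion B.down \ H).card + T'.card : ℝ) ≤
        p * G.card + p * (B.downDegree * t) + G.card * (1 - p) ^ β := by
  obtain ⟨T, hT, T', hT', hheavy, hsize⟩ := h.exists_seed ht hp hp1 hβ
  set F' := (T.biUnion B.down ∩ H).biUnion B.up ∪ T'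
  have hF'G : F' ⊆ G :=
    union_subset (biUnion_subset.2 fun x hx => h.up_subset x (mem_inter.1 hx).2) hT'
  have hmiss : (G \ F').card ≤ 2 * t := h.card_sdiff_le_of_heavy_subset ht hdown hheavy
  obtain ⟨Q, hQ, hQcard, hQcover⟩ := exists_greedy_cover H B.up (G \ F') hψ
  refine ⟨T, hT, T', hT', Q, hQ, F' ∪ Q.biUnion B.up,
    union_subset hF'G (biUnion_subset.2 fun x hx => h.up_subset x (hQ hx)), rfl,
    fun x hx => mem_filter.2 ⟨h.subset_left hx, ?_⟩,
    (card_le_card (sdiff_subset_sdiff subset_rfl subset_union_left)).trans hmiss,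
    hQcard.trans hmiss, hsize⟩
  refine (card_le_card fun z hz => ?_).trans_lt (hQcover x hx)
  have := h.up_subset x hx (mem_sdiff.1 hz).1
  grind

lemma MapsInto.exists_fingerprint (h : B.MapsInto H G) (ht : G.card ≤ H.card + t) (hψ : 1 ≤ ψ)
    (hψup : 2 * ψ ≤ B.upDegree) (hdown : 1 ≤ B.downDegree) {p : ℝ} (hp : 0 < p) (hp1 : p < 1)
    {β : ℕ} (hβ : ∀ y ∈ B.heavy H G, β ≤ ((B.down y ∩ H).biUnion B.up).card) (R : Finset V) :
    ∃ Φ : Fingerprint V, Φ .root = R ∧ Φ .remainder = ∅ ∧ B.Encodes ψ H G Φ ∧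
      B.IsEconomical ψ t p β G Φ := by
  obtain ⟨T, hT, T', hT', Q, hQ, F, hFG, hF, hHF, hmiss, hQcard, hsize⟩ :=
    h.exists_approximation ht hψ hdown hp hp1 hβ
  obtain ⟨S, hScard, hSnear, hSH, hSout⟩ := h.exists_prune hψ (B.almostCovered ψ F)
  let Φ : Fingerprint V
    | .seed => T
    | .excluded => T.biUnion B.down \ H
    | .uncovered => T'
    | .patch => Q
    | .prune => S
    | .remainder => ∅
    | .root => R
  have happrox : B.approx Φ = F := by
    rw [hF, ← sdiff_sdiff_self_left]
    rfl
  have hright : B.rightContainer ψ Φ ⊆ G := by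
    refine union_subset (happrox ▸ hFG) fun y hy => ?_
    obtain ⟨hyright, hyψ⟩ := mem_filter.1 hy
    rw [leftContainer, happrox] at hyψ
    by_contra hyG
    exact (hSout y (mem_sdiff.2 ⟨hyright, hyG⟩)).not_ge hyψ
  have hleft : H ⊆ B.leftContainer ψ Φ := by
    rw [leftContainer, happrox]
    exact subset_sdiff.2 ⟨hHF, hSH.symm⟩
  have hencodes : B.Encodes ψ H G Φ :=
    ⟨hT, sdiff_subset, hT', hQ, happrox ▸ hSnear, empty_subset _, happrox ▸ hFG, hleft, hright⟩
  have hexcess := h.card_almostCovered_sdiff_le ht hψ hψup hFG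
  refine ⟨Φ, rfl, rfl, hencodes, hsize, hQcard, hScard.trans hexcess, ?_⟩
  have hdegree := hencodes.upDegree_mul_card_leftContainer_le h
  rw [happrox] at hdegree
  have hmiss' := Nat.mul_le_mul_left ψ hmiss
  have hexcess' := Nat.mul_le_mul_left ψ hexcess
  linarith

end BiregularGraph

end Containers

section AlmostDisjointFamilies

open Finset

variable {V W : Type*} [DecidableEq W] {N : V → Finset W} {C : Finset V} {d : ℕ}

lemma sum_card_filter_mem_biUnion (hcard : ∀ x ∈ C, (N x).card = d) :
    ∑ y ∈ C.biUnion N, {x ∈ C | y ∈ N x}.card = d * C.card := by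
  have hdouble := sum_card_bipartiteAbove_eq_sum_card_bipartiteBelow (s := C) (t := C.biUnion N)
    (fun x y => y ∈ N x)
  simp only [bipartiteAbove, bipartiteBelow, filter_mem_eq_inter] at hdouble
  rw [← hdouble, mul_comm]
  refine sum_const_nat fun x hx => ?_
  rw [inter_eq_right.2 (subset_biUnion_of_mem N hx), hcard x hx]

lemma sum_sq_card_filter_mem_biUnion_le (hcard : ∀ x ∈ C, (N x).card = d)
    (hinter : ∀ x ∈ C, ∀ x' ∈ C, x ≠ x' → (N x ∩ N x').card ≤ 1) :
    ∑ y ∈ C.biUnion N, {x ∈ C | y ∈ N x}.card ^ 2 ≤ C.card * (d + C.card) := by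
  have hpairs : ∀ y, {x ∈ C | y ∈ N x}.card ^ 2 =
      ∑ x ∈ C, ∑ x' ∈ C, if y ∈ N x ∩ N x' then 1 else 0 := by
    intro y
    simp only [sq, card_filter, sum_mul_sum, mem_inter, ite_and, ite_mul, one_mul, zero_mul]
  have hrow : ∀ x ∈ C, ∑ x' ∈ C, (N x ∩ N x').card ≤ d + C.card := by
    intro x hx
    calc ∑ x' ∈ C, (N x ∩ N x').card ≤ ∑ x' ∈ C, ((if x' = x then d else 0) + 1) := by
          refine sum_le_sum fun x' hx' => ?_
          split_ifs with heq
          · rw [heq, inter_self, hcard x hx]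
            omega
          · simpa using hinter x hx x' hx' (Ne.symm heq)
      _ = d + C.card := by simp [sum_add_distrib, hx]
  calc ∑ y ∈ C.biUnion N, {x ∈ C | y ∈ N x}.card ^ 2
      = ∑ x ∈ C, ∑ x' ∈ C, ∑ y ∈ C.biUnion N, if y ∈ N x ∩ N x' then 1 else 0 := by
        simp only [hpairs]
        rw [sum_comm]
        exact sum_congr rfl fun x _ => sum_comm
    _ = ∑ x ∈ C, ∑ x' ∈ C, (N x ∩ N x').card := by
        refine sum_congr rfl fun x hx => sum_congr rfl fun x' _ => ?_
        rw [← card_filter, filter_mem_eq_inter,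
          inter_eq_right.2 (inter_subset_left.trans (subset_biUnion_of_mem N hx))]
    _ ≤ C.card * (d + C.card) := by
        rw [← smul_eq_mul]
        exact sum_le_card_nsmul _ _ _ hrow

lemma sq_mul_card_le_card_biUnion_mul (hcard : ∀ x ∈ C, (N x).card = d)
    (hinter : ∀ x ∈ C, ∀ x' ∈ C, x ≠ x' → (N x ∩ N x').card ≤ 1) :
    d ^ 2 * C.card ≤ (C.biUnion N).card * (d + C.card) := by
  have hcauchy := sq_sum_le_card_mul_sum_sq (s := C.biUnion N)
    (f := fun y => {x ∈ C | y ∈ N x}.card)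
  rw [sum_card_filter_mem_biUnion hcard, Nat.cast_id] at hcauchy
  rcases Nat.eq_zero_or_pos C.card with hzero | hpos
  · simp [hzero]
  · refine Nat.le_of_mul_le_mul_left ?_ hpos
    calc C.card * (d ^ 2 * C.card) = (d * C.card) ^ 2 := by ring
      _ ≤ (C.biUnion N).card * (C.card * (d + C.card)) :=
          hcauchy.trans (Nat.mul_le_mul_left _ (sum_sq_card_filter_mem_biUnion_le hcard hinter))
      _ = C.card * ((C.biUnion N).card * (d + C.card)) := by ring

lemma card_mul_pred_le_card_biUnion (hcard : ∀ x ∈ C, (N x).card = d)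
    (hinter : ∀ x ∈ C, ∀ x' ∈ C, x ≠ x' → (N x ∩ N x').card ≤ 1) {y : W}
    (hy : ∀ x ∈ C, y ∈ N x) : C.card * (d - 1) ≤ (C.biUnion N).card := by
  have hdisj : (C : Set V).PairwiseDisjoint fun x => (N x).erase y := by
    intro x hx x' hx' hne
    refine disjoint_left.2 fun z hz hz' => (mem_erase.1 hz).1 ?_
    exact card_le_one.1 (hinter x hx x' hx' hne) z
      (mem_inter.2 ⟨(mem_erase.1 hz).2, (mem_erase.1 hz').2⟩) y (mem_inter.2 ⟨hy x hx, hy x' hx'⟩)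
  calc C.card * (d - 1) = ∑ x ∈ C, ((N x).erase y).card := by
        refine (sum_const_nat fun x hx => ?_).symm
        rw [card_erase_of_mem (hy x hx), hcard x hx]
    _ = (C.biUnion fun x => (N x).erase y).card := (card_biUnion hdisj).symm
    _ ≤ (C.biUnion N).card := card_le_card (biUnion_mono fun x _ => erase_subset _ _)

end AlmostDisjointFamilies

section Levels

open Finset
open scoped FinsetFamily

variable {n j : ℕ} {x y : Finset (Fin n)} {C : Finset (Finset (Fin n))}

/-- The `j`-element subsets of `Fin n`. -/
def level (n j : ℕ) : Finset (Finset (Fin n)) := powersetCard j univ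

/-- The sets obtained from `x` by adding one element. -/
def upperCovers (x : Finset (Fin n)) : Finset (Finset (Fin n)) :=
  {y | x ⊆ y ∧ y.card = x.card + 1}

/-- The sets obtained from `y` by deleting one element. -/
def lowerCovers (y : Finset (Fin n)) : Finset (Finset (Fin n)) :=
  {x | x ⊆ y ∧ y.card = x.card + 1}

lemma mem_level : x ∈ level n j ↔ x.card = j := by
  simp [level, mem_powersetCard]

lemma mem_upperCovers : y ∈ upperCovers x ↔ x ⊆ y ∧ y.card = x.card + 1 := by
  simp [upperCovers]

lemma mem_lowerCovers : x ∈ lowerCovers y ↔ x ⊆ y ∧ y.card = x.card + 1 := by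
  simp [lowerCovers]

lemma mem_lowerCovers_iff_mem_upperCovers : x ∈ lowerCovers y ↔ y ∈ upperCovers x :=
  mem_lowerCovers.trans mem_upperCovers.symm

lemma subset_and_card_eq_succ_iff_covBy : (x ⊆ y ∧ y.card = x.card + 1) ↔ x ⋖ y := by
  rw [covBy_iff_card_sdiff_eq_one]
  refine and_congr_right fun hxy => ?_
  have := card_le_card hxy
  rw [card_sdiff_of_subset hxy]
  omega

lemma upperCovers_eq_image (x : Finset (Fin n)) : upperCovers x = xᶜ.image (insert · x) := by
  ext y
  rw [mem_upperCovers, subset_and_card_eq_succ_iff_covBy, covBy_iff_exists_insert]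
  simp

lemma lowerCovers_eq_image (y : Finset (Fin n)) : lowerCovers y = y.image y.erase := by
  ext x
  rw [mem_lowerCovers, subset_and_card_eq_succ_iff_covBy, covBy_iff_exists_erase]
  simp

lemma card_upperCovers (x : Finset (Fin n)) : (upperCovers x).card = n - x.card := by
  rw [upperCovers_eq_image, card_image_of_injOn, card_compl, Fintype.card_fin]
  exact fun a ha b _ hab => (insert_inj (by simpa using ha)).1 hab

lemma card_lowerCovers (y : Finset (Fin n)) : (lowerCovers y).card = y.card := by
  rw [lowerCovers_eq_image, card_image_of_injOn y.erase_injOn]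

lemma hamming_le_one_of_mem_upperCovers (h : y ∈ upperCovers x) : hamming x y ≤ 1 := by
  obtain ⟨hxy, hcard⟩ := mem_upperCovers.1 h
  rw [hamming, symmDiff_of_le hxy, card_sdiff_of_subset hxy]
  omega

lemma hamming_le_two_of_mem_upperCovers {x' : Finset (Fin n)} (h : y ∈ upperCovers x)
    (h' : y ∈ upperCovers x') : hamming x x' ≤ 2 := by
  have hx := hamming_le_one_of_mem_upperCovers h
  have hx' := hamming_le_one_of_mem_upperCovers h'
  have htri := hamming_triangle x y x'
  rw [hamming_comm y x'] at htri
  omega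

lemma card_upperCovers_inter_le_one {x' : Finset (Fin n)} (hne : x ≠ x')
    (hcard : x.card = x'.card) : (upperCovers x ∩ upperCovers x').card ≤ 1 := by
  have hunion : ∀ a ∈ upperCovers x ∩ upperCovers x', a = x ∪ x' := by
    intro a ha
    simp only [mem_inter, mem_upperCovers] at ha
    obtain ⟨⟨hxa, ha⟩, hx'a, -⟩ := ha
    have hlt : x.card < (x ∪ x').card := by
      refine card_lt_card (subset_union_left.ssubset_of_ne fun heq => hne ?_)
      exact (eq_of_subset_of_card_le (heq ▸ subset_union_right) hcard.le).symm
    exact (eq_of_subset_of_card_le (union_subset hxa hx'a) (by omega)).symm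
  exact card_le_one.2 fun a ha b hb => (hunion a ha).trans (hunion b hb).symm

lemma upShadow_eq_biUnion (C : Finset (Finset (Fin n))) : ∂⁺ C = C.biUnion upperCovers := by
  ext y
  simp only [mem_upShadow_iff, mem_biUnion, upperCovers_eq_image, mem_image, mem_compl]

lemma mem_upShadow_iff_exists_mem_upperCovers : y ∈ ∂⁺ C ↔ ∃ x ∈ C, y ∈ upperCovers x := by
  rw [upShadow_eq_biUnion, mem_biUnion]

lemma upperCovers_subset_upShadow (hx : x ∈ C) : upperCovers x ⊆ ∂⁺ C :=
  fun _ hy => mem_upShadow_iff_exists_mem_upperCovers.2 ⟨x, hx, hy⟩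

lemma upShadow_subset_level (hC : C ⊆ level n j) : ∂⁺ C ⊆ level n (j + 1) := by
  intro y hy
  obtain ⟨x, hx, hxy⟩ := mem_upShadow_iff_exists_mem_upperCovers.1 hy
  rw [mem_level, (mem_upperCovers.1 hxy).2, mem_level.1 (hC hx)]

/-- The Hasse diagram between two consecutive levels below the middle. -/
def levelGraph (n j : ℕ) (h : 2 * j + 1 ≤ n) : BiregularGraph (Finset (Fin n)) where
  left := level n j
  right := level n (j + 1)
  up := upperCovers
  down := lowerCovers
  upDegree := n - j
  downDegree := j + 1
  up_subset x hx y hy := by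
    rw [mem_level] at *
    rw [(mem_upperCovers.1 hy).2, hx]
  down_subset y hy x hx := by
    rw [mem_level] at *
    have := (mem_lowerCovers.1 hx).2
    omega
  mem_up_iff_mem_down _ _ _ _ := mem_lowerCovers_iff_mem_upperCovers.symm
  card_up x hx := by rw [card_upperCovers, mem_level.1 hx]
  card_down y hy := by rw [card_lowerCovers, mem_level.1 hy]
  downDegree_le_upDegree := by omega

lemma levelGraph_mapsInto_upShadow (h : 2 * j + 1 ≤ n) (hC : C ⊆ level n j) :
    (levelGraph n j h).MapsInto C (∂⁺ C) :=
  ⟨hC, upShadow_subset_level hC, fun _ hx => upperCovers_subset_upShadow hx⟩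

lemma mul_card_le_mul_card_upShadow (h : 2 * j + 1 ≤ n) (hC : C ⊆ level n j) :
    (n - j) * C.card ≤ (j + 1) * (∂⁺ C).card :=
  (levelGraph_mapsInto_upShadow h hC).upDegree_mul_card_le

lemma card_upperCovers_of_subset_level (hC : C ⊆ level n j) :
    ∀ x ∈ C, (upperCovers x).card = n - j :=
  fun x hx => by rw [card_upperCovers, mem_level.1 (hC hx)]

lemma card_upperCovers_inter_le_one_of_subset_level (hC : C ⊆ level n j) :
    ∀ x ∈ C, ∀ x' ∈ C, x ≠ x' → (upperCovers x ∩ upperCovers x').card ≤ 1 :=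
  fun _ hx _ hx' hne => card_upperCovers_inter_le_one hne
    ((mem_level.1 (hC hx)).trans (mem_level.1 (hC hx')).symm)

lemma sq_mul_card_le_card_upShadow_mul (hC : C ⊆ level n j) :
    (n - j) ^ 2 * C.card ≤ (∂⁺ C).card * (n - j + C.card) := by
  rw [upShadow_eq_biUnion]
  exact sq_mul_card_le_card_biUnion_mul (card_upperCovers_of_subset_level hC)
    (card_upperCovers_inter_le_one_of_subset_level hC)

lemma card_mul_le_card_upShadow_of_subset_lowerCovers (hy : y.card = j + 1)
    (hC : C ⊆ lowerCovers y) : C.card * (n - j - 1) ≤ (∂⁺ C).card := by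
  have hlevel : C ⊆ level n j := fun x hx => by
    have := (mem_lowerCovers.1 (hC hx)).2
    rw [mem_level]
    omega
  rw [upShadow_eq_biUnion]
  exact card_mul_pred_le_card_biUnion (card_upperCovers_of_subset_level hlevel)
    (card_upperCovers_inter_le_one_of_subset_level hlevel)
    fun x hx => mem_lowerCovers_iff_mem_upperCovers.1 (hC hx)

lemma choose_three_le_card_upShadow (hj : 2 ≤ j) (hjn : j + 1 ≤ n) (hC : C ⊆ level n j)
    (hcard : (n - j + 2).choose 2 ≤ C.card) : (n - j + 2).choose 3 ≤ (∂⁺ C).card := by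
  have hsized : (C.compls : Set (Finset (Fin n))).Sized (n - j) := by
    intro x hx
    have hlevel := mem_level.1 (hC (mem_compls.1 (mod_cast hx)))
    have hle : x.card ≤ n := by simpa using card_le_univ x
    rw [card_compl, Fintype.card_fin] at hlevel
    omega
  have hkk := kruskal_katona_lovasz_form (i := 1) (r := n - j) (k := n - j + 2)
    (by omega) (by omega) (by omega) hsized (by
      rw [card_compls, Nat.choose_symm_of_eq_add rfl]
      exact hcard)
  rw [Function.iterate_one, shadow_compls, card_compls] at hkk
  rwa [Nat.choose_symm_of_eq_add (by omega : n - j + 2 = n - j - 1 + 3)] at hkk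

lemma card_upShadow_le_mul_of_card_eq_add (hjn : 2 * j + 1 < n) (hC : C ⊆ level n j) {t : ℕ}
    (ht : (∂⁺ C).card = C.card + t) : (∂⁺ C).card ≤ (n - j) * t := by
  have hedges := mul_card_le_mul_card_upShadow (by omega) hC
  have hgap : (n - j) * C.card + (∂⁺ C).card ≤ (n - j) * (∂⁺ C).card :=
    calc (n - j) * C.card + (∂⁺ C).card ≤ (j + 2) * (∂⁺ C).card := by linarith
      _ ≤ (n - j) * (∂⁺ C).card := Nat.mul_le_mul_right _ (by omega)
  rw [ht, mul_add] at hgap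
  omega

lemma card_le_three_mul_of_card_lt_choose_two (hjn : 20 ≤ n - j) (hC : C ⊆ level n j)
    (hcard : C.card < (n - j + 2).choose 2) {t : ℕ} (ht : (∂⁺ C).card = C.card + t) :
    C.card ≤ 3 * t := by
  set d := n - j
  have hcauchy := sq_mul_card_le_card_upShadow_mul hC
  have hlt : 2 * C.card < (d + 2) * (d + 1) := by
    rw [Nat.choose_two_right, Nat.add_succ_sub_one] at hcard
    have := Nat.div_mul_le_self ((d + 2) * (d + 1)) 2
    omega
  have hquad : 4 * (d + C.card) ≤ 3 * d ^ 2 := by nlinarith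
  have hexpand : 4 * C.card ≤ 3 * (∂⁺ C).card := by
    refine Nat.le_of_mul_le_mul_left ?_ (by positivity : 0 < d ^ 2)
    calc d ^ 2 * (4 * C.card) = 4 * (d ^ 2 * C.card) := by ring
      _ ≤ 4 * ((∂⁺ C).card * (d + C.card)) := Nat.mul_le_mul_left _ hcauchy
      _ = (∂⁺ C).card * (4 * (d + C.card)) := by ring
      _ ≤ (∂⁺ C).card * (3 * d ^ 2) := Nat.mul_le_mul_left _ hquad
      _ = d ^ 2 * (3 * (∂⁺ C).card) := by ring
  omega

lemma sq_le_twelve_mul_of_choose_two_le_card (hj : 2 ≤ j) (hjn : 2 * j + 1 < n)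
    (hC : C ⊆ level n j) (hcard : (n - j + 2).choose 2 ≤ C.card) {t : ℕ}
    (ht : (∂⁺ C).card = C.card + t) : (n - j) ^ 2 ≤ 12 * t := by
  have hshadow := card_upShadow_le_mul_of_card_eq_add hjn hC ht
  have hkk := choose_three_le_card_upShadow hj (by omega) hC hcard
  set d := n - j
  by_cases hlarge : 12 * C.card ≤ d ^ 3
  · have hchoose : 6 * (d + 2).choose 3 = (d + 2) * (d + 1) * d := by
      have := Nat.descFactorial_eq_factorial_mul_choose (d + 2) 3
      simp only [Nat.descFactorial, Nat.factorial, Nat.add_sub_cancel, Nat.sub_zero,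
        (by omega : d + 2 - 1 = d + 1), Nat.succ_eq_add_one] at this
      linarith
    have hcube : d ^ 3 ≤ 6 * (∂⁺ C).card := by nlinarith
    exact (Nat.pow_le_pow_right (by omega) (by omega : 2 ≤ 3)).trans (by omega : d ^ 3 ≤ 12 * t)
  · refine Nat.le_of_mul_le_mul_left ?_ (by omega : 0 < d)
    linarith [pow_succ' d 2]

lemma sq_le_mul_of_card_upShadow_eq_add (hj : 2 ≤ j) (hjn : 2 * j + 1 < n) (hd : 20 ≤ n - j)
    (hC : C ⊆ level n j) {r : ℕ} (hr : 1 ≤ r) (hcard : (n - j) ^ 2 ≤ 2 * r * C.card) {t : ℕ}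
    (ht : (∂⁺ C).card = C.card + t) : (n - j) ^ 2 ≤ 12 * r * t := by
  rcases Nat.lt_or_ge C.card ((n - j + 2).choose 2) with hsmall | hlarge
  · calc (n - j) ^ 2 ≤ 2 * r * C.card := hcard
      _ ≤ 2 * r * (3 * t) :=
          Nat.mul_le_mul_left _ (card_le_three_mul_of_card_lt_choose_two hd hC hsmall ht)
      _ ≤ 12 * r * t := by nlinarith [Nat.zero_le (r * t)]
  · refine (sq_le_twelve_mul_of_choose_two_le_card hj hjn hC hlarge ht).trans ?_
    exact Nat.mul_le_mul_right _ (by omega)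

end Levels

section TruncatedUpsets

open scoped FinsetFamily

variable {n j : ℕ}

/-- Up-sets of the part of the Boolean lattice made of the sets of size at most `j`. The sets of
size at most `j` missing from a simplicial complex form such a family. -/
structure IsTruncatedUpset (j : ℕ) (U : Finset (Finset (Fin n))) : Prop where
  card_le : ∀ u ∈ U, u.card ≤ j
  mem_of_subset : ∀ u ∈ U, ∀ v : Finset (Fin n), u ⊆ v → v.card ≤ j → v ∈ U

/-- The members of size `j`, the largest possible size in a truncated up-set. -/
def topLayer (j : ℕ) (U : Finset (Finset (Fin n))) : Finset (Finset (Fin n)) :=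
  U.filter fun u => u.card = j

/-- The Peierls weight: all sets of the upper shadow of the top layer are forced, so that
truncated up-sets of height `j + 1` extending `U` lose a factor `2` for each of them. -/
def upsetWeight (j : ℕ) (U : Finset (Finset (Fin n))) : ℝ := (1 / 2) ^ (∂⁺ (topLayer j U)).card

/-- The truncated up-sets whose top layer is contained in `A`. -/
def upsetsOver (n j : ℕ) (A : Finset (Finset (Fin n))) : Finset (Finset (Finset (Fin n))) :=
  Finset.univ.filter fun U => IsTruncatedUpset j U ∧ topLayer j U ⊆ A

/-- The partition function of the truncated up-sets over `A`. -/
def partitionSum (n j : ℕ) (A : Finset (Finset (Fin n))) : ℝ :=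
  ∑ U ∈ upsetsOver n j A, upsetWeight j U

/-- The truncated up-sets whose top layer is `2`-linked and contains `x`: the polymers of the
cluster expansion. -/
def clusters (n j : ℕ) (x : Finset (Fin n)) : Finset (Finset (Finset (Fin n))) :=
  Finset.univ.filter fun U =>
    IsTruncatedUpset j U ∧ Linked HammingTwo (topLayer j U) ∧ x ∈ topLayer j U

/-- The total weight of the clusters at `x`. -/
def clusterSum (n j : ℕ) (x : Finset (Fin n)) : ℝ := ∑ U ∈ clusters n j x, upsetWeight j U

lemma mem_topLayer {U : Finset (Finset (Fin n))} {u : Finset (Fin n)} :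
    u ∈ topLayer j U ↔ u ∈ U ∧ u.card = j := Finset.mem_filter

lemma topLayer_subset_level (U : Finset (Finset (Fin n))) : topLayer j U ⊆ level n j :=
  fun _ hu => mem_level.2 (mem_topLayer.1 hu).2

lemma topLayer_sdiff (U K : Finset (Finset (Fin n))) :
    topLayer j (U \ K) = topLayer j U \ topLayer j K := by
  ext u
  simp only [mem_topLayer, Finset.mem_sdiff]
  tauto

lemma upsetWeight_nonneg (j : ℕ) (U : Finset (Finset (Fin n))) : 0 ≤ upsetWeight j U := by
  unfold upsetWeight
  positivity

lemma mem_upsetsOver {A U : Finset (Finset (Fin n))} :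
    U ∈ upsetsOver n j A ↔ IsTruncatedUpset j U ∧ topLayer j U ⊆ A := by simp [upsetsOver]

lemma mem_clusters {U : Finset (Finset (Fin n))} {x : Finset (Fin n)} :
    U ∈ clusters n j x ↔
      IsTruncatedUpset j U ∧ Linked HammingTwo (topLayer j U) ∧ x ∈ topLayer j U := by
  simp [clusters]

lemma exists_superset_card_eq (hj : j ≤ n) {u : Finset (Fin n)} (hu : u.card ≤ j) :
    ∃ x, u ⊆ x ∧ x.card = j := by
  obtain ⟨x, hux, -, hx⟩ := Finset.exists_subsuperset_card_eq (Finset.subset_univ u) hu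
    (by simpa using hj)
  exact ⟨x, hux, hx⟩

lemma card_insert_erase_of_mem {x : Finset (Fin n)} {a b : Fin n} (ha : a ∉ x) (hb : b ∈ x) :
    (insert a (x.erase b)).card = x.card := by
  rw [Finset.card_insert_of_notMem (fun h => ha (Finset.mem_of_mem_erase h)),
    Finset.card_erase_add_one hb]

lemma hammingTwo_insert_erase {x : Finset (Fin n)} {a b : Fin n} (ha : a ∉ x) (hb : b ∈ x) :
    HammingTwo x (insert a (x.erase b)) := by
  refine hamming_le_two_of_mem_upperCovers (y := insert a x) ?_ ?_
  · exact mem_upperCovers.2 ⟨Finset.subset_insert _ _, Finset.card_insert_of_notMem ha⟩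
  · refine mem_upperCovers.2 ⟨Finset.insert_subset_insert _ (Finset.erase_subset _ _), ?_⟩
    rw [card_insert_erase_of_mem ha hb, Finset.card_insert_of_notMem ha]

/-- A part of the top layer closed under `2`-links contains either all or none of the `j`-sets
above a given member: exchange the elements of one `j`-set for those of another one by one. -/
lemma IsTruncatedUpset.mem_of_closed {U C : Finset (Finset (Fin n))} (hU : IsTruncatedUpset j U)
    (hC : ∀ u ∈ C, ∀ v ∈ topLayer j U, HammingTwo u v → v ∈ C) {u : Finset (Fin n)} (hu : u ∈ U)
    {x x' : Finset (Fin n)} (hux : u ⊆ x) (hux' : u ⊆ x') (hx : x.card = j) (hx' : x'.card = j)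
    (hxC : x ∈ C) : x' ∈ C := by
  induction hl : (x' \ x).card generalizing x with
  | zero =>
    have hsub : x' ⊆ x := Finset.sdiff_eq_empty_iff_subset.1 (Finset.card_eq_zero.1 hl)
    rwa [Finset.eq_of_subset_of_card_le hsub (by omega)]
  | succ l ih =>
    obtain ⟨a, ha⟩ : (x' \ x).Nonempty := Finset.card_pos.1 (by omega)
    obtain ⟨b, hb⟩ : (x \ x').Nonempty := by
      rw [← Finset.card_pos, Finset.card_sdiff_comm (by omega)]
      omega
    rw [Finset.mem_sdiff] at ha hb
    have hcard := (card_insert_erase_of_mem ha.2 hb.1).trans hx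
    have huy : u ⊆ insert a (x.erase b) := by grind
    refine ih huy hcard ?_ ?_
    · exact hC x hxC _ (mem_topLayer.2 ⟨hU.mem_of_subset u hu _ huy hcard.le, hcard⟩)
        (hammingTwo_insert_erase ha.2 hb.1)
    · have hsdiff : x' \ insert a (x.erase b) = (x' \ x).erase a := by
        clear ih hl hcard hx hx'
        grind
      rw [hsdiff, Finset.card_erase_of_mem (Finset.mem_sdiff.2 ha), hl, Nat.add_sub_cancel]

/-- `K` is the connected component of the truncated up-set `U` at the set `x` of size `j`. -/
structure IsClusterAt (j : ℕ) (x : Finset (Fin n)) (K U : Finset (Finset (Fin n))) : Prop where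
  subset : K ⊆ U
  mem_clusters : K ∈ clusters n j x
  isTruncatedUpset_sdiff : IsTruncatedUpset j (U \ K)
  closed : ∀ u ∈ topLayer j K, ∀ v ∈ topLayer j U, HammingTwo u v → v ∈ topLayer j K

lemma topLayer_filter_exists_subset {U C : Finset (Finset (Fin n))} (hC : C ⊆ topLayer j U) :
    topLayer j (U.filter fun u => ∃ c ∈ C, u ⊆ c) = C := by
  ext c
  simp only [mem_topLayer, Finset.mem_filter]
  constructor
  · rintro ⟨⟨-, c', hc', hcc'⟩, hc⟩
    rwa [Finset.eq_of_subset_of_card_le hcc' (by rw [(mem_topLayer.1 (hC hc')).2, hc])]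
  · intro hc
    obtain ⟨hcU, hcard⟩ := mem_topLayer.1 (hC hc)
    exact ⟨⟨hcU, c, hc, subset_rfl⟩, hcard⟩

lemma IsTruncatedUpset.exists_isClusterAt (hj : j ≤ n) {U : Finset (Finset (Fin n))}
    (hU : IsTruncatedUpset j U) {x : Finset (Fin n)} (hx : x ∈ topLayer j U) :
    ∃ K, IsClusterAt j x K U := by
  obtain ⟨C, hCU, hxC, hlink, hclosed⟩ :=
    exists_linked_component (fun _ _ => HammingTwo.symm) (topLayer j U) hx
  have htop := topLayer_filter_exists_subset hCU
  have hK : IsTruncatedUpset j (U.filter fun u => ∃ c ∈ C, u ⊆ c) := by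
    refine ⟨fun u hu => hU.card_le u (Finset.mem_filter.1 hu).1, fun u hu v huv hv => ?_⟩
    obtain ⟨huU, c, hc, huc⟩ := Finset.mem_filter.1 hu
    obtain ⟨x', hvx', hx'⟩ := exists_superset_card_eq hj hv
    exact Finset.mem_filter.2 ⟨hU.mem_of_subset u huU v huv hv, x', hU.mem_of_closed hclosed huU huc
      (huv.trans hvx') (mem_topLayer.1 (hCU hc)).2 hx' hc, hvx'⟩
  refine ⟨U.filter fun u => ∃ c ∈ C, u ⊆ c, Finset.filter_subset _ _, ?_, ?_, by rwa [htop]⟩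
  · rw [_root_.mem_clusters, htop]
    exact ⟨hK, hlink, hxC⟩
  · refine ⟨fun u hu => hU.card_le u (Finset.mem_sdiff.1 hu).1, fun u hu v huv hv => ?_⟩
    obtain ⟨huU, huK⟩ := Finset.mem_sdiff.1 hu
    refine Finset.mem_sdiff.2 ⟨hU.mem_of_subset u huU v huv hv, fun hvK => huK ?_⟩
    obtain ⟨-, c, hc, hvc⟩ := Finset.mem_filter.1 hvK
    exact Finset.mem_filter.2 ⟨huU, c, hc, huv.trans hvc⟩

namespace IsClusterAt

variable {x : Finset (Fin n)} {K U : Finset (Finset (Fin n))}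

lemma disjoint_upShadow (h : IsClusterAt j x K U) :
    Disjoint (∂⁺ (topLayer j K)) (∂⁺ (topLayer j (U \ K))) := by
  rw [topLayer_sdiff, Finset.disjoint_left]
  intro y hy hy'
  obtain ⟨c, hc, hyc⟩ := mem_upShadow_iff_exists_mem_upperCovers.1 hy
  obtain ⟨c', hc', hyc'⟩ := mem_upShadow_iff_exists_mem_upperCovers.1 hy'
  obtain ⟨hc'U, hc'K⟩ := Finset.mem_sdiff.1 hc'
  exact hc'K (h.closed c hc c' hc'U (hamming_le_two_of_mem_upperCovers hyc hyc'))

lemma upsetWeight_eq_mul (h : IsClusterAt j x K U) :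
    upsetWeight j U = upsetWeight j K * upsetWeight j (U \ K) := by
  have htop : topLayer j K ⊆ topLayer j U := Finset.filter_subset_filter _ h.subset
  have hshadow : ∂⁺ (topLayer j U) = ∂⁺ (topLayer j K) ∪ ∂⁺ (topLayer j (U \ K)) := by
    rw [topLayer_sdiff]
    simp only [upShadow_eq_biUnion]
    rw [← Finset.union_biUnion, Finset.union_sdiff_of_subset htop]
  rw [upsetWeight, upsetWeight, upsetWeight, ← pow_add, hshadow,
    Finset.card_union_of_disjoint h.disjoint_upShadow]

lemma sdiff_mem_upsetsOver (h : IsClusterAt j x K U) {A : Finset (Finset (Fin n))}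
    (hU : topLayer j U ⊆ A) : U \ K ∈ upsetsOver n j (A.erase x \ topLayer j K) := by
  have hx := (_root_.mem_clusters.1 h.mem_clusters).2.2
  refine mem_upsetsOver.2 ⟨h.isTruncatedUpset_sdiff, ?_⟩
  rw [topLayer_sdiff]
  grind

end IsClusterAt

lemma sum_upsetWeight_filter_isClusterAt_le (A : Finset (Finset (Fin n))) (x : Finset (Fin n))
    (K : Finset (Finset (Fin n))) :
    ∑ U ∈ (upsetsOver n j A).filter (IsClusterAt j x K), upsetWeight j U ≤
      upsetWeight j K * partitionSum n j (A.erase x \ topLayer j K) := by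
  have hmem {U} (hU : U ∈ (upsetsOver n j A).filter (IsClusterAt j x K)) :
      IsClusterAt j x K U := (Finset.mem_filter.1 hU).2
  have hinj : Set.InjOn (· \ K) ((upsetsOver n j A).filter (IsClusterAt j x K) : Set _) := by
    intro U hU U' hU' (hsdiff : U \ K = U' \ K)
    rw [← Finset.sdiff_union_of_subset (hmem hU).subset, hsdiff,
      Finset.sdiff_union_of_subset (hmem hU').subset]
  rw [Finset.sum_congr rfl fun U hU => (hmem hU).upsetWeight_eq_mul, ← Finset.mul_sum,
    ← Finset.sum_image (f := upsetWeight j) hinj]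
  refine mul_le_mul_of_nonneg_left ?_ (upsetWeight_nonneg j K)
  refine Finset.sum_le_sum_of_subset_of_nonneg ?_ fun U _ _ => upsetWeight_nonneg j U
  exact Finset.image_subset_iff.2 fun U hU => (hmem hU).sdiff_mem_upsetsOver
    (mem_upsetsOver.1 (Finset.mem_filter.1 hU).1).2

lemma partitionSum_le_add_sum_clusters (hj : j ≤ n) (A : Finset (Finset (Fin n)))
    (x : Finset (Fin n)) :
    partitionSum n j A ≤ partitionSum n j (A.erase x) +
      ∑ K ∈ clusters n j x, upsetWeight j K * partitionSum n j (A.erase x \ topLayer j K) := by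
  rw [partitionSum, ← Finset.sum_filter_add_sum_filter_not _ (fun U => x ∉ topLayer j U)]
  refine add_le_add ?_ ?_
  · refine Finset.sum_le_sum_of_subset_of_nonneg ?_ fun U _ _ => upsetWeight_nonneg j U
    intro U hU
    obtain ⟨hUA, hxU⟩ := Finset.mem_filter.1 hU
    obtain ⟨hupset, htop⟩ := mem_upsetsOver.1 hUA
    exact mem_upsetsOver.2 ⟨hupset, Finset.subset_erase.2 ⟨htop, hxU⟩⟩
  · refine le_trans ?_ (Finset.sum_le_sum fun K _ => sum_upsetWeight_filter_isClusterAt_le A x K)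
    simp only [Finset.sum_filter (s := upsetsOver n j A)]
    rw [Finset.sum_comm]
    refine Finset.sum_le_sum fun U hU => ?_
    have hnonneg : ∀ K ∈ clusters n j x, 0 ≤ if IsClusterAt j x K U then upsetWeight j U else 0 :=
      fun K _ => ite_nonneg (upsetWeight_nonneg j U) le_rfl
    split_ifs with hx
    · exact Finset.sum_nonneg hnonneg
    · obtain ⟨K, hK⟩ := (mem_upsetsOver.1 hU).1.exists_isClusterAt hj (not_not.1 hx)
      simpa only [if_pos hK] using Finset.single_le_sum hnonneg hK.mem_clusters

lemma partitionSum_empty_le_one (hj : j ≤ n) : partitionSum n j ∅ ≤ 1 := by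
  have hsub : upsetsOver n j ∅ ⊆ {∅} := by
    intro U hU
    obtain ⟨hupset, htop⟩ := mem_upsetsOver.1 hU
    rw [Finset.mem_singleton, Finset.eq_empty_iff_forall_notMem]
    intro u hu
    obtain ⟨x, hux, hx⟩ := exists_superset_card_eq hj (hupset.card_le u hu)
    exact Finset.notMem_empty x
      (htop (mem_topLayer.2 ⟨hupset.mem_of_subset u hu x hux hx.le, hx⟩))
  refine (Finset.sum_le_sum_of_subset_of_nonneg hsub fun U _ _ => upsetWeight_nonneg j U).trans ?_
  simp [upsetWeight, topLayer]

lemma partitionSum_le_pow (hj : j ≤ n) {σ : ℝ} (hσ₀ : 0 ≤ σ) (hσ : ∀ x, clusterSum n j x ≤ σ)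
    {m : ℕ} {A : Finset (Finset (Fin n))} (hA : A.card ≤ m) :
    partitionSum n j A ≤ (1 + σ) ^ m := by
  induction m generalizing A with
  | zero => simpa [Finset.card_eq_zero.1 (Nat.le_zero.1 hA)] using partitionSum_empty_le_one hj
  | succ m ih =>
    rcases A.eq_empty_or_nonempty with rfl | ⟨x, hx⟩
    · exact (ih (by simp)).trans (pow_le_pow_right₀ (by linarith) (by omega))
    · have herase : (A.erase x).card ≤ m := by
        rw [Finset.card_erase_of_mem hx]
        omega
      calc partitionSum n j A
          ≤ partitionSum n j (A.erase x) + ∑ K ∈ clusters n j x,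
              upsetWeight j K * partitionSum n j (A.erase x \ topLayer j K) :=
            partitionSum_le_add_sum_clusters hj A x
        _ ≤ (1 + σ) ^ m + ∑ K ∈ clusters n j x, upsetWeight j K * (1 + σ) ^ m := by
            refine add_le_add (ih herase) (Finset.sum_le_sum fun K _ => ?_)
            exact mul_le_mul_of_nonneg_left
              (ih ((Finset.card_le_card Finset.sdiff_subset).trans herase)) (upsetWeight_nonneg j K)
        _ = (1 + σ) ^ m + clusterSum n j x * (1 + σ) ^ m := by rw [← Finset.sum_mul, clusterSum]
        _ ≤ (1 + σ) ^ m + σ * (1 + σ) ^ m := by gcongr; exact hσ x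
        _ = (1 + σ) ^ (m + 1) := by ring

lemma IsTruncatedUpset.filter_card_le {U : Finset (Finset (Fin n))}
    (hU : IsTruncatedUpset (j + 1) U) : IsTruncatedUpset j (U.filter fun u => u.card ≤ j) :=
  ⟨fun _ hu => (Finset.mem_filter.1 hu).2, fun u hu v huv hv => Finset.mem_filter.2
    ⟨hU.mem_of_subset u (Finset.mem_filter.1 hu).1 v huv (by omega), hv⟩⟩

lemma IsTruncatedUpset.upShadow_subset_topLayer {U : Finset (Finset (Fin n))}
    (hU : IsTruncatedUpset (j + 1) U) :
    ∂⁺ (topLayer j (U.filter fun u => u.card ≤ j)) ⊆ topLayer (j + 1) U := by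
  intro y hy
  obtain ⟨x, hx, hxy⟩ := mem_upShadow_iff_exists_mem_upperCovers.1 hy
  obtain ⟨hxU, hxj⟩ := mem_topLayer.1 hx
  obtain ⟨hsub, hcard⟩ := mem_upperCovers.1 hxy
  exact mem_topLayer.2
    ⟨hU.mem_of_subset x (Finset.mem_filter.1 hxU).1 y hsub (by omega), by omega⟩

lemma IsTruncatedUpset.eq_filter_union_topLayer {U : Finset (Finset (Fin n))}
    (hU : IsTruncatedUpset (j + 1) U) :
    U = (U.filter fun u => u.card ≤ j) ∪ topLayer (j + 1) U := by
  ext u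
  simp only [Finset.mem_union, Finset.mem_filter, mem_topLayer]
  have := hU.card_le u
  grind

lemma card_upsetsOver_succ_le_card_sigma (A : Finset (Finset (Fin n))) :
    (upsetsOver n (j + 1) A).card ≤
      ((upsetsOver n j ((level n j).filter fun w => upperCovers w ⊆ A)).sigma
        fun U => (A \ ∂⁺ (topLayer j U)).powerset).card := by
  refine Finset.card_le_card_of_injOn (fun U => ⟨U.filter fun u => u.card ≤ j,
    topLayer (j + 1) U \ ∂⁺ (topLayer j (U.filter fun u => u.card ≤ j))⟩) ?_ ?_
  · intro U hU
    obtain ⟨hupset, htop⟩ := mem_upsetsOver.1 hU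
    refine Finset.mem_sigma.2 ⟨mem_upsetsOver.2 ⟨hupset.filter_card_le, fun w hw => ?_⟩,
      Finset.mem_powerset.2 (Finset.sdiff_subset_sdiff htop subset_rfl)⟩
    exact Finset.mem_filter.2 ⟨topLayer_subset_level _ hw,
      (upperCovers_subset_upShadow hw).trans (hupset.upShadow_subset_topLayer.trans htop)⟩
  · intro U hU U' hU' heq
    have hupset := (mem_upsetsOver.1 hU).1
    have hupset' := (mem_upsetsOver.1 hU').1
    have hlow : (U.filter fun u => u.card ≤ j) = U'.filter fun u => u.card ≤ j :=
      congrArg Sigma.fst heq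
    have hsdiff : topLayer (j + 1) U \ ∂⁺ (topLayer j (U.filter fun u => u.card ≤ j)) =
        topLayer (j + 1) U' \ ∂⁺ (topLayer j (U'.filter fun u => u.card ≤ j)) :=
      congrArg Sigma.snd heq
    have htop : topLayer (j + 1) U = topLayer (j + 1) U' := by
      rw [← Finset.sdiff_union_of_subset hupset.upShadow_subset_topLayer, hsdiff, hlow,
        Finset.sdiff_union_of_subset hupset'.upShadow_subset_topLayer]
    rw [hupset.eq_filter_union_topLayer, hupset'.eq_filter_union_topLayer, hlow, htop]

lemma card_upsetsOver_succ_le_two_pow_mul_partitionSum (A : Finset (Finset (Fin n))) :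
    ((upsetsOver n (j + 1) A).card : ℝ) ≤
      2 ^ A.card * partitionSum n j ((level n j).filter fun w => upperCovers w ⊆ A) := by
  refine (Nat.cast_le.2 (card_upsetsOver_succ_le_card_sigma A)).trans_eq ?_
  rw [Finset.card_sigma, Nat.cast_sum, partitionSum, Finset.mul_sum]
  refine Finset.sum_congr rfl fun U hU => ?_
  have hshadow : ∂⁺ (topLayer j U) ⊆ A := by
    intro y hy
    obtain ⟨x, hx, hxy⟩ := mem_upShadow_iff_exists_mem_upperCovers.1 hy
    exact (Finset.mem_filter.1 ((mem_upsetsOver.1 hU).2 hx)).2 hxy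
  rw [Finset.card_powerset, Finset.card_sdiff_of_subset hshadow, upsetWeight, one_div, inv_pow,
    ← div_eq_mul_inv, Nat.cast_pow, Nat.cast_two,
    pow_sub₀ _ two_ne_zero (Finset.card_le_card hshadow), div_eq_mul_inv]

lemma card_upsetsOver_zero_le (A : Finset (Finset (Fin n))) :
    (upsetsOver n 0 A).card ≤ 2 ^ A.card := by
  rw [← Finset.card_powerset]
  refine Finset.card_le_card fun U hU => Finset.mem_powerset.2 fun u hu => ?_
  obtain ⟨hupset, htop⟩ := mem_upsetsOver.1 hU
  exact htop (mem_topLayer.2 ⟨hu, Nat.le_zero.1 (hupset.card_le u hu)⟩)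

lemma card_upsetsOver_succ_le_pow (hj : 2 * j + 1 ≤ n) {σ : ℝ} (hσ₀ : 0 ≤ σ)
    (hσ : ∀ x, clusterSum n j x ≤ σ) {A : Finset (Finset (Fin n))} (hA : A ⊆ level n (j + 1)) :
    ((upsetsOver n (j + 1) A).card : ℝ) ≤ (2 * (1 + σ)) ^ A.card := by
  rw [mul_pow]
  refine (card_upsetsOver_succ_le_two_pow_mul_partitionSum A).trans
    (mul_le_mul_of_nonneg_left (partitionSum_le_pow (by omega) hσ₀ hσ ?_) (by positivity))
  have hmaps : (levelGraph n j hj).MapsInto ((level n j).filter fun w => upperCovers w ⊆ A) A :=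
    ⟨Finset.filter_subset _ _, hA, fun x hx => (Finset.mem_filter.1 hx).2⟩
  refine Nat.le_of_mul_le_mul_left (hmaps.upDegree_mul_card_le.trans
    (Nat.mul_le_mul_right _ (levelGraph n j hj).downDegree_le_upDegree)) ?_
  change 0 < n - j
  omega

end TruncatedUpsets

section LevelFingerprints

open scoped FinsetFamily

open BiregularGraph

variable {n j : ℕ} {C : Finset (Finset (Fin n))} {x₀ : Finset (Fin n)}

/-- The largest family of `j`-sets with the same upper shadow as `C`. -/
def shadowClosure (j : ℕ) (C : Finset (Finset (Fin n))) : Finset (Finset (Fin n)) :=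
  (level n j).filter fun x => upperCovers x ⊆ ∂⁺ C

lemma shadowClosure_subset_level : shadowClosure j C ⊆ level n j := Finset.filter_subset _ _

lemma subset_shadowClosure (hC : C ⊆ level n j) : C ⊆ shadowClosure j C :=
  fun _ hc => Finset.mem_filter.2 ⟨hC hc, upperCovers_subset_upShadow hc⟩

lemma upShadow_shadowClosure (hC : C ⊆ level n j) : ∂⁺ (shadowClosure j C) = ∂⁺ C := by
  simp only [upShadow_eq_biUnion]
  refine Finset.Subset.antisymm (Finset.biUnion_subset.2 fun x hx => ?_)
    (Finset.biUnion_subset_biUnion_of_subset_left _ (subset_shadowClosure hC))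
  rw [← upShadow_eq_biUnion]
  exact (Finset.mem_filter.1 hx).2

lemma levelGraph_mapsInto_shadowClosure (h : 2 * j + 1 ≤ n) (hC : C ⊆ level n j) :
    (levelGraph n j h).MapsInto (shadowClosure j C) (∂⁺ C) :=
  ⟨shadowClosure_subset_level, upShadow_subset_level hC, fun _ hx => (Finset.mem_filter.1 hx).2⟩

/-- Fingerprints of at most `s` labelled sets which are `8`-linked and rooted at `x`. They are
few, since their labelled sets form a connected family containing a given element. -/
structure IsRooted (x : Finset (Fin n)) (s : ℕ) (Φ : Fingerprint (Finset (Fin n))) : Prop where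
  linked : Linked (fun u v => hamming u.2 v.2 ≤ 8) (Finset.univ.sigma Φ)
  mem_root : x ∈ Φ .root
  card_le : (Finset.univ.sigma Φ).card ≤ s

lemma card_isRooted_le (x : Finset (Fin n)) (s : ℕ) :
    (Finset.univ.filter (IsRooted x s)).card ≤ (7 * (n + 1) ^ 8) ^ (2 * (s - 1)) := by
  have hinj : Function.Injective fun Φ : Fingerprint (Finset (Fin n)) => Finset.univ.sigma Φ := by
    intro Φ Ψ h
    funext i
    ext u
    simpa using congrArg (⟨i, u⟩ ∈ ·) h
  rw [← Finset.card_image_of_injective _ hinj]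
  refine card_linked_labelled_le 8 s ⟨FingerprintLabel.root, x⟩ _ fun T hT => ?_
  obtain ⟨Φ, hΦ, rfl⟩ := Finset.mem_image.1 hT
  have hΦ' := (Finset.mem_filter.1 hΦ).2
  exact ⟨hΦ'.linked, Finset.mem_sigma.2 ⟨Finset.mem_univ _, hΦ'.mem_root⟩, hΦ'.card_le⟩

/-- `U` lies over a container with at most `w` truncated up-sets over it, which is determined by a
fingerprint of size at most `s` rooted at `x`. -/
def IsCaptured (j s : ℕ) (w : ℝ)
    (container : Fingerprint (Finset (Fin n)) → Finset (Finset (Fin n))) (x : Finset (Fin n))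
    (U : Finset (Finset (Fin n))) : Prop :=
  ∃ Φ, IsRooted x s Φ ∧ ((upsetsOver n j (container Φ)).card : ℝ) ≤ w ∧
    U ∈ upsetsOver n j (container Φ)

lemma card_le_of_forall_isCaptured {x : Finset (Fin n)} {s : ℕ} {w : ℝ} (hw : 0 ≤ w)
    {container : Fingerprint (Finset (Fin n)) → Finset (Finset (Fin n))}
    {F : Finset (Finset (Finset (Fin n)))}
    (hF : ∀ U ∈ F, IsCaptured j s w container x U) :
    (F.card : ℝ) ≤ (7 * (n + 1) ^ 8 : ℝ) ^ (2 * (s - 1)) * w := by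
  let L := (Finset.univ.filter (IsRooted x s)).filter fun Φ =>
    ((upsetsOver n j (container Φ)).card : ℝ) ≤ w
  have hsub : F ⊆ L.biUnion fun Φ => upsetsOver n j (container Φ) := by
    intro U hU
    obtain ⟨Φ, hΦ, hcard, hmem⟩ := hF U hU
    exact Finset.mem_biUnion.2
      ⟨Φ, Finset.mem_filter.2 ⟨Finset.mem_filter.2 ⟨Finset.mem_univ _, hΦ⟩, hcard⟩, hmem⟩
  have hL : (L.card : ℝ) ≤ (7 * (n + 1) ^ 8 : ℝ) ^ (2 * (s - 1)) := mod_cast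
    (Finset.card_le_card (Finset.filter_subset _ _)).trans (card_isRooted_le x s)
  calc (F.card : ℝ) ≤ ∑ Φ ∈ L, ((upsetsOver n j (container Φ)).card : ℝ) := mod_cast
        (Finset.card_le_card hsub).trans Finset.card_biUnion_le
    _ ≤ L.card • w := Finset.sum_le_card_nsmul _ _ _ fun Φ hΦ => (Finset.mem_filter.1 hΦ).2
    _ = L.card * w := nsmul_eq_mul _ _
    _ ≤ _ := mul_le_mul_of_nonneg_right hL hw

lemma card_sigma_fingerprint (Φ : Fingerprint (Finset (Fin n))) :
    (Finset.univ.sigma Φ).card = (Φ .seed).card + (Φ .excluded).card + (Φ .uncovered).card +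
      (Φ .patch).card + (Φ .prune).card + (Φ .remainder).card + (Φ .root).card := by
  rw [Finset.card_sigma]
  change ∑ i ∈ {.seed, .excluded, .uncovered, .patch, .prune, .remainder, .root}, (Φ i).card = _
  simp [add_assoc]

lemma hamming_le_one_of_mem_upperCovers' {x y : Finset (Fin n)} (h : y ∈ upperCovers x) :
    hamming y x ≤ 1 := by
  rw [hamming_comm]
  exact hamming_le_one_of_mem_upperCovers h

lemma exists_hamming_le_one_of_mem_upShadow {y : Finset (Fin n)} (hy : y ∈ ∂⁺ C) :
    ∃ c ∈ C, hamming y c ≤ 1 := by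
  obtain ⟨c, hc, hcy⟩ := mem_upShadow_iff_exists_mem_upperCovers.1 hy
  exact ⟨c, hc, hamming_le_one_of_mem_upperCovers' hcy⟩

section Encodes

variable {h : 2 * j + 1 ≤ n} {ψ : ℕ} {Φ : Fingerprint (Finset (Fin n))}

lemma exists_fingerprint_near_of_mem (hψ : ψ ≤ n - j) (hC : C ⊆ level n j)
    (hΦ : (levelGraph n j h).Encodes ψ (shadowClosure j C) (∂⁺ C) Φ) {c : Finset (Fin n)}
    (hc : c ∈ C) : ∃ τ ∈ Finset.univ.sigma Φ, hamming τ.2 c ≤ 3 := by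
  have hcov : c ∈ (levelGraph n j h).almostCovered ψ ((levelGraph n j h).approx Φ) :=
    (Finset.mem_sdiff.1 (hΦ.subset_leftContainer (subset_shadowClosure hC hc))).1
  obtain ⟨y, hcy, hy⟩ := exists_mem_up_of_mem_almostCovered hψ hcov
  have hyc := hamming_le_one_of_mem_upperCovers' hcy
  simp only [approx, Finset.mem_union, Finset.mem_biUnion, Finset.mem_sdiff] at hy
  rcases hy with (⟨x, ⟨⟨z, hz, hxz⟩, -⟩, hxy⟩ | hy) | ⟨x, hx, hxy⟩
  · refine ⟨⟨.seed, z⟩, by simpa using hz, ?_⟩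
    have hzx := hamming_le_one_of_mem_upperCovers' (mem_lowerCovers_iff_mem_upperCovers.1 hxz)
    have hxy := hamming_le_one_of_mem_upperCovers hxy
    linarith [hamming_triangle z x c, hamming_triangle x y c]
  · exact ⟨⟨.uncovered, y⟩, by simpa using hy, hyc.trans (by norm_num)⟩
  · refine ⟨⟨.patch, x⟩, by simpa using hx, ?_⟩
    have hxy := hamming_le_one_of_mem_upperCovers hxy
    linarith [hamming_triangle x y c]

lemma exists_mem_near_of_mem_fingerprint (hψ : ψ ≤ n - j)
    (hΦ : (levelGraph n j h).Encodes ψ (shadowClosure j C) (∂⁺ C) Φ) (hroot : Φ .root = {x₀})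
    (hx₀ : x₀ ∈ C) : ∀ τ ∈ Finset.univ.sigma Φ, ∃ c ∈ C, hamming τ.2 c ≤ 3 := by
  rintro ⟨i, x⟩ hx
  replace hx : x ∈ Φ i := (Finset.mem_sigma.1 hx).2
  have near_of_path {y : Finset (Fin n)} (hxy : hamming x y ≤ 2) (hy : y ∈ ∂⁺ C) :
      ∃ c ∈ C, hamming x c ≤ 3 := by
    obtain ⟨c, hc, hyc⟩ := exists_hamming_le_one_of_mem_upShadow hy
    exact ⟨c, hc, by linarith [hamming_triangle x y c]⟩
  have near_of_mem (hx : x ∈ ∂⁺ C) : ∃ c ∈ C, hamming x c ≤ 3 :=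
    near_of_path (by simp [hamming_self]) hx
  cases i with
  | seed => exact near_of_mem (hΦ.seed_subset hx)
  | excluded =>
    obtain ⟨y, hy, hxy⟩ := Finset.mem_biUnion.1 (hΦ.excluded_subset hx)
    exact near_of_path ((hamming_le_one_of_mem_upperCovers
      (mem_lowerCovers_iff_mem_upperCovers.1 hxy)).trans (by norm_num)) (hΦ.seed_subset hy)
  | uncovered => exact near_of_mem (hΦ.uncovered_subset hx)
  | patch =>
    obtain ⟨hlevel, hcovers⟩ := Finset.mem_filter.1 (hΦ.patch_subset hx)
    obtain ⟨y, hy⟩ : (upperCovers x).Nonempty := by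
      rw [← Finset.card_pos, card_upperCovers, mem_level.1 hlevel]
      omega
    exact near_of_path ((hamming_le_one_of_mem_upperCovers hy).trans (by norm_num)) (hcovers hy)
  | prune =>
    obtain ⟨z, hz⟩ := hΦ.down_prune_inter_nonempty x hx
    obtain ⟨hzx, hzcov⟩ := Finset.mem_inter.1 hz
    obtain ⟨y, hzy, hy⟩ := exists_mem_up_of_mem_almostCovered hψ hzcov
    have hxz := hamming_le_one_of_mem_upperCovers' (mem_lowerCovers_iff_mem_upperCovers.1 hzx)
    have hzy := hamming_le_one_of_mem_upperCovers hzy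
    exact near_of_path (by linarith [hamming_triangle x z y]) (hΦ.approx_subset hy)
  | remainder => exact near_of_mem (hΦ.remainder_subset hx)
  | root =>
    rw [hroot, Finset.mem_singleton] at hx
    exact ⟨x, hx ▸ hx₀, by simp [hamming_self]⟩

lemma linked_sigma_of_encodes (hψ : ψ ≤ n - j) (hC : C ⊆ level n j) (hlink : Linked HammingTwo C)
    (hΦ : (levelGraph n j h).Encodes ψ (shadowClosure j C) (∂⁺ C) Φ) (hroot : Φ .root = {x₀})
    (hx₀ : x₀ ∈ C) : Linked (fun u v => hamming u.2 v.2 ≤ 8) (Finset.univ.sigma Φ) := by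
  refine Linked.of_close (Q := fun τ c => hamming τ.2 c ≤ 3) hlink
    (fun c hc => exists_fingerprint_near_of_mem hψ hC hΦ hc)
    (exists_mem_near_of_mem_fingerprint hψ hΦ hroot hx₀) ?_ ?_
  · intro τ τ' c hτ hτ'
    rw [hamming_comm] at hτ'
    linarith [hamming_triangle τ.2 c τ'.2]
  · intro τ τ' c c' hτ hτ' hcc'
    rw [hamming_comm] at hτ'
    linarith [hamming_triangle τ.2 c τ'.2, hamming_triangle c c' τ'.2]

end Encodes

lemma exists_fingerprint_shadowClosure (h : 2 * j + 1 ≤ n) (hC : C ⊆ level n j) {t ψ β : ℕ}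
    (ht : (∂⁺ C).card = (shadowClosure j C).card + t) (hψ : 1 ≤ ψ) (hψn : 2 * ψ ≤ n - j) {p : ℝ}
    (hp : 0 < p) (hp1 : p < 1) (hβ : 2 * β ≤ (j + 1) * (n - j - 1)) :
    ∃ Φ : Fingerprint (Finset (Fin n)), Φ .root = {x₀} ∧ Φ .remainder = ∅ ∧
      (levelGraph n j h).Encodes ψ (shadowClosure j C) (∂⁺ C) Φ ∧
      (levelGraph n j h).IsEconomical ψ t p β (∂⁺ C) Φ := by
  refine (levelGraph_mapsInto_shadowClosure h hC).exists_fingerprint ht.le hψ hψn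
    (Nat.succ_pos j) hp hp1 (fun y hy => ?_) {x₀}
  obtain ⟨hyC, hheavy⟩ := Finset.mem_filter.1 hy
  change j + 1 ≤ 2 * (lowerCovers y ∩ shadowClosure j C).card at hheavy
  change β ≤ ((lowerCovers y ∩ shadowClosure j C).biUnion upperCovers).card
  have htree := card_mul_le_card_upShadow_of_subset_lowerCovers
    (mem_level.1 (upShadow_subset_level hC hyC))
    (Finset.inter_subset_left (s₁ := lowerCovers y) (s₂ := shadowClosure j C))
  rw [upShadow_eq_biUnion] at htree
  have := Nat.mul_le_mul_right (n - j - 1) hheavy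
  linarith

end LevelFingerprints

section TightClusters

open BiregularGraph

open scoped FinsetFamily

/-- The scales of the container argument in dimension `2 * k`: a cluster is tight when its upper
shadow is less than `r` times as large as its top layer, and `2 ^ l` bounds the number of choices
for each new element of a fingerprint. -/
structure IsAdmissible (k r l : ℕ) : Prop where
  pow_le_two_pow : 7 * (2 * k + 1) ^ 8 ≤ 2 ^ l
  sixteen_mul_le : 16 * l ≤ r
  pow_four_le : 1024 * r ^ 4 ≤ k

namespace IsAdmissible

variable {k r l : ℕ}

lemma one_le (q : IsAdmissible k r l) : 1 ≤ l := by
  by_contra! hl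
  have hpow := q.pow_le_two_pow
  have hone : 1 ≤ (2 * k + 1) ^ 8 := Nat.one_le_pow _ _ (by omega)
  rw [Nat.lt_one_iff.1 hl, pow_zero] at hpow
  omega

lemma sixteen_le (q : IsAdmissible k r l) : 16 ≤ r := by
  have := q.one_le
  have := q.sixteen_mul_le
  omega

lemma pow_three_le (q : IsAdmissible k r l) : 1024 * 16 * r ^ 3 ≤ k :=
  calc 1024 * 16 * r ^ 3 = 1024 * (r ^ 3 * 16) := by ring
    _ ≤ 1024 * (r ^ 3 * r) := by gcongr; exact q.sixteen_le
    _ = 1024 * r ^ 4 := by ring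
    _ ≤ k := q.pow_four_le

lemma sq_le (q : IsAdmissible k r l) : 1024 * 256 * r ^ 2 ≤ k :=
  calc 1024 * 256 * r ^ 2 = 1024 * 16 * (r ^ 2 * 16) := by ring
    _ ≤ 1024 * 16 * (r ^ 2 * r) := by gcongr; exact q.sixteen_le
    _ = 1024 * 16 * r ^ 3 := by ring
    _ ≤ k := q.pow_three_le

lemma mul_le (q : IsAdmissible k r l) : 1024 * 256 * r ≤ k :=
  (Nat.mul_le_mul_left _ (Nat.le_self_pow two_ne_zero r)).trans q.sq_le

lemma le (q : IsAdmissible k r l) : l ≤ k := by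
  have := q.mul_le
  have := q.sixteen_mul_le
  omega

lemma eight_mul_sq_le_two_pow (q : IsAdmissible k r l) : 8 * k * r ^ 2 ≤ 2 ^ l :=
  calc 8 * k * r ^ 2 ≤ 8 * k * k := by gcongr; linarith [q.sq_le, Nat.zero_le (r ^ 2)]
    _ ≤ 7 * (2 * k + 1) ^ 2 := by nlinarith
    _ ≤ 7 * (2 * k + 1) ^ 8 := by gcongr <;> omega
    _ ≤ 2 ^ l := q.pow_le_two_pow

lemma mul_mul_le_two_pow (q : IsAdmissible k r l) : 96 * k * r ≤ 2 ^ k :=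
  calc 96 * k * r = 8 * k * (12 * r) := by ring
    _ ≤ 8 * k * (r * r) := by gcongr; linarith [q.sixteen_le]
    _ = 8 * k * r ^ 2 := by ring
    _ ≤ 2 ^ l := q.eight_mul_sq_le_two_pow
    _ ≤ 2 ^ k := Nat.pow_le_pow_right two_pos q.le

end IsAdmissible

/-- The number of truncated up-sets over a set `A` of top members is not much larger than the
number `2 ^ |A|` of choices for the top layer itself. -/
def HasEntropyBound (n j : ℕ) (σ : ℝ) : Prop :=
  ∀ A ⊆ level n j, ((upsetsOver n j A).card : ℝ) ≤ (2 * (1 + σ)) ^ A.card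

lemma two_mul_one_add_pow_le_rpow {σ : ℝ} (hσ : 0 ≤ σ) (m : ℕ) :
    (2 * (1 + σ)) ^ m ≤ (2 : ℝ) ^ ((1 + 2 * σ) * m) := by
  rw [Real.rpow_mul two_pos.le, Real.rpow_natCast, Real.rpow_add two_pos, Real.rpow_one]
  gcongr
  calc 1 + σ ≤ Real.exp σ := by linarith [Real.add_one_le_exp σ]
    _ ≤ Real.exp (Real.log 2 * (2 * σ)) := by
      refine Real.exp_le_exp.2 ?_
      nlinarith [Real.log_two_gt_d9]
    _ = 2 ^ (2 * σ) := (Real.rpow_def_of_pos two_pos _).symm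

/-- A cluster at `x` whose top layer has an upper shadow of size `g`, less than `r` times its own
size, and exceeding by `t` the size of the shadow closure of the top layer. -/
structure IsTightCluster {n : ℕ} (j r g t : ℕ) (x : Finset (Fin n))
    (U : Finset (Finset (Fin n))) : Prop where
  mem_clusters : U ∈ clusters n j x
  card_upShadow : (∂⁺ (topLayer j U)).card = g
  card_shadowClosure_add : (shadowClosure j (topLayer j U)).card + t = g
  lt_mul : g < r * (topLayer j U).card

section Shadow

variable {k r l j : ℕ} {C : Finset (Finset (Fin (2 * k)))}

lemma sub_lt_mul_of_card_upShadow_lt (hj : j + 1 ≤ k) (hC : C ⊆ level (2 * k) j)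
    (hr : (∂⁺ C).card < r * C.card) : 2 * k - j < (j + 1) * r := by
  refine Nat.lt_of_mul_lt_mul_right (a := C.card) ?_
  calc (2 * k - j) * C.card ≤ (j + 1) * (∂⁺ C).card := mul_card_le_mul_card_upShadow (by omega) hC
    _ < (j + 1) * (r * C.card) := Nat.mul_lt_mul_of_pos_left hr (by omega)
    _ = (j + 1) * r * C.card := by ring

lemma sq_le_two_mul_card_shadowClosure (q : IsAdmissible k r l) (hj : j + 1 ≤ k)
    (hC : C ⊆ level (2 * k) j) (hr : (∂⁺ C).card < r * C.card) :
    (2 * k - j) ^ 2 ≤ 2 * r * (shadowClosure j C).card := by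
  have hpos : 0 < C.card := Nat.pos_of_mul_pos_left (Nat.zero_le _ |>.trans_lt hr)
  have hexpand : (2 * k - j) ^ 2 ≤ r * (2 * k - j + C.card) := by
    refine Nat.le_of_mul_le_mul_right (c := C.card) ?_ hpos
    calc (2 * k - j) ^ 2 * C.card ≤ (∂⁺ C).card * (2 * k - j + C.card) :=
          sq_mul_card_le_card_upShadow_mul hC
      _ ≤ r * C.card * (2 * k - j + C.card) := Nat.mul_le_mul_right _ hr.le
      _ = r * (2 * k - j + C.card) * C.card := by ring
  have hsub : C.card ≤ (shadowClosure j C).card := Finset.card_le_card (subset_shadowClosure hC)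
  have hlarge : 2 * r ≤ 2 * k - j := by
    have := q.mul_le
    omega
  nlinarith

lemma card_shadowClosure_le (hj : j + 1 ≤ k) (hC : C ⊆ level (2 * k) j) :
    (shadowClosure j C).card ≤ (∂⁺ C).card := by
  refine Nat.le_of_mul_le_mul_left (c := 2 * k - j) ?_ (by omega)
  calc (2 * k - j) * (shadowClosure j C).card ≤ (j + 1) * (∂⁺ (shadowClosure j C)).card :=
        mul_card_le_mul_card_upShadow (by omega) shadowClosure_subset_level
    _ = (j + 1) * (∂⁺ C).card := by rw [upShadow_shadowClosure hC]
    _ ≤ (2 * k - j) * (∂⁺ C).card := Nat.mul_le_mul_right _ (by omega)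

end Shadow

namespace IsTightCluster

variable {k r l j g t : ℕ} {x : Finset (Fin (2 * k))} {U : Finset (Finset (Fin (2 * k)))}

lemma sub_lt_mul (h : IsTightCluster j r g t x U) (hj : j + 1 ≤ k) : 2 * k - j < (j + 1) * r :=
  sub_lt_mul_of_card_upShadow_lt hj (topLayer_subset_level U) (h.card_upShadow ▸ h.lt_mul)

lemma card_upShadow_shadowClosure (h : IsTightCluster j r g t x U) :
    (∂⁺ (shadowClosure j (topLayer j U))).card = (shadowClosure j (topLayer j U)).card + t := by
  rw [upShadow_shadowClosure (topLayer_subset_level U), h.card_upShadow, h.card_shadowClosure_add]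

lemma le_two_mul_mul (h : IsTightCluster j r g t x U) (hj : j + 1 ≤ k) : g ≤ 2 * k * t := by
  have hle := card_upShadow_le_mul_of_card_eq_add (by omega) shadowClosure_subset_level
    h.card_upShadow_shadowClosure
  rw [upShadow_shadowClosure (topLayer_subset_level U), h.card_upShadow] at hle
  exact hle.trans (Nat.mul_le_mul_right t (Nat.sub_le _ _))

lemma sq_le (h : IsTightCluster j r g t x U) (q : IsAdmissible k r l) (hj : j + 1 ≤ k) :
    k ^ 2 ≤ 12 * r * t := by
  have hk := q.mul_le
  have hr := q.sixteen_le
  have hj2 : 2 ≤ j := by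
    by_contra! hj2
    have : (j + 1) * r ≤ 2 * r := Nat.mul_le_mul_right _ (by omega)
    have := h.sub_lt_mul hj
    omega
  have hsq := sq_le_two_mul_card_shadowClosure q hj (topLayer_subset_level U)
    (h.card_upShadow ▸ h.lt_mul)
  exact (Nat.pow_le_pow_left (by omega) 2).trans (sq_le_mul_of_card_upShadow_eq_add hj2 (by omega)
    (by omega) shadowClosure_subset_level (by omega) hsq h.card_upShadow_shadowClosure)

end IsTightCluster

section Numerics

variable {k r l : ℕ}

lemma one_sub_inv_pow_mul_le {m : ℕ} (hm : 0 < m) (l : ℕ) :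
    (1 - 1 / m : ℝ) ^ (m * l) ≤ (1 / 2) ^ l := by
  have hm' : (0 : ℝ) < m := Nat.cast_pos.2 hm
  have hle : (1 / m : ℝ) ≤ 1 := by
    rw [div_le_one hm']
    exact_mod_cast hm
  rw [pow_mul]
  refine pow_le_pow_left₀ (pow_nonneg (by linarith) _) ?_ _
  calc (1 - 1 / m : ℝ) ^ m ≤ Real.exp (-1) := Real.one_sub_div_pow_le_exp_neg (by exact_mod_cast hm)
    _ ≤ 1 / 2 := by
      rw [Real.exp_neg, one_div]
      exact inv_anti₀ two_pos (by linarith [Real.add_one_le_exp (1 : ℝ)])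

lemma IsAdmissible.seed_bound_le (q : IsAdmissible k r l) {g t d : ℕ} (hg : g ≤ 2 * k * t)
    (hd : d ≤ k) {p : ℝ} (hp : p = 1 / (24 * k * r ^ 2 : ℕ)) :
    p * g + p * (d * t) + g * (1 - p) ^ (24 * k * r ^ 2 * l) ≤ 3 * t / (8 * r ^ 2) := by
  have hr : 0 < r := by linarith [q.sixteen_le]
  have hk : 0 < k := by linarith [q.mul_le]
  have hp₀ : 0 ≤ p := by rw [hp]; positivity
  have hg' : (g : ℝ) ≤ 2 * k * t := by exact_mod_cast hg
  have hsmall : (1 - p) ^ (24 * k * r ^ 2 * l) ≤ 1 / (8 * k * r ^ 2) := by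
    rw [hp]
    refine (one_sub_inv_pow_mul_le (by positivity) l).trans ?_
    rw [one_div_pow]
    exact one_div_le_one_div_of_le (by positivity) (by exact_mod_cast q.eight_mul_sq_le_two_pow)
  calc p * g + p * (d * t) + g * (1 - p) ^ (24 * k * r ^ 2 * l)
      ≤ p * (2 * k * t) + p * (k * t) + g * (1 / (8 * k * r ^ 2)) := by gcongr
    _ ≤ p * (2 * k * t) + p * (k * t) + 2 * k * t * (1 / (8 * k * r ^ 2)) := by gcongr
    _ = 3 * t / (8 * r ^ 2) := by
        rw [hp]
        push_cast
        field_simp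
        ring

lemma IsAdmissible.two_mul_entropy_le (q : IsAdmissible k r l) {m t : ℕ} (hm : m ≤ 2 * k * t) :
    2 * (3 * (1 / 2 : ℝ) ^ k) * m ≤ t / (8 * r) := by
  have hr : (0 : ℝ) < r := Nat.cast_pos.2 (by linarith [q.sixteen_le])
  have hm' : (m : ℝ) ≤ 2 * k * t := by exact_mod_cast hm
  have hpow : (96 * k * r : ℝ) ≤ 2 ^ k := by exact_mod_cast q.mul_mul_le_two_pow
  rw [le_div_iff₀ (by positivity), one_div_pow]
  calc 2 * (3 * (1 / (2 : ℝ) ^ k)) * m * (8 * r) = 48 * r * m / 2 ^ k := by ring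
    _ ≤ 48 * r * (2 * k * t) / 2 ^ k := by gcongr
    _ = t * (96 * k * r / 2 ^ k) := by ring
    _ ≤ t * 1 := by gcongr; exact div_le_one_of_le₀ hpow (by positivity)
    _ = t := mul_one _

lemma IsAdmissible.fingerprint_count_le (q : IsAdmissible k r l) (s : ℕ) :
    (7 * ((2 * k : ℕ) + 1) ^ 8 : ℝ) ^ (2 * s) ≤ (2 : ℝ) ^ (2 * l * s : ℝ) := by
  have hbase : (7 * ((2 * k : ℕ) + 1) ^ 8 : ℝ) ≤ 2 ^ l := by exact_mod_cast q.pow_le_two_pow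
  calc (7 * ((2 * k : ℕ) + 1) ^ 8 : ℝ) ^ (2 * s) ≤ (2 ^ l) ^ (2 * s) := by gcongr
    _ = (2 : ℝ) ^ ((2 * l * s : ℕ) : ℝ) := by
      rw [Real.rpow_natCast, ← pow_mul]
      ring_nf
    _ = (2 : ℝ) ^ (2 * l * s : ℝ) := by push_cast; rfl

lemma IsAdmissible.seven_mul_le (q : IsAdmissible k r l) {t : ℕ} (ht : k ^ 2 ≤ 12 * r * t) :
    (7 * k : ℝ) ≤ 11 / 16 * (t / r) := by
  have hr : (0 : ℝ) < r := Nat.cast_pos.2 (by linarith [q.sixteen_le])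
  have hk : (0 : ℝ) < k := Nat.cast_pos.2 (by linarith [q.mul_le, q.sixteen_le])
  have ht' : (k : ℝ) ^ 2 ≤ 12 * r * t := by exact_mod_cast ht
  have hrk : (1024 * 256 * r ^ 2 : ℝ) ≤ k := by exact_mod_cast q.sq_le
  have hmul : (1024 * 256 * r ^ 2 : ℝ) * k ≤ 12 * r * t := by nlinarith
  rw [← mul_div_assoc, le_div_iff₀ hr]
  refine le_of_mul_le_mul_left (a := (12 * r : ℝ)) ?_ (by positivity)
  nlinarith [mul_pos (pow_pos hr 2) hk]

end Numerics

namespace IsTightCluster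

variable {k r l j g t : ℕ} {x : Finset (Fin (2 * k))} {U : Finset (Finset (Fin (2 * k)))}
  {hjk : 2 * j + 1 ≤ 2 * k} {Φ : Fingerprint (Finset (Fin (2 * k)))} {p : ℝ}

lemma two_mul_scale_le (h : IsTightCluster j r g t x U) (q : IsAdmissible k r l)
    (hj : j + 1 ≤ k) : 2 * (24 * k * r ^ 2 * l) ≤ (j + 1) * (2 * k - j - 1) := by
  have hr := q.sixteen_le
  have hle : k ≤ r * (j + 1) := by
    have := h.sub_lt_mul hj
    rw [mul_comm]
    omega
  refine Nat.le_of_mul_le_mul_left (c := r) ?_ (by omega)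
  calc r * (2 * (24 * k * r ^ 2 * l)) = 48 * r ^ 3 * l * k := by ring
    _ ≤ 48 * r ^ 3 * r * k := by gcongr; linarith [q.sixteen_mul_le]
    _ = 48 * r ^ 4 * k := by ring
    _ ≤ k * k := by gcongr; linarith [q.pow_four_le, Nat.zero_le (r ^ 4)]
    _ ≤ r * (j + 1) * (2 * k - j - 1) := Nat.mul_le_mul hle (by omega)
    _ = r * ((j + 1) * (2 * k - j - 1)) := by ring

lemma exists_fingerprint (h : IsTightCluster j r g t x U) (q : IsAdmissible k r l)
    (hj : j + 1 ≤ k) (hp : p = 1 / (24 * k * r ^ 2 : ℕ)) :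
    ∃ Φ : Fingerprint (Finset (Fin (2 * k))), Φ .root = {x} ∧ Φ .remainder = ∅ ∧
      (levelGraph (2 * k) j hjk).Encodes (32 * r ^ 2) (shadowClosure j (topLayer j U))
        (∂⁺ (topLayer j U)) Φ ∧
      (levelGraph (2 * k) j hjk).IsEconomical (32 * r ^ 2) t p (24 * k * r ^ 2 * l)
        (∂⁺ (topLayer j U)) Φ := by
  have hr := q.sixteen_le
  have hk := q.mul_le
  have hrk := q.sq_le
  have hr2 : 1 ≤ r ^ 2 := Nat.one_le_pow _ _ (by omega)
  have hm : 1 < 24 * k * r ^ 2 := by nlinarith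
  refine exists_fingerprint_shadowClosure hjk (topLayer_subset_level U)
    (h.card_upShadow.trans h.card_shadowClosure_add.symm) (by omega) (by omega) ?_ ?_
    (h.two_mul_scale_le q hj)
  · rw [hp]
    positivity
  · rw [hp, div_lt_one (by positivity)]
    exact_mod_cast hm

lemma card_parts_le (h : IsTightCluster j r g t x U) (q : IsAdmissible k r l) (hj : j + 1 ≤ k)
    (hp : p = 1 / (24 * k * r ^ 2 : ℕ))
    (hΦ : (levelGraph (2 * k) j hjk).IsEconomical (32 * r ^ 2) t p (24 * k * r ^ 2 * l)
      (∂⁺ (topLayer j U)) Φ) :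
    (Φ .seed).card + (Φ .excluded).card + (Φ .uncovered).card + (Φ .patch).card +
      (Φ .prune).card ≤ t / (2 * r ^ 2) := by
  have hr : 0 < r := by linarith [q.sixteen_le]
  have hseed := hΦ.card_seed_le.trans
    (q.seed_bound_le (h.card_upShadow ▸ h.le_two_mul_mul hj) (d := j + 1) hj hp)
  rw [le_div_iff₀ (by positivity)] at hseed
  have hseed' : ((Φ .seed).card + (Φ .excluded).card + (Φ .uncovered).card) * (8 * r ^ 2) ≤
      3 * t := by exact_mod_cast hseed
  have hpatch := hΦ.card_patch_le
  have hprune := hΦ.card_prune_le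
  rw [Nat.le_div_iff_mul_le (by positivity)]
  nlinarith

lemma card_upsetsOver_le_rpow (h : IsTightCluster j r g t x U) (q : IsAdmissible k r l)
    (hj : j + 1 ≤ k) (hW : HasEntropyBound (2 * k) j (3 * (1 / 2) ^ k))
    {A : Finset (Finset (Fin (2 * k)))} (hA : A ⊆ level (2 * k) j) {y : ℝ}
    (hy : y ≤ g - t / (8 * r)) (hAy : (A.card : ℝ) ≤ y) :
    ((upsetsOver (2 * k) j A).card : ℝ) ≤ 2 ^ (y + t / (8 * r)) := by
  refine (hW A hA).trans ((two_mul_one_add_pow_le_rpow (by positivity) _).trans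
    (Real.rpow_le_rpow_of_exponent_le one_le_two ?_))
  have hAg : A.card ≤ g := by
    have : (0 : ℝ) ≤ t / (8 * r) := by positivity
    exact_mod_cast (by linarith : (A.card : ℝ) ≤ g)
  linarith [q.two_mul_entropy_le (hAg.trans (h.le_two_mul_mul hj))]

/-- The degree `2 * k - j` beats the error term `128 * r ^ 2 * t` by a factor `8 * r`. -/
lemma card_leftContainer_le (h : IsTightCluster j r g t x U) (q : IsAdmissible k r l) {β : ℕ}
    (hΦ : (levelGraph (2 * k) j hjk).Encodes (32 * r ^ 2) (shadowClosure j (topLayer j U))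
        (∂⁺ (topLayer j U)) Φ)
    (hΦ' : (levelGraph (2 * k) j hjk).IsEconomical (32 * r ^ 2) t p β (∂⁺ (topLayer j U)) Φ)
    (ht : t ≤ r * (∂⁺ (topLayer j U) \ (levelGraph (2 * k) j hjk).rightContainer
      (32 * r ^ 2) Φ).card) :
    (((levelGraph (2 * k) j hjk).leftContainer (32 * r ^ 2) Φ).card : ℝ) ≤
      g - t / r + t / (8 * r) := by
  have hr : (0 : ℝ) < r := Nat.cast_pos.2 (by linarith [q.sixteen_le])
  have hcard := hΦ'.card_leftContainer_le
  have hsdiff := Finset.card_sdiff_add_card_eq_card hΦ.rightContainer_subset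
  rw [h.card_upShadow] at hsdiff
  generalize (levelGraph (2 * k) j hjk).leftContainer (32 * r ^ 2) Φ = S at hcard ⊢
  generalize (levelGraph (2 * k) j hjk).rightContainer (32 * r ^ 2) Φ = T at hcard hsdiff ht
  generalize (∂⁺ (topLayer j U) \ T).card = e at hsdiff ht
  change (2 * k - j) * S.card ≤ (j + 1) * T.card + 4 * (32 * r ^ 2) * t at hcard
  have hdeg : 1024 * r ^ 3 ≤ 2 * k - j := by
    have := q.pow_three_le
    omega
  have hdown : (j + 1) * T.card ≤ (2 * k - j) * T.card := Nat.mul_le_mul_right _ (by omega)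
  generalize 2 * k - j = d at hcard hdeg hdown
  have hd : (1024 * r ^ 3 : ℝ) ≤ d := by exact_mod_cast hdeg
  have hd₀ : (0 : ℝ) < d := lt_of_lt_of_le (by positivity) hd
  have hcard' : (d * S.card : ℝ) ≤ d * T.card + 128 * r ^ 2 * t := by
    exact_mod_cast (by linarith : d * S.card ≤ d * T.card + 128 * r ^ 2 * t)
  have hT : (T.card : ℝ) ≤ g - t / r := by
    have he : (t : ℝ) / r ≤ e := by
      rw [div_le_iff₀ hr, mul_comm]
      exact_mod_cast ht
    have hg : (e + T.card : ℝ) = g := by exact_mod_cast hsdiff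
    linarith
  refine le_of_mul_le_mul_left ?_ hd₀
  calc (d * S.card : ℝ) ≤ d * T.card + 1024 * r ^ 3 * (t / (8 * r)) := by
        refine hcard'.trans_eq ?_
        field_simp
        ring
    _ ≤ d * (g - t / r) + d * (t / (8 * r)) := by gcongr
    _ = d * (g - t / r + t / (8 * r)) := by ring

lemma isRooted (h : IsTightCluster j r g t x U) (q : IsAdmissible k r l)
    (hroot : Φ .root = {x})
    (hΦ : (levelGraph (2 * k) j hjk).Encodes (32 * r ^ 2) (shadowClosure j (topLayer j U))
        (∂⁺ (topLayer j U)) Φ) {s : ℕ}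
    (hs : (Finset.univ.sigma Φ).card ≤ s) : IsRooted x s Φ := by
  obtain ⟨-, hlink, hx⟩ := _root_.mem_clusters.1 h.mem_clusters
  refine ⟨linked_sigma_of_encodes ?_ (topLayer_subset_level U) hlink hΦ hroot hx,
    by simp [hroot], hs⟩
  have := q.sq_le
  omega

lemma mem_upsetsOver (h : IsTightCluster j r g t x U) {A : Finset (Finset (Fin (2 * k)))}
    (hA : shadowClosure j (topLayer j U) ⊆ A) : U ∈ upsetsOver (2 * k) j A :=
  _root_.mem_upsetsOver.2 ⟨(_root_.mem_clusters.1 h.mem_clusters).1,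
    (subset_shadowClosure (topLayer_subset_level U)).trans hA⟩

lemma isCaptured_leftContainer (h : IsTightCluster j r g t x U) (q : IsAdmissible k r l)
    (hj : j + 1 ≤ k) (hW : HasEntropyBound (2 * k) j (3 * (1 / 2) ^ k))
    (hroot : Φ .root = {x}) (hrem : Φ .remainder = ∅)
    (hΦ : (levelGraph (2 * k) j hjk).Encodes (32 * r ^ 2) (shadowClosure j (topLayer j U))
      (∂⁺ (topLayer j U)) Φ)
    (hΦ' : (levelGraph (2 * k) j hjk).IsEconomical (32 * r ^ 2) t (1 / (24 * k * r ^ 2 : ℕ))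
      (24 * k * r ^ 2 * l) (∂⁺ (topLayer j U)) Φ)
    (ht : t ≤ r * (∂⁺ (topLayer j U) \ (levelGraph (2 * k) j hjk).rightContainer
      (32 * r ^ 2) Φ).card) :
    IsCaptured j (t / (2 * r ^ 2) + 1) (2 ^ (g - 3 / 4 * (t / r) : ℝ))
      ((levelGraph (2 * k) j hjk).leftContainer (32 * r ^ 2)) x U := by
  have htr : (t : ℝ) / (8 * r) = 1 / 8 * (t / r) := by
    rw [div_mul_eq_div_div_swap]
    ring
  refine ⟨Φ, h.isRooted q hroot hΦ ?_, ?_, h.mem_upsetsOver hΦ.subset_leftContainer⟩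
  · rw [card_sigma_fingerprint, hroot, hrem, Finset.card_singleton, Finset.card_empty]
    exact Nat.succ_le_succ (h.card_parts_le q hj rfl hΦ')
  · refine (h.card_upsetsOver_le_rpow q hj hW leftContainer_subset_left ?_
      (h.card_leftContainer_le q hΦ hΦ' ht)).trans_eq ?_
    · have : (0 : ℝ) ≤ t / r := by positivity
      linarith
    · rw [htr]
      ring_nf

lemma isCaptured_exactContainer (h : IsTightCluster j r g t x U) (q : IsAdmissible k r l)
    (hj : j + 1 ≤ k) (hW : HasEntropyBound (2 * k) j (3 * (1 / 2) ^ k))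
    (hroot : Φ .root = {x})
    (hΦ : (levelGraph (2 * k) j hjk).Encodes (32 * r ^ 2) (shadowClosure j (topLayer j U))
      (∂⁺ (topLayer j U)) Φ)
    (hΦ' : (levelGraph (2 * k) j hjk).IsEconomical (32 * r ^ 2) t (1 / (24 * k * r ^ 2 : ℕ))
      (24 * k * r ^ 2 * l) (∂⁺ (topLayer j U)) Φ)
    (ht : (∂⁺ (topLayer j U) \ (levelGraph (2 * k) j hjk).rightContainer (32 * r ^ 2) Φ).card ≤
      t / r) :
    IsCaptured j (t / (2 * r ^ 2) + t / r + 1) (2 ^ (g - 7 / 8 * t : ℝ))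
      ((levelGraph (2 * k) j hjk).exactContainer (32 * r ^ 2)) x U := by
  have hr : (1 : ℝ) ≤ r := by exact_mod_cast (by linarith [q.sixteen_le] : 1 ≤ r)
  set E := ∂⁺ (topLayer j U) \ (levelGraph (2 * k) j hjk).rightContainer (32 * r ^ 2) Φ
  have hexact : (levelGraph (2 * k) j hjk).exactContainer (32 * r ^ 2)
      (Function.update Φ .remainder E) = shadowClosure j (topLayer j U) :=
    hΦ.exactContainer_update_remainder
  refine ⟨Function.update Φ .remainder E,
    h.isRooted (Φ := Function.update Φ .remainder E) q hroot
      (hΦ.update_remainder Finset.sdiff_subset) ?_, ?_, ?_⟩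
  · have hparts := h.card_parts_le q hj rfl hΦ'
    rw [card_sigma_fingerprint]
    change (Φ .seed).card + (Φ .excluded).card + (Φ .uncovered).card + (Φ .patch).card +
      (Φ .prune).card + E.card + (Φ .root).card ≤ _
    rw [hroot, Finset.card_singleton]
    omega
  · have hadd : ((shadowClosure j (topLayer j U)).card : ℝ) + t = g := by
      exact_mod_cast h.card_shadowClosure_add
    have htr : (t : ℝ) / (8 * r) ≤ 1 / 8 * t := by
      rw [div_le_iff₀ (by positivity)]
      nlinarith [(Nat.cast_nonneg t : (0 : ℝ) ≤ t)]
    rw [hexact]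
    refine (h.card_upsetsOver_le_rpow q hj hW shadowClosure_subset_level (y := g - t) ?_
      (by linarith)).trans (Real.rpow_le_rpow_of_exponent_le one_le_two ?_)
    · linarith [(Nat.cast_nonneg t : (0 : ℝ) ≤ t)]
    · linarith
  · rw [hexact]
    exact h.mem_upsetsOver subset_rfl

/-- Either the left container of a fingerprint is already small, or few vertices of the shadow are
missing from the right container and it is affordable to record them all. -/
lemma isCaptured_or_isCaptured (h : IsTightCluster j r g t x U) (q : IsAdmissible k r l)
    (hj : j + 1 ≤ k) (hW : HasEntropyBound (2 * k) j (3 * (1 / 2) ^ k)) :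
    IsCaptured j (t / (2 * r ^ 2) + 1) (2 ^ (g - 3 / 4 * (t / r) : ℝ))
      ((levelGraph (2 * k) j hjk).leftContainer (32 * r ^ 2)) x U ∨
    IsCaptured j (t / (2 * r ^ 2) + t / r + 1) (2 ^ (g - 7 / 8 * t : ℝ))
      ((levelGraph (2 * k) j hjk).exactContainer (32 * r ^ 2)) x U := by
  obtain ⟨Φ, hroot, hrem, hΦ, hΦ'⟩ := h.exists_fingerprint (hjk := hjk) q hj rfl
  rcases le_or_gt t (r * (∂⁺ (topLayer j U) \
    (levelGraph (2 * k) j hjk).rightContainer (32 * r ^ 2) Φ).card) with ht | ht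
  · exact .inl (h.isCaptured_leftContainer q hj hW hroot hrem hΦ hΦ' ht)
  · refine .inr (h.isCaptured_exactContainer q hj hW hroot hΦ hΦ' ?_)
    rw [Nat.le_div_iff_mul_le (by linarith [q.sixteen_le]), mul_comm]
    exact ht.le

end IsTightCluster

section Count

variable {k r l j g t : ℕ} {x : Finset (Fin (2 * k))} {F : Finset (Finset (Finset (Fin (2 * k))))}

lemma card_le_of_isCaptured (q : IsAdmissible k r l) {s : ℕ} {y : ℝ}
    {container : Fingerprint (Finset (Fin (2 * k))) → Finset (Finset (Fin (2 * k)))}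
    (hF : ∀ U ∈ F, IsCaptured j (s + 1) (2 ^ y) container x U) :
    (F.card : ℝ) ≤ 2 ^ (2 * l * s + y) := by
  refine (card_le_of_forall_isCaptured (by positivity) hF).trans ?_
  rw [Real.rpow_add two_pos]
  gcongr
  exact q.fingerprint_count_le s

lemma IsAdmissible.two_mul_mul_div_sq_le (q : IsAdmissible k r l) (t : ℕ) :
    (2 * l * (t / (2 * r ^ 2) : ℕ) : ℝ) ≤ 1 / 16 * (t / r) := by
  have hr : (0 : ℝ) < r := Nat.cast_pos.2 (by linarith [q.sixteen_le])
  have hl : (16 * l : ℝ) ≤ r := by exact_mod_cast q.sixteen_mul_le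
  have hdiv : ((t / (2 * r ^ 2) : ℕ) : ℝ) ≤ t / (2 * r ^ 2) := by
    exact_mod_cast @Nat.cast_div_le ℝ _ _ _ t (2 * r ^ 2)
  calc (2 * l * (t / (2 * r ^ 2) : ℕ) : ℝ) ≤ 2 * l * (t / (2 * r ^ 2)) := by gcongr
    _ = 16 * l * (t / (16 * r ^ 2)) := by field_simp
    _ ≤ r * (t / (16 * r ^ 2)) := by gcongr
    _ = 1 / 16 * (t / r) := by field_simp

lemma IsAdmissible.two_mul_mul_div_le (q : IsAdmissible k r l) (t : ℕ) :
    (2 * l * (t / r : ℕ) : ℝ) ≤ 1 / 8 * t := by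
  have hr : (0 : ℝ) < r := Nat.cast_pos.2 (by linarith [q.sixteen_le])
  have hl : (16 * l : ℝ) ≤ r := by exact_mod_cast q.sixteen_mul_le
  calc (2 * l * (t / r : ℕ) : ℝ) ≤ 2 * l * (t / r) := by gcongr; exact Nat.cast_div_le
    _ = 16 * l * (t / (8 * r)) := by field_simp; ring
    _ ≤ r * (t / (8 * r)) := by gcongr
    _ = 1 / 8 * t := by field_simp

lemma card_mul_le_of_isTightCluster (q : IsAdmissible k r l) (hj : j + 1 ≤ k)
    (hW : HasEntropyBound (2 * k) j (3 * (1 / 2) ^ k))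
    (hF : ∀ U ∈ F, IsTightCluster j r g t x U) :
    (F.card : ℝ) * (1 / 2) ^ g ≤ 2 * (1 / 2) ^ (7 * k) := by
  rcases F.eq_empty_or_nonempty with rfl | ⟨U₀, hU₀⟩
  · simp
  have hjk : 2 * j + 1 ≤ 2 * k := by omega
  have hk := q.seven_mul_le ((hF U₀ hU₀).sq_le q hj)
  have hsq := q.two_mul_mul_div_sq_le t
  have hr : (1 : ℝ) ≤ r := by exact_mod_cast (by linarith [q.sixteen_le] : 1 ≤ r)
  have htr : (t : ℝ) / r ≤ t := div_le_self (Nat.cast_nonneg t) hr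
  let P U := IsCaptured j (t / (2 * r ^ 2) + 1) (2 ^ (g - 3 / 4 * (t / r) : ℝ))
    ((levelGraph (2 * k) j hjk).leftContainer (32 * r ^ 2)) x U
  have hleft : ((F.filter P).card : ℝ) ≤ 2 ^ (g - 7 * k : ℝ) := by
    refine (card_le_of_isCaptured q fun U hU => (Finset.mem_filter.1 hU).2).trans
      (Real.rpow_le_rpow_of_exponent_le one_le_two ?_)
    linarith
  have hcaptured : ∀ U ∈ F.filter (¬ P ·),
      IsCaptured j (t / (2 * r ^ 2) + t / r + 1) (2 ^ (g - 7 / 8 * t : ℝ))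
        ((levelGraph (2 * k) j hjk).exactContainer (32 * r ^ 2)) x U := by
    intro U hU
    obtain ⟨hUF, hU⟩ := Finset.mem_filter.1 hU
    exact ((hF U hUF).isCaptured_or_isCaptured q hj hW).resolve_left hU
  have hexact : ((F.filter (¬ P ·)).card : ℝ) ≤ 2 ^ (g - 7 * k : ℝ) := by
    refine (card_le_of_isCaptured q hcaptured).trans
      (Real.rpow_le_rpow_of_exponent_le one_le_two ?_)
    push_cast
    linarith [q.two_mul_mul_div_le t]
  have hcard : (F.card : ℝ) = (F.filter P).card + (F.filter (¬ P ·)).card := by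
    exact_mod_cast (Finset.card_filter_add_card_filter_not P).symm
  calc (F.card : ℝ) * (1 / 2) ^ g ≤ 2 * 2 ^ (g - 7 * k : ℝ) * (1 / 2) ^ g := by
        gcongr
        linarith
    _ = 2 * (1 / 2) ^ (7 * k) := by
        have hpow : (2 : ℝ) ^ (7 * k : ℝ) = 2 ^ (7 * k) := by
          exact_mod_cast Real.rpow_natCast 2 (7 * k)
        rw [Real.rpow_sub two_pos, Real.rpow_natCast, hpow, one_div_pow, one_div_pow]
        field_simp

end Count

end TightClusters

section ClusterSums

open scoped FinsetFamily

lemma two_mul_sub_le_card_upShadow_add_one {n j : ℕ} {C : Finset (Finset (Fin n))}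
    (hC : C ⊆ level n j) (htwo : 2 ≤ C.card) : 2 * (n - j) ≤ (∂⁺ C).card + 1 := by
  obtain ⟨x, hx, x', hx', hne⟩ := Finset.one_lt_card.1 htwo
  have hunion := Finset.card_union_add_card_inter (upperCovers x) (upperCovers x')
  have hinter := card_upperCovers_inter_le_one_of_subset_level hC x hx x' hx' hne
  rw [card_upperCovers_of_subset_level hC x hx, card_upperCovers_of_subset_level hC x' hx']
    at hunion
  have hle : (upperCovers x ∪ upperCovers x').card ≤ (∂⁺ C).card :=
    Finset.card_le_card (Finset.union_subset (upperCovers_subset_upShadow hx)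
      (upperCovers_subset_upShadow hx'))
  omega

lemma two_pow_mul_half_pow_le {a b c : ℕ} (h : a + c ≤ b) :
    (2 : ℝ) ^ a * (1 / 2) ^ b ≤ (1 / 2) ^ c :=
  calc (2 : ℝ) ^ a * (1 / 2) ^ b ≤ 2 ^ a * (1 / 2) ^ (a + c) := by
        gcongr 2 ^ a * ?_
        exact pow_le_pow_of_le_one (by norm_num) (by norm_num) h
    _ = (1 / 2) ^ c := by rw [pow_add, ← mul_assoc, ← mul_pow]; norm_num

lemma upsetWeight_le_half_pow {n j m : ℕ} {U : Finset (Finset (Fin n))}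
    (h : m ≤ (∂⁺ (topLayer j U)).card) : upsetWeight j U ≤ (1 / 2) ^ m :=
  pow_le_pow_of_le_one (by norm_num) (by norm_num) h

/-- The clusters at `x` with at least two top members. -/
def largeClusters (n j : ℕ) (x : Finset (Fin n)) : Finset (Finset (Finset (Fin n))) :=
  (clusters n j x).filter fun U => 2 ≤ (topLayer j U).card

/-- The total weight of the large clusters at `x`. -/
def largeClusterSum (n j : ℕ) (x : Finset (Fin n)) : ℝ :=
  ∑ U ∈ largeClusters n j x, upsetWeight j U

section Enumeration

variable {n j s : ℕ} {x : Finset (Fin n)} {σ : ℝ} {F : Finset (Finset (Finset (Fin n)))}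

lemma HasEntropyBound.card_upsetsOver_le_four_pow (hW : HasEntropyBound n j σ) (hσ₀ : 0 ≤ σ)
    (hσ : σ ≤ 1) {A : Finset (Finset (Fin n))} (hA : A ⊆ level n j) :
    ((upsetsOver n j A).card : ℝ) ≤ 4 ^ A.card :=
  (hW A hA).trans (pow_le_pow_left₀ (by positivity) (by linarith) _)

lemma HasEntropyBound.card_le_of_card_topLayer_eq (hW : HasEntropyBound n j σ) (hσ₀ : 0 ≤ σ)
    (hσ : σ ≤ 1) (hF : ∀ U ∈ F, U ∈ clusters n j x ∧ (topLayer j U).card = s) :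
    (F.card : ℝ) ≤ ((n + 1) ^ 2) ^ (2 * (s - 1)) * 4 ^ s := by
  have htops : (F.image (topLayer j)).card ≤ ((n + 1) ^ 2) ^ (2 * (s - 1)) := by
    refine card_linked_hammingTwo_le s x _ (Finset.forall_mem_image.2 fun U hU => ?_)
    obtain ⟨hU, hs⟩ := hF U hU
    obtain ⟨-, hlinked, hx⟩ := mem_clusters.1 hU
    exact ⟨hlinked, hx, hs.le⟩
  have hcover : F ⊆ (F.image (topLayer j)).biUnion (upsetsOver n j) := fun U hU =>
    Finset.mem_biUnion.2 ⟨topLayer j U, Finset.mem_image_of_mem _ hU,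
      mem_upsetsOver.2 ⟨(mem_clusters.1 (hF U hU).1).1, subset_rfl⟩⟩
  calc (F.card : ℝ) ≤ ∑ C ∈ F.image (topLayer j), ((upsetsOver n j C).card : ℝ) := by
        exact_mod_cast (Finset.card_le_card hcover).trans Finset.card_biUnion_le
    _ ≤ ∑ _ ∈ F.image (topLayer j), (4 : ℝ) ^ s := by
        refine Finset.sum_le_sum (Finset.forall_mem_image.2 fun U hU => ?_)
        rw [← (hF U hU).2]
        exact hW.card_upsetsOver_le_four_pow hσ₀ hσ (topLayer_subset_level U)
    _ = (F.image (topLayer j)).card * 4 ^ s := by rw [Finset.sum_const, nsmul_eq_mul]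
    _ ≤ ((n + 1) ^ 2) ^ (2 * (s - 1)) * 4 ^ s := by
        gcongr
        exact_mod_cast htops

end Enumeration

variable {k r l j : ℕ} {x : Finset (Fin (2 * k))}

lemma IsAdmissible.three_mul_half_pow_le_one (q : IsAdmissible k r l) :
    3 * (1 / 2 : ℝ) ^ k ≤ 1 := by
  have hk : 2 ≤ k := by linarith [q.mul_le, q.sixteen_le]
  have : (1 / 2 : ℝ) ^ k ≤ (1 / 2) ^ 2 := pow_le_pow_of_le_one (by norm_num) (by norm_num) hk
  linarith

section Expanding

lemma IsAdmissible.linked_count_le (q : IsAdmissible k r l) (s : ℕ) :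
    ((2 * k + 1) ^ 2) ^ (2 * (s - 1)) ≤ 2 ^ (l * s) :=
  calc ((2 * k + 1) ^ 2) ^ (2 * (s - 1)) = ((2 * k + 1) ^ 4) ^ (s - 1) := by
        rw [← pow_mul, ← pow_mul]
        ring_nf
    _ ≤ ((2 * k + 1) ^ 4) ^ s := Nat.pow_le_pow_right (by positivity) (Nat.sub_le s 1)
    _ ≤ (7 * (2 * k + 1) ^ 8) ^ s := by
        gcongr
        exact (Nat.pow_le_pow_right (by omega) (by norm_num)).trans
          (Nat.le_mul_of_pos_left _ (by norm_num))
    _ ≤ (2 ^ l) ^ s := by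
        gcongr
        exact q.pow_le_two_pow
    _ = 2 ^ (l * s) := (pow_mul 2 l s).symm

/-- The shadow pays for half of `r * s` choices and for the factor `(1 / 2) ^ k` at the same time,
because two top members alone already have `2 * k` sets above them. -/
lemma IsAdmissible.upsetWeight_le_of_expanding (q : IsAdmissible k r l) (hj : j + 1 ≤ k)
    {U : Finset (Finset (Fin (2 * k)))} (htwo : 2 ≤ (topLayer j U).card)
    (hr : r * (topLayer j U).card ≤ (∂⁺ (topLayer j U)).card) :
    upsetWeight j U ≤ (1 / 2) ^ (8 * l * (topLayer j U).card + k) := by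
  refine upsetWeight_le_half_pow ?_
  have hshadow := two_mul_sub_le_card_upShadow_add_one (topLayer_subset_level U) htwo
  have hmul := (Nat.mul_le_mul_right (topLayer j U).card q.sixteen_mul_le).trans hr
  rw [show 16 * l * (topLayer j U).card = 2 * (8 * l * (topLayer j U).card) by ring] at hmul
  omega

lemma IsAdmissible.sum_upsetWeight_le_of_card_eq (q : IsAdmissible k r l) (hj : j + 1 ≤ k)
    (hW : HasEntropyBound (2 * k) j (3 * (1 / 2) ^ k)) {i : ℕ}
    {F : Finset (Finset (Finset (Fin (2 * k))))} (hF : ∀ U ∈ F, U ∈ clusters (2 * k) j x ∧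
      (topLayer j U).card = i + 2 ∧ r * (topLayer j U).card ≤ (∂⁺ (topLayer j U)).card) :
    ∑ U ∈ F, upsetWeight j U ≤ (1 / 2) ^ (k + l + 1) * (1 / 2) ^ i := by
  have hcount : (F.card : ℝ) ≤ 2 ^ (l * (i + 2)) * 4 ^ (i + 2) := by
    refine (hW.card_le_of_card_topLayer_eq (by positivity) q.three_mul_half_pow_le_one
      fun U hU => ⟨(hF U hU).1, (hF U hU).2.1⟩).trans ?_
    gcongr
    exact_mod_cast q.linked_count_le (i + 2)
  have hexponent : l * (i + 2) + 2 * (i + 2) + (k + l + 1 + i) ≤ 8 * l * (i + 2) + k := by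
    have := Nat.mul_le_mul_right i q.one_le
    linarith [q.one_le]
  calc ∑ U ∈ F, upsetWeight j U ≤ ∑ _ ∈ F, (1 / 2 : ℝ) ^ (8 * l * (i + 2) + k) := by
        refine Finset.sum_le_sum fun U hU => ?_
        obtain ⟨-, hcard, hr⟩ := hF U hU
        rw [← hcard]
        exact q.upsetWeight_le_of_expanding hj (by omega) hr
    _ = F.card * (1 / 2) ^ (8 * l * (i + 2) + k) := by rw [Finset.sum_const, nsmul_eq_mul]
    _ ≤ 2 ^ (l * (i + 2)) * 4 ^ (i + 2) * (1 / 2) ^ (8 * l * (i + 2) + k) := by gcongr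
    _ = 2 ^ (l * (i + 2) + 2 * (i + 2)) * (1 / 2) ^ (8 * l * (i + 2) + k) := by
        rw [pow_add (2 : ℝ) (l * (i + 2)), pow_mul 2 2]
        norm_num
    _ ≤ (1 / 2) ^ (k + l + 1 + i) := two_pow_mul_half_pow_le hexponent
    _ = (1 / 2) ^ (k + l + 1) * (1 / 2) ^ i := pow_add _ _ _

lemma sum_expanding_upsetWeight_le (q : IsAdmissible k r l) (hj : j + 1 ≤ k)
    (hW : HasEntropyBound (2 * k) j (3 * (1 / 2) ^ k)) :
    ∑ U ∈ (largeClusters (2 * k) j x).filter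
      (fun U => r * (topLayer j U).card ≤ (∂⁺ (topLayer j U)).card), upsetWeight j U ≤
      (1 / 2) ^ (k + l) := by
  set S := (largeClusters (2 * k) j x).filter
    (fun U => r * (topLayer j U).card ≤ (∂⁺ (topLayer j U)).card)
  set I := S.image fun U => (topLayer j U).card - 2
  have hfiber : ∀ i ∈ I, ∑ U ∈ S with (topLayer j U).card - 2 = i, upsetWeight j U ≤
      (1 / 2) ^ (k + l + 1) * (1 / 2) ^ i := by
    intro i _
    refine q.sum_upsetWeight_le_of_card_eq (x := x) hj hW fun U hU => ?_
    simp only [S, largeClusters, Finset.mem_filter] at hU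
    exact ⟨hU.1.1.1, by omega, hU.1.2⟩
  calc ∑ U ∈ S, upsetWeight j U
      = ∑ i ∈ I, ∑ U ∈ S with (topLayer j U).card - 2 = i, upsetWeight j U :=
        (Finset.sum_fiberwise_of_maps_to (fun U hU => Finset.mem_image_of_mem _ hU) _).symm
    _ ≤ ∑ i ∈ I, (1 / 2) ^ (k + l + 1) * (1 / 2) ^ i := Finset.sum_le_sum hfiber
    _ = (1 / 2) ^ (k + l + 1) * ∑ i ∈ I, (1 / 2) ^ i := (Finset.mul_sum _ _ _).symm
    _ ≤ (1 / 2) ^ (k + l + 1) * 2 := by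
        gcongr
        exact (summable_geometric_two.sum_le_tsum I fun _ _ => by positivity).trans_eq
          tsum_geometric_two
    _ = (1 / 2) ^ (k + l) := by rw [pow_succ]; ring

end Expanding

lemma sum_upsetWeight_le_of_isTightCluster (q : IsAdmissible k r l) (hj : j + 1 ≤ k)
    (hW : HasEntropyBound (2 * k) j (3 * (1 / 2) ^ k)) {g t : ℕ}
    {F : Finset (Finset (Finset (Fin (2 * k))))} (hF : ∀ U ∈ F, IsTightCluster j r g t x U) :
    ∑ U ∈ F, upsetWeight j U ≤ 2 * (1 / 2) ^ (7 * k) :=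
  calc ∑ U ∈ F, upsetWeight j U = ∑ _ ∈ F, (1 / 2 : ℝ) ^ g :=
        Finset.sum_congr rfl fun U hU => by rw [upsetWeight, (hF U hU).card_upShadow]
    _ = F.card * (1 / 2) ^ g := by rw [Finset.sum_const, nsmul_eq_mul]
    _ ≤ 2 * (1 / 2) ^ (7 * k) := card_mul_le_of_isTightCluster q hj hW hF

lemma sum_tight_upsetWeight_le (q : IsAdmissible k r l) (hj : j + 1 ≤ k)
    (hW : HasEntropyBound (2 * k) j (3 * (1 / 2) ^ k)) :
    ∑ U ∈ (largeClusters (2 * k) j x).filter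
      (fun U => ¬ r * (topLayer j U).card ≤ (∂⁺ (topLayer j U)).card), upsetWeight j U ≤
      (1 / 2) ^ (k + l) := by
  set S := (largeClusters (2 * k) j x).filter
    (fun U => ¬ r * (topLayer j U).card ≤ (∂⁺ (topLayer j U)).card)
  let sizes (U : Finset (Finset (Fin (2 * k)))) : ℕ × ℕ :=
    ((∂⁺ (topLayer j U)).card, (∂⁺ (topLayer j U)).card - (shadowClosure j (topLayer j U)).card)
  set P := Finset.range (2 ^ (2 * k) + 1) ×ˢ Finset.range (2 ^ (2 * k) + 1)
  have hmaps : ∀ U ∈ S, sizes U ∈ P := by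
    intro U _
    have hcard : (∂⁺ (topLayer j U)).card ≤ 2 ^ (2 * k) := by
      simpa using (∂⁺ (topLayer j U)).card_le_univ
    exact Finset.mem_product.2 ⟨Finset.mem_range_succ_iff.2 hcard,
      Finset.mem_range_succ_iff.2 ((Nat.sub_le _ _).trans hcard)⟩
  have hfiber : ∀ p ∈ P, ∑ U ∈ S with sizes U = p, upsetWeight j U ≤ 2 * (1 / 2) ^ (7 * k) := by
    rintro ⟨g, t⟩ -
    refine sum_upsetWeight_le_of_isTightCluster (x := x) (g := g) (t := t) q hj hW fun U hU => ?_
    simp only [S, sizes, largeClusters, Finset.mem_filter, Prod.mk.injEq] at hU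
    obtain ⟨⟨⟨hcluster, -⟩, hr⟩, hg, ht⟩ := hU
    have hclosure := card_shadowClosure_le hj (topLayer_subset_level U)
    exact ⟨hcluster, hg, by omega, by omega⟩
  have hP : (P.card : ℝ) ≤ 2 ^ (4 * k + 2) := by
    have hone : 2 ^ (2 * k) + 1 ≤ 2 ^ (2 * k + 1) := by
      have := Nat.one_le_two_pow (n := 2 * k)
      omega
    rw [Finset.card_product, Finset.card_range]
    exact_mod_cast (Nat.mul_le_mul hone hone).trans_eq (by ring)
  calc ∑ U ∈ S, upsetWeight j U = ∑ p ∈ P, ∑ U ∈ S with sizes U = p, upsetWeight j U :=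
        (Finset.sum_fiberwise_of_maps_to hmaps _).symm
    _ ≤ P.card * (2 * (1 / 2) ^ (7 * k)) := by
        simpa only [nsmul_eq_mul] using Finset.sum_le_card_nsmul _ _ _ hfiber
    _ ≤ 2 ^ (4 * k + 2) * (2 * (1 / 2) ^ (7 * k)) := by gcongr
    _ = 2 ^ (4 * k + 3) * (1 / 2) ^ (7 * k) := by ring
    _ ≤ (1 / 2) ^ (k + l) :=
        two_pow_mul_half_pow_le (by linarith [q.le, q.mul_le, q.sixteen_le])

lemma largeClusterSum_le_of_hasEntropyBound (q : IsAdmissible k r l) (hj : j + 1 ≤ k)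
    (hW : HasEntropyBound (2 * k) j (3 * (1 / 2) ^ k)) :
    largeClusterSum (2 * k) j x ≤ 2 * (1 / 2) ^ (k + l) := by
  rw [largeClusterSum, ← Finset.sum_filter_add_sum_filter_not _
    (fun U => r * (topLayer j U).card ≤ (∂⁺ (topLayer j U)).card)]
  linarith [sum_expanding_upsetWeight_le q hj hW (x := x),
    sum_tight_upsetWeight_le q hj hW (x := x)]

lemma topLayer_eq_singleton {n : ℕ} {x : Finset (Fin n)} {U : Finset (Finset (Fin n))}
    (hU : U ∈ clusters n j x) (hcard : ¬ 2 ≤ (topLayer j U).card) : topLayer j U = {x} := by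
  have hx := (mem_clusters.1 hU).2.2
  exact Finset.eq_singleton_iff_unique_mem.2
    ⟨hx, fun y hy => Finset.card_le_one.1 (by omega) y hy x hx⟩

lemma sum_singleton_upsetWeight_le (hσ : 3 * (1 / 2 : ℝ) ^ k ≤ 1) (hj : j + 1 ≤ k)
    (hW : HasEntropyBound (2 * k) j (3 * (1 / 2) ^ k)) :
    ∑ U ∈ (clusters (2 * k) j x).filter (fun U => ¬ 2 ≤ (topLayer j U).card), upsetWeight j U ≤
      2 * (1 / 2) ^ k := by
  set F := (clusters (2 * k) j x).filter (fun U => ¬ 2 ≤ (topLayer j U).card)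
  have htop : ∀ U ∈ F, topLayer j U = {x} := fun U hU =>
    topLayer_eq_singleton (Finset.mem_filter.1 hU).1 (Finset.mem_filter.1 hU).2
  have hcard : (F.card : ℝ) ≤ 4 := by
    simpa using hW.card_le_of_card_topLayer_eq (x := x) (s := 1) (by positivity) hσ fun U hU =>
      ⟨(Finset.mem_filter.1 hU).1, by rw [htop U hU, Finset.card_singleton]⟩
  have hweight : ∀ U ∈ F, upsetWeight j U ≤ (1 / 2) ^ (k + 1) := by
    intro U hU
    have hx : x ∈ topLayer j U := by rw [htop U hU, Finset.mem_singleton]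
    refine upsetWeight_le_half_pow (le_trans ?_ (Finset.card_le_card
      (upperCovers_subset_upShadow hx)))
    rw [card_upperCovers, (mem_topLayer.1 hx).2]
    omega
  calc ∑ U ∈ F, upsetWeight j U ≤ F.card * (1 / 2) ^ (k + 1) := by
        simpa only [nsmul_eq_mul] using Finset.sum_le_card_nsmul _ _ _ hweight
    _ ≤ 4 * (1 / 2) ^ (k + 1) := by gcongr
    _ = 2 * (1 / 2) ^ k := by ring

lemma clusterSum_le_of_hasEntropyBound (q : IsAdmissible k r l) (hj : j + 1 ≤ k)
    (hW : HasEntropyBound (2 * k) j (3 * (1 / 2) ^ k)) :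
    clusterSum (2 * k) j x ≤ 3 * (1 / 2) ^ k := by
  have hlarge : largeClusterSum (2 * k) j x ≤ (1 / 2) ^ k :=
    calc largeClusterSum (2 * k) j x ≤ 2 * (1 / 2) ^ (k + l) :=
        largeClusterSum_le_of_hasEntropyBound q hj hW
      _ ≤ 2 * (1 / 2) ^ (k + 1) := by
        gcongr 2 * ?_
        exact pow_le_pow_of_le_one (by norm_num) (by norm_num)
          (Nat.add_le_add_left q.one_le k)
      _ = (1 / 2) ^ k := by ring
  rw [clusterSum, ← Finset.sum_filter_add_sum_filter_not _ (fun U => 2 ≤ (topLayer j U).card)]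
  change largeClusterSum (2 * k) j x + _ ≤ _
  linarith [sum_singleton_upsetWeight_le q.three_mul_half_pow_le_one hj hW (x := x)]

theorem IsAdmissible.hasEntropyBound (q : IsAdmissible k r l) (hj : j + 1 ≤ k) :
    HasEntropyBound (2 * k) j (3 * (1 / 2) ^ k) := by
  induction j with
  | zero =>
    intro A _
    calc ((upsetsOver (2 * k) 0 A).card : ℝ) ≤ 2 ^ A.card := by
          exact_mod_cast card_upsetsOver_zero_le A
      _ ≤ (2 * (1 + 3 * (1 / 2) ^ k)) ^ A.card := by
          gcongr
          linarith [pow_pos (one_half_pos (α := ℝ)) k]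
  | succ j ih =>
    exact fun A hA => card_upsetsOver_succ_le_pow (by omega) (by positivity)
      (fun x => clusterSum_le_of_hasEntropyBound q (by omega) (ih (by omega))) hA

theorem IsAdmissible.clusterSum_le (q : IsAdmissible k r l) (hj : j + 1 ≤ k)
    (x : Finset (Fin (2 * k))) : clusterSum (2 * k) j x ≤ 3 * (1 / 2) ^ k :=
  clusterSum_le_of_hasEntropyBound q hj (q.hasEntropyBound hj)

theorem IsAdmissible.largeClusterSum_le (q : IsAdmissible k r l) (hj : j + 1 ≤ k)
    (x : Finset (Fin (2 * k))) : largeClusterSum (2 * k) j x ≤ 2 * (1 / 2) ^ (k + l) :=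
  largeClusterSum_le_of_hasEntropyBound q hj (q.hasEntropyBound hj)

end ClusterSums

section Parameters

lemma mul_pow_four_le_two_pow {m : ℕ} (hm : 64 ≤ m) :
    1024 * (16 * (8 * m + 19)) ^ 4 ≤ 2 ^ m := by
  induction m, hm using Nat.le_induction with
  | base => norm_num
  | succ m hm ih =>
    have hstep : 6 * (16 * (8 * (m + 1) + 19)) ≤ 7 * (16 * (8 * m + 19)) := by omega
    have hpow := Nat.pow_le_pow_left hstep 4
    rw [mul_pow, mul_pow 7] at hpow
    omega

lemma isAdmissible_of_two_pow_le {k : ℕ} (hk : 2 ^ 64 ≤ k) :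
    IsAdmissible k (16 * (8 * Nat.log 2 k + 19)) (8 * Nat.log 2 k + 19) := by
  have hlog : 64 ≤ Nat.log 2 k := Nat.le_log_of_pow_le one_lt_two hk
  refine ⟨?_, le_rfl, (mul_pow_four_le_two_pow hlog).trans (Nat.pow_log_le_self 2 (by omega))⟩
  have hlt : k < 2 ^ (Nat.log 2 k + 1) := Nat.lt_pow_succ_log_self one_lt_two k
  calc 7 * (2 * k + 1) ^ 8 ≤ 2 ^ 3 * (2 ^ (Nat.log 2 k + 2)) ^ 8 := by
        gcongr
        · norm_num
        · rw [pow_succ]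
          omega
    _ = 2 ^ (8 * Nat.log 2 k + 19) := by ring

end Parameters

section Peierls

open scoped FinsetFamily

variable {n j : ℕ}

/-- The down-sets of the Boolean lattice. They differ from simplicial complexes by the empty set,
which belongs to every nonempty down-set and to no complex. -/
def downSets (n : ℕ) : Finset (Finset (Finset (Fin n))) :=
  Finset.univ.filter fun D => IsLowerSet (D : Set (Finset (Fin n)))

/-- The sets of size at most `j` missing from `D`. -/
def nonFaces (j : ℕ) (D : Finset (Finset (Fin n))) : Finset (Finset (Fin n)) :=
  Finset.univ.filter fun u => u.card ≤ j ∧ u ∉ D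

variable {D K S : Finset (Finset (Fin n))} {x u w : Finset (Fin n)}

lemma mem_downSets : D ∈ downSets n ↔ IsLowerSet (D : Set (Finset (Fin n))) := by simp [downSets]

lemma mem_of_mem_downSets_of_subset (hD : D ∈ downSets n) (hu : u ∈ D) (hwu : w ⊆ u) : w ∈ D :=
  mem_downSets.1 hD hwu hu

lemma mem_nonFaces : u ∈ nonFaces j D ↔ u.card ≤ j ∧ u ∉ D := by simp [nonFaces]

lemma isTruncatedUpset_nonFaces (hD : D ∈ downSets n) : IsTruncatedUpset j (nonFaces j D) where
  card_le _ hu := (mem_nonFaces.1 hu).1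
  mem_of_subset _ hu _ huv hv := mem_nonFaces.2
    ⟨hv, fun h => (mem_nonFaces.1 hu).2 (mem_of_mem_downSets_of_subset hD h huv)⟩

lemma mem_topLayer_nonFaces (hx : x.card = j) (hxD : x ∉ D) : x ∈ topLayer j (nonFaces j D) :=
  mem_topLayer.2 ⟨mem_nonFaces.2 ⟨hx.le, hxD⟩, hx⟩

namespace IsClusterAt

lemma mem_of_subset_of_mem_cluster (h : IsClusterAt j x K (nonFaces j D)) (hu : u ∈ K)
    (hwu : w ⊆ u) (hwD : w ∉ D) : w ∈ K := by
  by_contra hwK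
  have hcard := (mem_nonFaces.1 (h.subset hu)).1
  have hw := Finset.mem_sdiff.2
    ⟨mem_nonFaces.2 ⟨(Finset.card_le_card hwu).trans hcard, hwD⟩, hwK⟩
  exact (Finset.mem_sdiff.1 (h.isTruncatedUpset_sdiff.mem_of_subset w hw u hwu hcard)).2 hu

lemma mem_of_ssubset_of_mem_upShadow (h : IsClusterAt j x K (nonFaces j D))
    (hu : u ∈ ∂⁺ (topLayer j K)) (hwu : w ⊂ u) (hwD : w ∉ D) : w ∈ K := by
  by_contra hwK
  have hcard : u.card = j + 1 := mem_level.1 (upShadow_subset_level (topLayer_subset_level K) hu)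
  have hwj : w.card ≤ j := by have := Finset.card_lt_card hwu; omega
  obtain ⟨v, hwv, hvu, hv⟩ := Finset.exists_subsuperset_card_eq hwu.subset hwj (by omega)
  have hvtop : v ∈ topLayer j (nonFaces j D \ K) :=
    mem_topLayer.2 ⟨h.isTruncatedUpset_sdiff.mem_of_subset w
      (Finset.mem_sdiff.2 ⟨mem_nonFaces.2 ⟨hwj, hwD⟩, hwK⟩) v hwv hv.le, hv⟩
  exact Finset.disjoint_left.1 h.disjoint_upShadow hu
    (upperCovers_subset_upShadow hvtop (mem_upperCovers.2 ⟨hvu, by omega⟩))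

lemma union_mem_downSets (h : IsClusterAt j x K (nonFaces j D)) (hD : D ∈ downSets n)
    (hS : S ⊆ ∂⁺ (topLayer j K)) : D ∪ K ∪ S ∈ downSets n := by
  refine mem_downSets.2 fun u w hwu hu => ?_
  simp only [Finset.coe_union, Set.mem_union, Finset.mem_coe] at hu ⊢
  by_cases hwD : w ∈ D
  · exact .inl (.inl hwD)
  rcases hu with (hu | hu) | hu
  · exact absurd (mem_of_mem_downSets_of_subset hD hu hwu) hwD
  · exact .inl (.inr (h.mem_of_subset_of_mem_cluster hu hwu hwD))
  · rcases eq_or_ssubset_of_subset hwu with rfl | hwu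
    · exact .inr hu
    · exact .inl (.inr (h.mem_of_ssubset_of_mem_upShadow (hS hu) hwu hwD))

lemma disjoint_union_upShadow (h : IsClusterAt j x K (nonFaces j D)) (hD : D ∈ downSets n) :
    Disjoint D (K ∪ ∂⁺ (topLayer j K)) := by
  rw [Finset.disjoint_union_right]
  refine ⟨Finset.disjoint_right.2 fun u hu => (mem_nonFaces.1 (h.subset hu)).2,
    Finset.disjoint_right.2 fun u hu huD => ?_⟩
  obtain ⟨c, hc, hcu⟩ := mem_upShadow_iff_exists_mem_upperCovers.1 hu
  exact (mem_nonFaces.1 (h.subset (mem_topLayer.1 hc).1)).2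
    (mem_of_mem_downSets_of_subset hD huD (mem_upperCovers.1 hcu).1)

end IsClusterAt

lemma IsTruncatedUpset.disjoint_upShadow_topLayer (hK : IsTruncatedUpset j K) :
    Disjoint K (∂⁺ (topLayer j K)) := by
  rw [Finset.disjoint_left]
  intro u hu hu'
  have := hK.card_le u hu
  have := mem_level.1 (upShadow_subset_level (topLayer_subset_level K) hu')
  omega

/-- Filling in the cluster `K` of non-faces leaves every set of its upper shadow free to be a face
or not. -/
lemma card_isClusterAt_le (j : ℕ) (x : Finset (Fin n)) (K : Finset (Finset (Fin n))) :
    (((downSets n).filter fun D => IsClusterAt j x K (nonFaces j D)).card : ℝ) ≤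
      upsetWeight j K * (downSets n).card := by
  set F := (downSets n).filter fun D => IsClusterAt j x K (nonFaces j D)
  set B := ∂⁺ (topLayer j K)
  have hF : ∀ D ∈ F, D ∈ downSets n ∧ IsClusterAt j x K (nonFaces j D) :=
    fun D hD => Finset.mem_filter.1 hD
  have hrecover : ∀ D ∈ F, ∀ S ⊆ B, (D ∪ K ∪ S) \ (K ∪ B) = D ∧ (D ∪ K ∪ S) ∩ B = S := by
    intro D hD S hS
    obtain ⟨hD, h⟩ := hF D hD
    have hdisj := Finset.disjoint_left.1 (h.disjoint_union_upShadow hD)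
    have hKB := Finset.disjoint_left.1
      (mem_clusters.1 h.mem_clusters).1.disjoint_upShadow_topLayer
    constructor <;> grind
  have hcard : (F ×ˢ B.powerset).card ≤ (downSets n).card := by
    refine Finset.card_le_card_of_injOn (fun p => p.1 ∪ K ∪ p.2) ?_ ?_
    · rintro ⟨D, S⟩ hp
      obtain ⟨hD, hS⟩ := Finset.mem_product.1 hp
      exact (hF D hD).2.union_mem_downSets (hF D hD).1 (Finset.mem_powerset.1 hS)
    · rintro ⟨D, S⟩ hp ⟨D', S'⟩ hp' (heq : D ∪ K ∪ S = D' ∪ K ∪ S')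
      obtain ⟨hD, hS⟩ := Finset.mem_product.1 hp
      obtain ⟨hD', hS'⟩ := Finset.mem_product.1 hp'
      obtain ⟨hDeq, hSeq⟩ := hrecover D hD S (Finset.mem_powerset.1 hS)
      obtain ⟨hDeq', hSeq'⟩ := hrecover D' hD' S' (Finset.mem_powerset.1 hS')
      rw [heq] at hDeq hSeq
      exact Prod.ext (hDeq.symm.trans hDeq') (hSeq.symm.trans hSeq')
  rw [Finset.card_product, Finset.card_powerset] at hcard
  rw [upsetWeight, one_div, inv_pow, ← div_eq_inv_mul, le_div_iff₀ (by positivity)]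
  exact_mod_cast hcard

lemma card_le_sum_upsetWeight_mul {G T : Finset (Finset (Finset (Fin n)))}
    (hG : ∀ D ∈ G, D ∈ downSets n ∧ ∃ K ∈ T, IsClusterAt j x K (nonFaces j D)) :
    (G.card : ℝ) ≤ (∑ K ∈ T, upsetWeight j K) * (downSets n).card := by
  have hcover :
      G ⊆ T.biUnion fun K => (downSets n).filter fun D => IsClusterAt j x K (nonFaces j D) := by
    intro D hD
    obtain ⟨hD, K, hK, h⟩ := hG D hD
    exact Finset.mem_biUnion.2 ⟨K, hK, Finset.mem_filter.2 ⟨hD, h⟩⟩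
  calc (G.card : ℝ)
      ≤ ∑ K ∈ T, (((downSets n).filter fun D => IsClusterAt j x K (nonFaces j D)).card : ℝ) := by
        exact_mod_cast (Finset.card_le_card hcover).trans Finset.card_biUnion_le
    _ ≤ ∑ K ∈ T, upsetWeight j K * (downSets n).card :=
        Finset.sum_le_sum fun K _ => card_isClusterAt_le j x K
    _ = (∑ K ∈ T, upsetWeight j K) * (downSets n).card := (Finset.sum_mul _ _ _).symm

lemma card_notMem_le_clusterSum_mul (hj : j ≤ n) (hx : x.card = j) :
    (((downSets n).filter fun D => x ∉ D).card : ℝ) ≤ clusterSum n j x * (downSets n).card := by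
  refine card_le_sum_upsetWeight_mul (x := x) fun D hD => ?_
  obtain ⟨hD, hxD⟩ := Finset.mem_filter.1 hD
  obtain ⟨K, hK⟩ := (isTruncatedUpset_nonFaces hD).exists_isClusterAt hj
    (mem_topLayer_nonFaces hx hxD)
  exact ⟨hD, K, hK.mem_clusters, hK⟩

/-- A non-face `w` of size less than `j` lies below several non-faces of size `j`, all in the same
cluster. -/
lemma IsClusterAt.mem_largeClusters (h : IsClusterAt j x K (nonFaces j D)) (hD : D ∈ downSets n)
    (hj : j < n) (hx : x.card = j) (hwx : w ⊆ x) (hw : w.card < j) (hwD : w ∉ D) :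
    K ∈ largeClusters n j x := by
  refine Finset.mem_filter.2 ⟨h.mem_clusters, ?_⟩
  obtain ⟨b, hbx, hbw⟩ : ∃ b ∈ x, b ∉ w := Finset.exists_mem_notMem_of_card_lt_card (by omega)
  obtain ⟨a, -, hax⟩ : ∃ a ∈ Finset.univ, a ∉ x :=
    Finset.exists_mem_notMem_of_card_lt_card (by simpa [hx] using hj)
  have hwy : w ⊆ insert a (x.erase b) := by grind
  have hxK := (_root_.mem_clusters.1 h.mem_clusters).2.2
  have hyK : insert a (x.erase b) ∈ topLayer j K :=
    (isTruncatedUpset_nonFaces hD).mem_of_closed h.closed (mem_nonFaces.2 ⟨hw.le, hwD⟩) hwx hwy hx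
      ((card_insert_erase_of_mem hax hbx).trans hx) hxK
  exact Finset.one_lt_card.2 ⟨x, hxK, _, hyK,
    fun heq => hax (heq ▸ Finset.mem_insert_self a (x.erase b))⟩

lemma exists_card_notMem_le_largeClusterSum_mul (hj : j < n) (hw : w.card < j) :
    ∃ x, (((downSets n).filter fun D => w ∉ D).card : ℝ) ≤
      largeClusterSum n j x * (downSets n).card := by
  obtain ⟨x, hwx, hx⟩ := exists_superset_card_eq hj.le hw.le
  refine ⟨x, card_le_sum_upsetWeight_mul (x := x) fun D hD => ?_⟩
  obtain ⟨hD, hwD⟩ := Finset.mem_filter.1 hD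
  have hxD : x ∉ D := fun hxD => hwD (mem_of_mem_downSets_of_subset hD hxD hwx)
  obtain ⟨K, hK⟩ := (isTruncatedUpset_nonFaces hD).exists_isClusterAt hj.le
    (mem_topLayer_nonFaces hx hxD)
  exact ⟨hD, K, hK.mem_largeClusters hD hj hx hwx hw hwD, hK⟩

lemma sum_card_nonFaces (j : ℕ) :
    ∑ D ∈ downSets n, (nonFaces j D).card =
      ∑ u : Finset (Fin n) with u.card ≤ j, ((downSets n).filter fun D => u ∉ D).card := by
  have h := Finset.sum_card_bipartiteAbove_eq_sum_card_bipartiteBelow (s := downSets n)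
    (t := Finset.univ.filter fun u : Finset (Fin n) => u.card ≤ j) (fun D u => u ∉ D)
  simpa only [nonFaces, Finset.bipartiteAbove, Finset.bipartiteBelow, Finset.filter_filter] using h

lemma IsAdmissible.card_notMem_le {k r l : ℕ} (q : IsAdmissible k r l) {u : Finset (Fin (2 * k))}
    (hu : u.card ≤ k - 1) : (((downSets (2 * k)).filter fun D => u ∉ D).card : ℝ) ≤
      ((if u.card = k - 1 then 3 * (1 / 2 : ℝ) ^ k else 0) + 2 * (1 / 2) ^ (k + l)) *
        (downSets (2 * k)).card := by
  have hk : 1 ≤ k := by linarith [q.mul_le, q.sixteen_le]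
  split_ifs with htop
  · refine (card_notMem_le_clusterSum_mul (by omega) htop).trans ?_
    gcongr
    linarith [q.clusterSum_le (j := k - 1) (by omega) u, pow_pos (one_half_pos (α := ℝ)) (k + l)]
  · obtain ⟨x, hx⟩ := exists_card_notMem_le_largeClusterSum_mul (n := 2 * k) (j := k - 1) (w := u)
      (by omega) (by omega)
    refine hx.trans ?_
    gcongr
    linarith [q.largeClusterSum_le (j := k - 1) (by omega) x]

theorem IsAdmissible.sum_card_nonFaces_le {k r l : ℕ} (q : IsAdmissible k r l) :
    (∑ D ∈ downSets (2 * k), ((nonFaces (k - 1) D).card : ℝ)) ≤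
      ((2 * k).choose (k - 1) * (3 * (1 / 2) ^ k) + 4 ^ k * (2 * (1 / 2) ^ (k + l))) *
        (downSets (2 * k)).card := by
  have hlevel : (Finset.univ.filter fun u : Finset (Fin (2 * k)) => u.card = k - 1).card =
      (2 * k).choose (k - 1) := by
    rw [Finset.univ_filter_card_eq, Finset.card_powersetCard, Finset.card_univ, Fintype.card_fin]
  calc (∑ D ∈ downSets (2 * k), ((nonFaces (k - 1) D).card : ℝ))
      = ∑ u : Finset (Fin (2 * k)) with u.card ≤ k - 1,
          (((downSets (2 * k)).filter fun D => u ∉ D).card : ℝ) := by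
        exact_mod_cast sum_card_nonFaces (k - 1)
    _ ≤ ∑ u : Finset (Fin (2 * k)) with u.card ≤ k - 1,
          ((if u.card = k - 1 then 3 * (1 / 2 : ℝ) ^ k else 0) + 2 * (1 / 2) ^ (k + l)) *
            (downSets (2 * k)).card :=
        Finset.sum_le_sum fun u hu => q.card_notMem_le (Finset.mem_filter.1 hu).2
    _ ≤ ∑ u : Finset (Fin (2 * k)),
          ((if u.card = k - 1 then 3 * (1 / 2 : ℝ) ^ k else 0) + 2 * (1 / 2) ^ (k + l)) *
            (downSets (2 * k)).card :=
        Finset.sum_le_sum_of_subset_of_nonneg (Finset.subset_univ _) fun u _ _ => by positivity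
    _ = _ := by
        rw [← Finset.sum_mul, Finset.sum_add_distrib, ← Finset.sum_filter, Finset.sum_const,
          Finset.sum_const, hlevel, nsmul_eq_mul, nsmul_eq_mul, Finset.card_univ,
          Fintype.card_finset, Fintype.card_fin, pow_mul]
        norm_num

end Peierls

section Duality

variable {n k : ℕ} {D : Finset (Finset (Fin n))} {u : Finset (Fin n)}

/-- The faces of size greater than `k`. -/
def largeFaces (k : ℕ) (D : Finset (Finset (Fin n))) : Finset (Finset (Fin n)) :=
  D.filter fun u => k < u.card

/-- The Alexander dual: the sets whose complement is not a face. -/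
def alexanderDual (D : Finset (Finset (Fin n))) : Finset (Finset (Fin n)) :=
  Finset.univ.filter fun u => uᶜ ∉ D

lemma mem_largeFaces : u ∈ largeFaces k D ↔ u ∈ D ∧ k < u.card := Finset.mem_filter

lemma mem_alexanderDual : u ∈ alexanderDual D ↔ uᶜ ∉ D := by simp [alexanderDual]

lemma alexanderDual_alexanderDual (D : Finset (Finset (Fin n))) :
    alexanderDual (alexanderDual D) = D := by
  ext u
  simp [mem_alexanderDual]

lemma alexanderDual_mem_downSets (hD : D ∈ downSets n) : alexanderDual D ∈ downSets n :=
  mem_downSets.2 fun _ _ hwu hu => mem_alexanderDual.2 fun hw => mem_alexanderDual.1 hu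
    (mem_of_mem_downSets_of_subset hD hw (Finset.compl_subset_compl.2 hwu))

lemma card_compl_add_card (u : Finset (Fin n)) : uᶜ.card + u.card = n := by
  rw [Finset.card_compl_add_card, Fintype.card_fin]

lemma card_largeFaces (hk : 1 ≤ k) (D : Finset (Finset (Fin (2 * k)))) :
    (largeFaces k D).card = (nonFaces (k - 1) (alexanderDual D)).card := by
  refine Finset.card_nbij' compl compl (fun u hu => ?_) (fun u hu => ?_)
    (fun u _ => compl_compl u) (fun u _ => compl_compl u)
  all_goals
    have hcard := card_compl_add_card u
    simp only [Finset.mem_coe, mem_largeFaces, mem_nonFaces, mem_alexanderDual, compl_compl,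
      not_not] at hu ⊢
  · exact ⟨by omega, hu.1⟩
  · exact ⟨hu.2, by omega⟩

lemma sum_card_largeFaces (hk : 1 ≤ k) :
    ∑ D ∈ downSets (2 * k), ((largeFaces k D).card : ℝ) =
      ∑ D ∈ downSets (2 * k), ((nonFaces (k - 1) D).card : ℝ) :=
  Finset.sum_nbij' alexanderDual alexanderDual (fun _ => alexanderDual_mem_downSets)
    (fun _ => alexanderDual_mem_downSets) (fun D _ => alexanderDual_alexanderDual D)
    (fun D _ => alexanderDual_alexanderDual D) fun D _ => by rw [card_largeFaces hk]

end Duality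

section Toggle

variable {n : ℕ} {D : Finset (Finset (Fin n))} {y z : Finset (Fin n)}

/-- Membership of `y` in the down-set `D` can be changed without affecting any other set. -/
def IsFree (D : Finset (Finset (Fin n))) (y : Finset (Fin n)) : Prop :=
  (∀ z, z ⊂ y → z ∈ D) ∧ ∀ z, y ⊂ z → z ∉ D

/-- The `±1`-valued indicator of `D`. -/
def faceSign (D : Finset (Finset (Fin n))) (y : Finset (Fin n)) : ℝ :=
  if y ∈ D then 1 else -1

/-- The `±1`-valued indicator of `D` restricted to the free sets. -/
def freeSign (D : Finset (Finset (Fin n))) (y : Finset (Fin n)) : ℝ :=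
  if IsFree D y then faceSign D y else 0

/-- Changes the membership of `y` in `D` when `y` is free. -/
def toggle (y : Finset (Fin n)) (D : Finset (Finset (Fin n))) : Finset (Finset (Fin n)) :=
  if IsFree D y then symmDiff D {y} else D

lemma mem_toggle_of_ne (h : z ≠ y) : z ∈ toggle y D ↔ z ∈ D := by
  unfold toggle
  split_ifs <;> simp [Finset.mem_symmDiff, h]

lemma mem_toggle_self (h : IsFree D y) : y ∈ toggle y D ↔ y ∉ D := by
  simp [toggle, h, Finset.mem_symmDiff]

lemma isFree_toggle (h : z.card = y.card) : IsFree (toggle y D) z ↔ IsFree D z := by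
  have hbelow : ∀ w, w ⊂ z → w ≠ y := by
    rintro w hw rfl
    exact (Finset.card_lt_card hw).ne' h
  have habove : ∀ w, z ⊂ w → w ≠ y := by
    rintro w hw rfl
    exact (Finset.card_lt_card hw).ne h
  exact and_congr (forall₂_congr fun w hw => mem_toggle_of_ne (hbelow w hw))
    (forall₂_congr fun w hw => not_congr (mem_toggle_of_ne (habove w hw)))

lemma toggle_toggle (y : Finset (Fin n)) (D : Finset (Finset (Fin n))) :
    toggle y (toggle y D) = D := by
  by_cases hy : IsFree D y
  · rw [toggle, if_pos ((isFree_toggle rfl).2 hy), toggle, if_pos hy,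
      symmDiff_symmDiff_cancel_right]
  · simp only [toggle, if_neg hy]

lemma toggle_mem_downSets (y : Finset (Fin n)) (hD : D ∈ downSets n) : toggle y D ∈ downSets n := by
  by_cases hy : IsFree D y
  swap
  · rwa [toggle, if_neg hy]
  refine mem_downSets.2 fun x z hzx (hx : x ∈ toggle y D) => (?_ : z ∈ toggle y D)
  rcases eq_or_ssubset_of_subset hzx with rfl | hss
  · exact hx
  rcases eq_or_ne x y with rfl | hxy
  · exact (mem_toggle_of_ne hss.ne).2 (hy.1 z hss)
  rw [mem_toggle_of_ne hxy] at hx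
  rcases eq_or_ne z y with rfl | hzy
  · exact absurd hx (hy.2 x hss)
  · exact (mem_toggle_of_ne hzy).2 (mem_of_mem_downSets_of_subset hD hx hzx)

lemma freeSign_toggle_self (y : Finset (Fin n)) (D : Finset (Finset (Fin n))) :
    freeSign (toggle y D) y = -freeSign D y := by
  by_cases hy : IsFree D y
  · by_cases hmem : y ∈ D <;>
      simp [freeSign, faceSign, isFree_toggle, mem_toggle_self, hy, hmem]
  · simp [freeSign, isFree_toggle, hy]

lemma freeSign_toggle_of_ne (D : Finset (Finset (Fin n))) (hcard : z.card = y.card) (hne : z ≠ y) :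
    freeSign (toggle y D) z = freeSign D z := by
  simp only [freeSign, faceSign, isFree_toggle hcard, mem_toggle_of_ne hne]

lemma freeSign_mul_self_le_one (D : Finset (Finset (Fin n))) (y : Finset (Fin n)) :
    freeSign D y * freeSign D y ≤ 1 := by
  unfold freeSign faceSign
  split_ifs <;> norm_num

lemma sum_freeSign_mul_freeSign (hcard : z.card = y.card) (hne : z ≠ y) :
    ∑ D ∈ downSets n, freeSign D y * freeSign D z = 0 := by
  have hneg : ∑ D ∈ downSets n, freeSign D y * freeSign D z =
      ∑ D ∈ downSets n, -(freeSign D y * freeSign D z) :=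
    Finset.sum_nbij' (toggle y) (toggle y) (fun _ => toggle_mem_downSets y)
      (fun _ => toggle_mem_downSets y) (fun D _ => toggle_toggle y D)
      (fun D _ => toggle_toggle y D) fun D _ => by
        rw [freeSign_toggle_self, freeSign_toggle_of_ne D hcard hne, neg_mul, neg_neg]
  rw [Finset.sum_neg_distrib] at hneg
  linarith

lemma sum_sq_sum_freeSign_le (n k : ℕ) :
    ∑ D ∈ downSets n, (∑ y ∈ level n k, freeSign D y) ^ 2 ≤ n.choose k * (downSets n).card := by
  have hrow : ∀ y ∈ level n k,
      ∑ z ∈ level n k, ∑ D ∈ downSets n, freeSign D y * freeSign D z ≤ (downSets n).card := by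
    intro y hy
    rw [Finset.sum_eq_single_of_mem y hy fun z hz hne =>
      sum_freeSign_mul_freeSign ((mem_level.1 hz).trans (mem_level.1 hy).symm) hne]
    simpa using Finset.sum_le_sum fun D (_ : D ∈ downSets n) => freeSign_mul_self_le_one D y
  calc ∑ D ∈ downSets n, (∑ y ∈ level n k, freeSign D y) ^ 2
      = ∑ y ∈ level n k, ∑ z ∈ level n k, ∑ D ∈ downSets n, freeSign D y * freeSign D z := by
        simp only [sq, Finset.sum_mul_sum]
        rw [Finset.sum_comm]
        exact Finset.sum_congr rfl fun y _ => Finset.sum_comm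
    _ ≤ ∑ _ ∈ level n k, ((downSets n).card : ℝ) := Finset.sum_le_sum hrow
    _ = n.choose k * (downSets n).card := by simp [level]

end Toggle

section AlternatingSum

variable {n k : ℕ} {x : Finset (Fin (2 * k))}

/-- The alternating face count, which is minus the reduced Euler characteristic. -/
def alternatingSum (D : Finset (Finset (Fin n))) : ℝ := ∑ x ∈ D, (-1) ^ x.card

/-- The sets away from level `k` on which `D` differs from the down-set of all sets of size less
than `k`. -/
def defectCount (k : ℕ) (D : Finset (Finset (Fin n))) : ℕ :=
  (nonFaces (k - 1) D).card + (largeFaces k D).card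

/-- The sets of size `k` that are not free. -/
def rigidSets (k : ℕ) (D : Finset (Finset (Fin n))) : Finset (Finset (Fin n)) :=
  (level n k).filter fun y => ¬ IsFree D y

/-- The `±1`-valued indicator of the sets of size less than `k`, vanishing on level `k`. -/
def levelSign (k : ℕ) (x : Finset (Fin n)) : ℝ :=
  if x.card < k then 1 else if x.card = k then 0 else -1

variable {D : Finset (Finset (Fin (2 * k)))}

lemma rigidSets_subset (hk : 1 ≤ k) (hD : D ∈ downSets (2 * k)) :
    rigidSets k D ⊆ (topLayer (k - 1) (nonFaces (k - 1) D)).biUnion upperCovers ∪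
      (topLayer (k + 1) (largeFaces k D)).biUnion lowerCovers := by
  intro y hy
  obtain ⟨hylevel, hyfree⟩ := Finset.mem_filter.1 hy
  have hycard := mem_level.1 hylevel
  rw [Finset.mem_union, Finset.mem_biUnion, Finset.mem_biUnion]
  rcases not_and_or.1 hyfree with hbelow | habove
  · push Not at hbelow
    obtain ⟨z, hzy, hzD⟩ := hbelow
    have hlt := Finset.card_lt_card hzy
    obtain ⟨w, hzw, hwy, hw⟩ := Finset.exists_subsuperset_card_eq hzy.subset
      (n := k - 1) (by omega) (by omega)
    exact .inl ⟨w, mem_topLayer_nonFaces hw fun hwD =>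
      hzD (mem_of_mem_downSets_of_subset hD hwD hzw), mem_upperCovers.2 ⟨hwy, by omega⟩⟩
  · push Not at habove
    obtain ⟨z, hyz, hzD⟩ := habove
    have hlt := Finset.card_lt_card hyz
    obtain ⟨w, hyw, hwz, hw⟩ := Finset.exists_subsuperset_card_eq hyz.subset
      (n := k + 1) (by omega) (by omega)
    exact .inr ⟨w, mem_topLayer.2 ⟨mem_largeFaces.2
      ⟨mem_of_mem_downSets_of_subset hD hzD hwz, by omega⟩, hw⟩,
      mem_lowerCovers.2 ⟨hyw, by omega⟩⟩

lemma card_rigidSets_le (hk : 1 ≤ k) (hD : D ∈ downSets (2 * k)) :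
    (rigidSets k D).card ≤ defectCount k D * (k + 1) := by
  calc (rigidSets k D).card
      ≤ ((topLayer (k - 1) (nonFaces (k - 1) D)).biUnion upperCovers).card +
          ((topLayer (k + 1) (largeFaces k D)).biUnion lowerCovers).card :=
        (Finset.card_le_card (rigidSets_subset hk hD)).trans (Finset.card_union_le _ _)
    _ ≤ (topLayer (k - 1) (nonFaces (k - 1) D)).card * (k + 1) +
          (topLayer (k + 1) (largeFaces k D)).card * (k + 1) := by
        gcongr
        · refine Finset.card_biUnion_le_card_mul _ _ _ fun u hu => ?_
          rw [card_upperCovers, (mem_topLayer.1 hu).2]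
          omega
        · refine Finset.card_biUnion_le_card_mul _ _ _ fun u hu => ?_
          rw [card_lowerCovers, (mem_topLayer.1 hu).2]
    _ ≤ defectCount k D * (k + 1) := by
        rw [defectCount, add_mul]
        gcongr <;> exact Finset.filter_subset _ _

lemma two_mul_alternatingSum (hn : n ≠ 0) (D : Finset (Finset (Fin n))) :
    2 * alternatingSum D = ∑ x, faceSign D x * (-1) ^ x.card := by
  have : NeZero n := ⟨hn⟩
  have htotal : ∑ x : Finset (Fin n), (-1 : ℝ) ^ x.card = 0 := by
    rw [← Finset.powerset_univ]
    exact_mod_cast Finset.sum_powerset_neg_one_pow_card_of_nonempty Finset.univ_nonempty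
  have hD : alternatingSum D = ∑ x, if x ∈ D then (-1 : ℝ) ^ x.card else 0 := by
    simp [alternatingSum]
  rw [← sub_zero (2 * _), ← htotal, hD, Finset.mul_sum, ← Finset.sum_sub_distrib]
  refine Finset.sum_congr rfl fun x _ => ?_
  unfold faceSign
  split_ifs <;> ring

lemma neg_one_pow_card_compl (x : Finset (Fin (2 * k))) :
    (-1 : ℝ) ^ xᶜ.card = (-1) ^ x.card := by
  have heven : Even (xᶜ.card + x.card) := ⟨k, by rw [card_compl_add_card, two_mul]⟩
  exact neg_one_pow_congr (Nat.even_add.1 heven)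

lemma levelSign_compl (x : Finset (Fin (2 * k))) : levelSign k xᶜ = -levelSign k x := by
  have hcard := card_compl_add_card x
  unfold levelSign
  split_ifs <;> first | omega | norm_num

lemma sum_levelSign_mul (k : ℕ) :
    ∑ x : Finset (Fin (2 * k)), levelSign k x * (-1) ^ x.card = 0 := by
  have hneg : ∑ x : Finset (Fin (2 * k)), levelSign k x * (-1) ^ x.card =
      ∑ x : Finset (Fin (2 * k)), -(levelSign k x * (-1) ^ x.card) :=
    Finset.sum_nbij' compl compl (by simp) (by simp) (by simp) (by simp) fun x _ => by
      rw [levelSign_compl, neg_one_pow_card_compl, neg_mul, neg_neg]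
  rw [Finset.sum_neg_distrib] at hneg
  linarith

lemma abs_faceSign_sub_le (hk : 1 ≤ k) :
    |faceSign D x - levelSign k x - if x ∈ level (2 * k) k then freeSign D x else 0| ≤
      (if x ∈ nonFaces (k - 1) D then 2 else 0) + (if x ∈ largeFaces k D then 2 else 0) +
        if x ∈ rigidSets k D then 1 else 0 := by
  have hlt : x.card ≤ k - 1 ↔ x.card < k := by omega
  simp only [mem_nonFaces, mem_largeFaces, rigidSets, Finset.mem_filter, mem_level, faceSign,
    levelSign, freeSign, hlt]
  rcases lt_trichotomy x.card k with hx | hx | hx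
  · by_cases hmem : x ∈ D <;> norm_num [hx, hx.ne, hx.not_gt, hmem]
  · by_cases hmem : x ∈ D <;> by_cases hfree : IsFree D x <;> norm_num [hx, hmem, hfree]
  · by_cases hmem : x ∈ D <;> norm_num [hx, hx.ne', hx.not_gt, hmem]

lemma sum_abs_faceSign_sub_le (hk : 1 ≤ k) (hD : D ∈ downSets (2 * k)) :
    ∑ x, |faceSign D x - levelSign k x - if x ∈ level (2 * k) k then freeSign D x else 0| ≤
      (k + 3) * defectCount k D := by
  have hrigid : ((rigidSets k D).card : ℝ) ≤ defectCount k D * (k + 1) := by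
    exact_mod_cast card_rigidSets_le hk hD
  calc ∑ x, |faceSign D x - levelSign k x - if x ∈ level (2 * k) k then freeSign D x else 0|
      ≤ ∑ x, ((if x ∈ nonFaces (k - 1) D then (2 : ℝ) else 0) +
          (if x ∈ largeFaces k D then 2 else 0) + if x ∈ rigidSets k D then 1 else 0) :=
        Finset.sum_le_sum fun x _ => abs_faceSign_sub_le hk
    _ = 2 * defectCount k D + (rigidSets k D).card := by
        simp only [Finset.sum_add_distrib, Finset.sum_ite_mem, Finset.univ_inter, Finset.sum_const,
          nsmul_eq_mul, defectCount, Nat.cast_add]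
        ring
    _ ≤ (k + 3) * defectCount k D := by linarith

theorem two_mul_abs_alternatingSum_le (hk : 1 ≤ k) (hD : D ∈ downSets (2 * k)) :
    2 * |alternatingSum D| ≤
      |∑ y ∈ level (2 * k) k, freeSign D y| + (k + 3) * defectCount k D := by
  set middle := fun x => if x ∈ level (2 * k) k then freeSign D x else 0
  have hmiddle : ∑ x, middle x * (-1) ^ x.card =
      (-1) ^ k * ∑ y ∈ level (2 * k) k, freeSign D y := by
    simp only [middle, ite_mul, zero_mul, Finset.sum_ite_mem, Finset.univ_inter, Finset.mul_sum]
    exact Finset.sum_congr rfl fun y hy => by rw [mem_level.1 hy, mul_comm]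
  have hdecomp : 2 * alternatingSum D = (-1) ^ k * ∑ y ∈ level (2 * k) k, freeSign D y +
      ∑ x, (faceSign D x - levelSign k x - middle x) * (-1) ^ x.card := by
    simp only [sub_mul, Finset.sum_sub_distrib]
    rw [two_mul_alternatingSum (by omega), sum_levelSign_mul, hmiddle]
    ring
  have hrest : |∑ x, (faceSign D x - levelSign k x - middle x) * (-1) ^ x.card| ≤
      (k + 3) * defectCount k D := by
    refine (Finset.abs_sum_le_sum_abs _ _).trans ?_
    simpa only [abs_mul, abs_neg_one_pow, mul_one] using sum_abs_faceSign_sub_le hk hD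
  calc 2 * |alternatingSum D| = |2 * alternatingSum D| := by rw [abs_mul, abs_two]
    _ ≤ |(-1) ^ k * ∑ y ∈ level (2 * k) k, freeSign D y| + (k + 3) * defectCount k D := by
        rw [hdecomp]
        exact (abs_add_le _ _).trans (by gcongr)
    _ = |∑ y ∈ level (2 * k) k, freeSign D y| + (k + 3) * defectCount k D := by
        rw [abs_mul, abs_neg_one_pow, one_mul]

end AlternatingSum

section Concentration

lemma centralBinom_sq_mul_le (k : ℕ) : k.centralBinom ^ 2 * (2 * k + 1) ≤ 16 ^ k := by
  induction k with
  | zero => simp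
  | succ k ih =>
    refine Nat.le_of_mul_le_mul_left ?_ (pow_pos k.succ_pos 2)
    calc (k + 1) ^ 2 * ((k + 1).centralBinom ^ 2 * (2 * (k + 1) + 1))
        = ((k + 1) * (k + 1).centralBinom) ^ 2 * (2 * k + 3) := by ring
      _ = k.centralBinom ^ 2 * (2 * k + 1) * (4 * (2 * k + 1) * (2 * k + 3)) := by
          rw [Nat.succ_mul_centralBinom_succ]
          ring
      _ ≤ 16 ^ k * (16 * (k + 1) ^ 2) := Nat.mul_le_mul ih (by nlinarith)
      _ = (k + 1) ^ 2 * 16 ^ (k + 1) := by ring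

lemma choose_le_four_pow_div_sqrt {k : ℕ} (hk : 1 ≤ k) (j : ℕ) :
    ((2 * k).choose j : ℝ) ≤ 4 ^ k / √k := by
  have hpos : (0 : ℝ) < k := by exact_mod_cast hk
  have hsq : (k.centralBinom : ℝ) ^ 2 * (2 * k + 1) ≤ 16 ^ k := by
    exact_mod_cast centralBinom_sq_mul_le k
  calc ((2 * k).choose j : ℝ) ≤ k.centralBinom := by
        exact_mod_cast Nat.choose_le_centralBinom j k
    _ ≤ 4 ^ k / √k := by
        rw [le_div_iff₀ (Real.sqrt_pos.2 hpos)]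
        refine le_of_sq_le_sq ?_ (by positivity)
        calc (k.centralBinom * √k) ^ 2 = (k.centralBinom : ℝ) ^ 2 * k := by
              rw [mul_pow, Real.sq_sqrt hpos.le]
          _ ≤ (k.centralBinom : ℝ) ^ 2 * (2 * k + 1) := by
              gcongr
              linarith
          _ ≤ 16 ^ k := hsq
          _ = (4 ^ k) ^ 2 := by
              rw [← pow_mul, mul_comm, pow_mul]
              norm_num

lemma card_filter_lt_le_div {α : Type*} {s : Finset α} {f : α → ℝ} {t : ℝ} (ht : 0 < t)
    (hf : ∀ a ∈ s, 0 ≤ f a) : ((s.filter fun a => t < f a).card : ℝ) ≤ (∑ a ∈ s, f a) / t := by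
  rw [le_div_iff₀ ht, ← nsmul_eq_mul]
  calc (s.filter fun a => t < f a).card • t ≤ ∑ a ∈ s.filter fun a => t < f a, f a :=
        Finset.card_nsmul_le_sum _ _ _ fun a ha => (Finset.mem_filter.1 ha).2.le
    _ ≤ ∑ a ∈ s, f a :=
        Finset.sum_le_sum_of_subset_of_nonneg (Finset.filter_subset _ _) fun a ha _ => hf a ha

variable {k r l : ℕ}

lemma card_lt_sq_sum_freeSign_le (hk : 1 ≤ k) :
    (((downSets (2 * k)).filter fun D =>
      (k * 2 ^ k : ℝ) ^ 2 < (∑ y ∈ level (2 * k) k, freeSign D y) ^ 2).card : ℝ) ≤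
        1 / √k * (downSets (2 * k)).card := by
  have hone : (1 : ℝ) ≤ k := by exact_mod_cast hk
  calc _ ≤ (∑ D ∈ downSets (2 * k), (∑ y ∈ level (2 * k) k, freeSign D y) ^ 2) /
          (k * 2 ^ k : ℝ) ^ 2 := card_filter_lt_le_div (by positivity) fun _ _ => sq_nonneg _
    _ ≤ 4 ^ k / √k * (downSets (2 * k)).card / (1 * 2 ^ k : ℝ) ^ 2 := by
        gcongr
        exact (sum_sq_sum_freeSign_le (2 * k) k).trans
          (by gcongr; exact choose_le_four_pow_div_sqrt hk k)
    _ = 1 / √k * (downSets (2 * k)).card := by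
        rw [one_mul, ← pow_mul, mul_comm k 2, pow_mul]
        norm_num
        field_simp

lemma IsAdmissible.one_le_dim (q : IsAdmissible k r l) : 1 ≤ k := q.one_le.trans q.le

lemma IsAdmissible.half_pow_le_one_div_sqrt (q : IsAdmissible k r l) :
    (1 / 2 : ℝ) ^ l ≤ 1 / √k := by
  have hpos : (0 : ℝ) < k := by exact_mod_cast q.one_le_dim
  rw [one_div_pow]
  refine one_div_le_one_div_of_le (Real.sqrt_pos.2 hpos) ?_
  calc √k ≤ k + 1 := by nlinarith [Real.sq_sqrt hpos.le, sq_nonneg (√(k : ℝ) - 1)]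
    _ ≤ 2 * k + 1 := by linarith
    _ ≤ (2 * k + 1) ^ 8 := le_self_pow₀ (by linarith) (by norm_num)
    _ ≤ 7 * (2 * k + 1) ^ 8 := by linarith [pow_pos (by linarith : (0 : ℝ) < 2 * k + 1) 8]
    _ ≤ 2 ^ l := by exact_mod_cast q.pow_le_two_pow

lemma IsAdmissible.sum_card_nonFaces_le_div_sqrt (q : IsAdmissible k r l) :
    ∑ D ∈ downSets (2 * k), ((nonFaces (k - 1) D).card : ℝ) ≤
      2 ^ k * (5 / √k) * (downSets (2 * k)).card := by
  have hfour : (4 : ℝ) ^ k * (1 / 2) ^ k = 2 ^ k := by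
    rw [← mul_pow]
    norm_num
  refine q.sum_card_nonFaces_le.trans ?_
  gcongr
  calc ((2 * k).choose (k - 1) : ℝ) * (3 * (1 / 2) ^ k) + 4 ^ k * (2 * (1 / 2) ^ (k + l))
      ≤ 4 ^ k / √k * (3 * (1 / 2) ^ k) + 4 ^ k * (2 * ((1 / 2) ^ k * (1 / √k))) := by
        rw [pow_add]
        gcongr
        · exact choose_le_four_pow_div_sqrt q.one_le_dim (k - 1)
        · exact q.half_pow_le_one_div_sqrt
    _ = 4 ^ k * (1 / 2) ^ k * (5 / √k) := by ring
    _ = 2 ^ k * (5 / √k) := by rw [hfour]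

lemma IsAdmissible.card_two_pow_lt_defectCount_le (q : IsAdmissible k r l) :
    (((downSets (2 * k)).filter fun D => (2 ^ k : ℝ) < defectCount k D).card : ℝ) ≤
      10 / √k * (downSets (2 * k)).card := by
  have hsum : ∑ D ∈ downSets (2 * k), (defectCount k D : ℝ) ≤
      2 ^ k * (10 / √k * (downSets (2 * k)).card) := by
    simp only [defectCount, Nat.cast_add, Finset.sum_add_distrib]
    rw [sum_card_largeFaces q.one_le_dim]
    linear_combination 2 * q.sum_card_nonFaces_le_div_sqrt
  refine (card_filter_lt_le_div (by positivity) fun _ _ => Nat.cast_nonneg _).trans ?_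
  exact (div_le_iff₀' (by positivity)).2 hsum

lemma abs_alternatingSum_le_of_defectCount_le (hk : 1 ≤ k) {D : Finset (Finset (Fin (2 * k)))}
    (hD : D ∈ downSets (2 * k)) (hdefect : (defectCount k D : ℝ) ≤ 2 ^ k)
    (hfree : (∑ y ∈ level (2 * k) k, freeSign D y) ^ 2 ≤ (k * 2 ^ k : ℝ) ^ 2) :
    |alternatingSum D| ≤ 3 * k * 2 ^ k := by
  have hone : (1 : ℝ) ≤ k := by exact_mod_cast hk
  have hbound : 2 * |alternatingSum D| ≤ k * 2 ^ k + (k + 3) * 2 ^ k :=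
    (two_mul_abs_alternatingSum_le hk hD).trans
      (by gcongr; exact abs_le_of_sq_le_sq hfree (by positivity))
  nlinarith [pow_pos (two_pos (α := ℝ)) k]

theorem IsAdmissible.card_lt_abs_alternatingSum_le (q : IsAdmissible k r l) :
    (((downSets (2 * k)).filter fun D => 3 * k * 2 ^ k < |alternatingSum D|).card : ℝ) ≤
      11 / √k * (downSets (2 * k)).card := by
  have hcover : ((downSets (2 * k)).filter fun D => 3 * k * 2 ^ k < |alternatingSum D|) ⊆
      ((downSets (2 * k)).filter fun D => (2 ^ k : ℝ) < defectCount k D) ∪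
        (downSets (2 * k)).filter fun D =>
          (k * 2 ^ k : ℝ) ^ 2 < (∑ y ∈ level (2 * k) k, freeSign D y) ^ 2 := by
    intro D hD
    obtain ⟨hD, hlarge⟩ := Finset.mem_filter.1 hD
    rw [← Finset.filter_or, Finset.mem_filter]
    refine ⟨hD, ?_⟩
    contrapose! hlarge
    exact abs_alternatingSum_le_of_defectCount_le q.one_le_dim hD hlarge.1 hlarge.2
  have hcard := (Finset.card_le_card hcover).trans (Finset.card_union_le _ _)
  rw [← Nat.cast_le (α := ℝ), Nat.cast_add] at hcard
  linear_combination hcard + q.card_two_pow_lt_defectCount_le +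
    card_lt_sq_sum_freeSign_le q.one_le_dim

end Concentration

section Complexes

variable {n k r l : ℕ} {Δ : Finset (Finset (Fin n))}

lemma mem_allComplexes : Δ ∈ allComplexes n ↔ IsComplex Δ := by simp [allComplexes]

lemma card_allComplexes_pos (n : ℕ) : 0 < (allComplexes n).card :=
  Finset.card_pos.2 ⟨∅, mem_allComplexes.2 ⟨by simp, by simp⟩⟩

lemma empty_notMem_of_isComplex (h : IsComplex Δ) : ∅ ∉ Δ :=
  fun hempty => Finset.not_nonempty_empty (h.1 ∅ hempty)

lemma insert_empty_mem_downSets (h : IsComplex Δ) : insert ∅ Δ ∈ downSets n := by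
  refine mem_downSets.2 fun x y hyx hx => ?_
  rw [Finset.mem_coe, Finset.mem_insert] at hx ⊢
  rcases Finset.eq_empty_or_nonempty y with rfl | hy
  · exact .inl rfl
  · exact .inr (h.2 x (hx.resolve_left (hy.mono hyx).ne_empty) y hy hyx)

lemma isComplex_erase_empty (h : Δ ∈ downSets n) : IsComplex (Δ.erase ∅) := by
  refine ⟨fun x hx => Finset.nonempty_iff_ne_empty.2 (Finset.mem_erase.1 hx).1,
    fun x hx y hy hyx => Finset.mem_erase.2 ⟨hy.ne_empty, ?_⟩⟩
  exact mem_of_mem_downSets_of_subset h (Finset.mem_erase.1 hx).2 hyx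

lemma card_downSets_le (n : ℕ) : (downSets n).card ≤ 2 * (allComplexes n).card := by
  have hempty : ∀ D ∈ (downSets n).erase ∅, ∅ ∈ D := fun D hD => by
    obtain ⟨hne, hD⟩ := Finset.mem_erase.1 hD
    obtain ⟨x, hx⟩ := Finset.nonempty_iff_ne_empty.2 hne
    exact mem_of_mem_downSets_of_subset hD hx (Finset.empty_subset x)
  have hcard : ((downSets n).erase ∅).card ≤ (allComplexes n).card := by
    refine Finset.card_le_card_of_injOn (Finset.erase · ∅) (fun D hD => ?_) fun D hD D' hD' h => ?_
    · exact mem_allComplexes.2 (isComplex_erase_empty (Finset.mem_of_mem_erase hD))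
    · rw [← Finset.insert_erase (hempty D hD), ← Finset.insert_erase (hempty D' hD')]
      exact congrArg (insert ∅) h
  have hpos := card_allComplexes_pos n
  have herase := Finset.pred_card_le_card_erase (s := downSets n) (a := ∅)
  omega

lemma eulerChar_eq_one_sub_alternatingSum (h : IsComplex Δ) :
    (eulerChar Δ : ℝ) = 1 - alternatingSum (insert ∅ Δ) := by
  have hsum : (eulerChar Δ : ℝ) = -∑ x ∈ Δ, (-1 : ℝ) ^ x.card := by
    rw [eulerChar, Int.cast_sum, ← Finset.sum_neg_distrib]
    refine Finset.sum_congr rfl fun x hx => ?_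
    rw [← Nat.sub_add_cancel (h.1 x hx).card_pos, pow_succ]
    simp
  rw [hsum, alternatingSum, Finset.sum_insert (empty_notMem_of_isComplex h), Finset.card_empty,
    pow_zero]
  ring

lemma lt_abs_alternatingSum_of_lt_abs_eulerChar (hk : 1 ≤ k) (h : IsComplex Δ)
    (hχ : 2 * (2 * k) * 2 ^ k < |(eulerChar Δ : ℝ)|) :
    3 * k * 2 ^ k < |alternatingSum (insert ∅ Δ)| := by
  have hone : (1 : ℝ) ≤ k * 2 ^ k := by exact_mod_cast Nat.mul_pos hk (Nat.two_pow_pos k)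
  have htri : |(eulerChar Δ : ℝ)| ≤ 1 + |alternatingSum (insert ∅ Δ)| := by
    rw [eulerChar_eq_one_sub_alternatingSum h]
    simpa using abs_sub 1 (alternatingSum (insert ∅ Δ))
  linarith

lemma card_lt_abs_eulerChar_le (hk : 1 ≤ k) :
    ((allComplexes (2 * k)).filter fun Δ =>
      ¬ |(eulerChar Δ : ℝ)| ≤ 2 * (2 * k : ℝ) * 2 ^ k).card ≤
    ((downSets (2 * k)).filter fun D => 3 * k * 2 ^ k < |alternatingSum D|).card := by
  refine Finset.card_le_card_of_injOn (insert ∅) (fun Δ hΔ => ?_) fun Δ hΔ Δ' hΔ' h => ?_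
  · obtain ⟨hΔ, hχ⟩ := Finset.mem_filter.1 hΔ
    have hcomplex := mem_allComplexes.1 hΔ
    exact Finset.mem_filter.2 ⟨insert_empty_mem_downSets hcomplex,
      lt_abs_alternatingSum_of_lt_abs_eulerChar hk hcomplex (not_le.1 hχ)⟩
  · have hnotMem : ∀ Γ ∈ (allComplexes (2 * k)).filter fun Δ =>
        ¬ |(eulerChar Δ : ℝ)| ≤ 2 * (2 * k : ℝ) * 2 ^ k, ∅ ∉ Γ := fun Γ hΓ =>
      empty_notMem_of_isComplex (mem_allComplexes.1 (Finset.mem_filter.1 hΓ).1)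
    rw [← Finset.erase_insert (hnotMem Δ hΔ), ← Finset.erase_insert (hnotMem Δ' hΔ'), h]

lemma one_sub_uniformProb (P : Finset (Finset (Fin n)) → Prop) :
    1 - uniformProb n P =
      ((allComplexes n).filter fun Δ => ¬ P Δ).card / (allComplexes n).card := by
  have hpos : ((allComplexes n).card : ℝ) ≠ 0 := by exact_mod_cast (card_allComplexes_pos n).ne'
  rw [uniformProb, one_sub_div hpos, ← Finset.card_filter_add_card_filter_not P, Nat.cast_add,
    add_sub_cancel_left]

lemma uniformProb_le_one (n : ℕ) (P : Finset (Finset (Fin n)) → Prop) : uniformProb n P ≤ 1 := by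
  refine sub_nonneg.1 ?_
  rw [one_sub_uniformProb]
  positivity

theorem IsAdmissible.one_sub_le_uniformProb (q : IsAdmissible k r l) :
    1 - 22 / √k ≤ uniformProb (2 * k) fun Δ =>
      |(eulerChar Δ : ℝ)| ≤ 2 * (2 * k : ℝ) * (2 : ℝ) ^ k := by
  have hpos : (0 : ℝ) < (allComplexes (2 * k)).card := by
    exact_mod_cast card_allComplexes_pos (2 * k)
  rw [sub_le_comm, one_sub_uniformProb, div_le_iff₀ hpos]
  calc _ ≤ (((downSets (2 * k)).filter fun D => 3 * k * 2 ^ k < |alternatingSum D|).card : ℝ) := by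
        exact_mod_cast card_lt_abs_eulerChar_le q.one_le_dim
    _ ≤ 11 / √k * (downSets (2 * k)).card := q.card_lt_abs_alternatingSum_le
    _ ≤ 11 / √k * (2 * (allComplexes (2 * k)).card) := by
        gcongr
        exact_mod_cast card_downSets_le (2 * k)
    _ = 22 / √k * (allComplexes (2 * k)).card := by ring

end Complexes

/-- There is a constant `c > 0` such that for `Δ ~ U(n)`, `n` even, with high
probability `|χ(Δ)| ≤ c n 2^{n/2}`. -/
theorem stmt9 :
    ∃ c : ℝ, 0 < c ∧
      Filter.Tendsto (fun m : ℕ =>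
        uniformProb (2 * m) (fun Δ =>
          |(eulerChar Δ : ℝ)| ≤ c * (2 * m : ℝ) * (2 : ℝ) ^ m))
        Filter.atTop (nhds 1) := by
  refine ⟨2, two_pos, ?_⟩
  have hlower : Filter.Tendsto (fun m : ℕ => 1 - 22 / √(m : ℝ)) Filter.atTop (nhds 1) := by
    simpa using ((Real.tendsto_sqrt_atTop.comp
      tendsto_natCast_atTop_atTop).const_div_atTop 22).const_sub 1
  refine tendsto_of_tendsto_of_tendsto_of_le_of_le' hlower tendsto_const_nhds ?_
    (Filter.Eventually.of_forall fun m => uniformProb_le_one (2 * m) _)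
  filter_upwards [Filter.eventually_ge_atTop (2 ^ 64)] with m hm
  exact (isAdmissible_of_two_pow_le hm).one_sub_le_uniformProb
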